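/- arXiv:2409.14375 — 2 statements merged into one kernel-verified Lean document; each statement's English description precedes it below -/
import Mathlib

section
/- Let n ≥ 2 and 1 ≤ j ≤ n−1, let X = SL_n(ℤ)\SL_n(ℝ) and let μ be the right-invariant Borel probability measure on X. For every continuous compactly supported function f : X → ℝ, the Hecke average (1/#L_{N,j}(n)) · Σ_{L ∈ L_{N,j}(n)} f(x_L) converges to ∫_X f dμ as N → ∞, where for L ∈ L_{N,j}(n), x_L ∈ X denotes the coset SL_n(ℤ)·(N^{−j/n}·B) for any matrix B whose rows form a ℤ-basis of L with det B = N^{j} (this coset is independent of the choice of B). -/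
open Matrix MeasureTheory

noncomputable section

/-- The subgroup `Γ = SL_n(ℤ)` inside `G = SL_n(ℝ)`, realized as the range of the map
induced by the ring homomorphism `ℤ → ℝ`. -/
def Gamma (n : ℕ) : Subgroup (Matrix.SpecialLinearGroup (Fin n) ℝ) :=
  (Matrix.SpecialLinearGroup.map (Int.castRingHom ℝ)).range

/-- The homogeneous space `X = Γ\G = SL_n(ℤ)\SL_n(ℝ)` (right cosets `Γg`). -/
def XSpace (n : ℕ) : Type :=
  Quotient (QuotientGroup.rightRel (Gamma n))

/-- The topology on `SL_n(ℝ)` induced from the space of matrices. -/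
instance (n : ℕ) : TopologicalSpace (Matrix.SpecialLinearGroup (Fin n) ℝ) :=
  TopologicalSpace.induced (fun g => (g : Matrix (Fin n) (Fin n) ℝ)) inferInstance

/-- The quotient topology on `X = Γ\G`. -/
instance (n : ℕ) : TopologicalSpace (XSpace n) :=
  instTopologicalSpaceQuotient

/-- The Borel σ-algebra on `X`. -/
instance (n : ℕ) : MeasurableSpace (XSpace n) := borel _

instance (n : ℕ) : BorelSpace (XSpace n) := ⟨rfl⟩

/-- Right translation `Γx ↦ Γxg` of `G` on `X = Γ\G`. -/
def rightTranslate (n : ℕ) (g : Matrix.SpecialLinearGroup (Fin n) ℝ) :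
    XSpace n → XSpace n :=
  Quotient.map' (fun x => x * g) (fun x y hxy => by
    simp only [QuotientGroup.rightRel_apply] at hxy ⊢
    simpa [mul_assoc] using hxy)

/-- `Ω̃_{n,r}` : the set of cosets `Γg ∈ X` such that the lattice `ℤⁿg` contains exactly
`r` points `vg` (for `v ∈ ℤⁿ`) of sup-norm at most `D`. -/
def OmegaTilde (n : ℕ) (D : ℝ) (r : ℕ) : Set (XSpace n) :=
  {x | ∃ g : Matrix.SpecialLinearGroup (Fin n) ℝ,
    (Quotient.mk'' g : XSpace n) = x ∧
    Set.ncard {v : Fin n → ℤ |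
      ‖Matrix.vecMul (fun i => (v i : ℝ)) (g : Matrix (Fin n) (Fin n) ℝ)‖ ≤ D} = r}


/-- `L_{N,j}(n)`: the set of subgroups `L ≤ ℤⁿ` with `ℤⁿ/L ≅ (ℤ/Nℤ)ʲ`. -/
def latticeSet (N n j : ℕ) : Set (AddSubgroup (Fin n → ℤ)) :=
  {L | Nonempty (((Fin n → ℤ) ⧸ L) ≃+ (Fin j → ZMod N))}

/-!
Write `T_N` for the operator that averages `f` over the points `Γ N^{-j/n} B g`, so that the claim
is `T_N f → ∫ f` at the base point.

By Mautner's phenomenon a vector of `L²(X)` fixed by a transvection is constant, so Birkhoff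
averages along a transvection converge to the mean. Conjugation by `a_q = diag(q, …, q, 1, …, 1)`,
rescaled, contracts a transvection to `1`; hence translation by `a_q` is mixing. Thickening the
points `Γ a_q (1 + T)`, with `T` an integral lower left block modulo `q`, bounds their averages by
integrals over a fixed box translated by `a_q`, and so these points equidistribute.

For a prime power `q` every lattice of `L_{q,j}(n)` is, after a signed permutation of coordinates,
in the big cell that these points parametrise. This bounds `T_q` at the base point by finitely many
equidistributing averages; since `T_q` there is invariant under a transvection in `Γ`, `f` may be
replaced by its Birkhoff averages, which makes the bound sharp in the limit. So `T_q f → ∫ f`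
pointwise and in `L¹` as `q → ∞` through prime powers.

A large `N` is `M q` with `M`, `q` coprime and `q` a large prime power. Then `T_N = T_M T_q` and
`T_M` is a contraction of `L¹`, so `T_N f → ∫ f` in `L¹`. As the `T_N f` are equicontinuous, they
converge pointwise.
-/

open Filter Topology MulOpposite
open scoped MatrixGroups RightActions ENNReal Pointwise BigOperators

open scoped MatrixGroups RightActions ENNReal

variable {n : ℕ}

section SpecialLinear

lemma isClosedEmbedding_coe_SL (n : ℕ) :
    IsClosedEmbedding (fun g : SL(n, ℝ) => (g : Matrix (Fin n) (Fin n) ℝ)) :=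
  Matrix.SpecialLinearGroup.isClosedEmbedding_val

instance : IsTopologicalGroup SL(n, ℝ) := Matrix.SpecialLinearGroup.topologicalGroup

instance : T2Space SL(n, ℝ) := (isClosedEmbedding_coe_SL n).isEmbedding.t2Space

instance : SecondCountableTopology SL(n, ℝ) :=
  haveI : SecondCountableTopology (Matrix (Fin n) (Fin n) ℝ) :=
    inferInstanceAs (SecondCountableTopology (Fin n → Fin n → ℝ))
  (isClosedEmbedding_coe_SL n).isEmbedding.secondCountableTopology

instance : LocallyCompactSpace SL(n, ℝ) :=
  haveI : LocallyCompactSpace (Matrix (Fin n) (Fin n) ℝ) :=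
    inferInstanceAs (LocallyCompactSpace (Fin n → Fin n → ℝ))
  (isClosedEmbedding_coe_SL n).locallyCompactSpace

instance : MeasurableSpace SL(n, ℝ) := borel _

instance : BorelSpace SL(n, ℝ) := ⟨rfl⟩

lemma isClosed_Gamma (n : ℕ) : IsClosed (Gamma n : Set SL(n, ℝ)) :=
  haveI : DiscreteTopology (Gamma n) :=
    Matrix.SpecialLinearGroup.discreteSpecialLinearGroupIntRangeSL
  Subgroup.isClosed_of_discrete

end SpecialLinear

namespace XSpace

/-- The projection `G → Γ\G`. -/
def mk (g : SL(n, ℝ)) : XSpace n := Quotient.mk'' g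

lemma mk_surjective : Function.Surjective (mk (n := n)) := Quotient.exists_rep

lemma mk_eq_mk_iff {g h : SL(n, ℝ)} : mk g = mk h ↔ h * g⁻¹ ∈ Gamma n :=
  (Quotient.eq'' (s₁ := QuotientGroup.rightRel (Gamma n))).trans QuotientGroup.rightRel_apply

lemma mk_mul_of_mem_Gamma {γ : SL(n, ℝ)} (hγ : γ ∈ Gamma n) (g : SL(n, ℝ)) :
    mk (γ * g) = mk g := by
  rw [mk_eq_mk_iff]
  simpa using inv_mem hγ

lemma isOpenQuotientMap_mk (n : ℕ) : IsOpenQuotientMap (mk (n := n)) :=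
  MulAction.isOpenQuotientMap_quotientMk (Γ := Gamma n) (T := SL(n, ℝ))

lemma continuous_mk : Continuous (mk (n := n)) := (isOpenQuotientMap_mk n).continuous

instance : SecondCountableTopology (XSpace n) :=
  (isOpenQuotientMap_mk n).isQuotientMap.secondCountableTopology (isOpenQuotientMap_mk n).isOpenMap

instance : LocallyCompactSpace (XSpace n) :=
  (isOpenQuotientMap_mk n).locallyCompactSpace

instance : T2Space (XSpace n) := by
  have := isClosed_Gamma n
  exact t2Space_quotient_mulAction_of_properSMul (G := Gamma n) (X := SL(n, ℝ))

instance : MulAction SL(n, ℝ)ᵐᵒᵖ (XSpace n) where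
  smul g := rightTranslate n g.unop
  one_smul := mk_surjective.forall.2 fun g => congrArg mk (mul_one g)
  mul_smul a b := mk_surjective.forall.2 fun g => congrArg mk (mul_assoc g b.unop a.unop).symm

@[simp] lemma mk_op_smul (g h : SL(n, ℝ)) : mk h <• g = mk (h * g) := rfl

instance : ContinuousSMul SL(n, ℝ)ᵐᵒᵖ (XSpace n) where
  continuous_smul := by
    have hquot := (IsOpenQuotientMap.id (X := SL(n, ℝ)ᵐᵒᵖ)).prodMap (isOpenQuotientMap_mk n)
    rw [hquot.isQuotientMap.continuous_iff]
    exact continuous_mk.comp (continuous_snd.mul (continuous_unop.comp continuous_fst))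

lemma isOpenQuotientMap_orbit (x : XSpace n) : IsOpenQuotientMap (fun g : SL(n, ℝ) => x <• g) := by
  obtain ⟨h, rfl⟩ := mk_surjective x
  exact (isOpenQuotientMap_mk n).comp (Homeomorph.mulLeft h).isOpenQuotientMap

instance : MulAction.IsPretransitive SL(n, ℝ)ᵐᵒᵖ (XSpace n) where
  exists_smul_eq := mk_surjective.forall₂.2 fun g h =>
    ⟨op (g⁻¹ * h), by rw [mk_op_smul, mul_inv_cancel_left]⟩

end XSpace

section RightAction

variable {G X : Type*} [Group G] [TopologicalSpace G] [TopologicalSpace X] [MulAction Gᵐᵒᵖ X]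

variable (G) in
/-- Bounded continuous functions on a space with a right `G`-action that are uniformly close to
their translates by elements of `G` near `1`. -/
structure RightUniform (f : X → ℝ) : Prop where
  continuous : Continuous f
  exists_bound : ∃ C, ∀ x, |f x| ≤ C
  tendstoUniformly : TendstoUniformly (fun (g : G) x => f (x <• g)) f (𝓝 1)

namespace RightUniform

variable {f h : X → ℝ}

lemma eventually_abs_sub_lt (hf : RightUniform G f) {ε : ℝ} (hε : 0 < ε) :
    ∀ᶠ g in 𝓝 (1 : G), ∀ x, |f (x <• g) - f x| < ε := by
  simpa only [Real.dist_eq, abs_sub_comm] using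
    Metric.tendstoUniformly_iff.1 hf.tendstoUniformly ε hε

lemma of_hasCompactSupport [IsTopologicalGroup G] [ContinuousSMul Gᵐᵒᵖ X] (hf : Continuous f)
    (hfc : HasCompactSupport f) : RightUniform G f := by
  refine ⟨hf, hfc.exists_bound_of_continuous hf, Metric.tendstoUniformly_iff.2 fun ε hε => ?_⟩
  have hsupp : ∀ᶠ g in 𝓝 (1 : G), ∀ x ∈ tsupport f, dist (f x) (f (x <• g)) < ε := by
    refine IsCompact.eventually_forall_of_forall_eventually hfc fun x _ => ?_
    have hcont : Continuous fun p : G × X => dist (f p.2) (f (p.2 <• p.1)) := by fun_prop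
    exact hcont.continuousAt.eventually (gt_mem_nhds (by simpa using hε))
  have hsupp_inv : ∀ᶠ g in 𝓝 (1 : G), ∀ x ∈ tsupport f, dist (f x) (f (x <• g⁻¹)) < ε :=
    (continuous_inv.tendsto' 1 1 inv_one).eventually hsupp
  filter_upwards [hsupp, hsupp_inv] with g hg hg' x
  by_cases hx : x ∈ tsupport f
  · exact hg x hx
  by_cases hxg : x <• g ∈ tsupport f
  · simpa [dist_comm] using hg' _ hxg
  · simpa [image_eq_zero_of_notMem_tsupport hx, image_eq_zero_of_notMem_tsupport hxg] using hε

lemma const (c : ℝ) : RightUniform G (fun _ : X => c) :=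
  ⟨continuous_const, ⟨|c|, fun _ => le_rfl⟩,
    fun _ hu => .of_forall fun _ _ => refl_mem_uniformity hu⟩

lemma add (hf : RightUniform G f) (hh : RightUniform G h) :
    RightUniform G (fun x => f x + h x) := by
  obtain ⟨C, hC⟩ := hf.exists_bound
  obtain ⟨D, hD⟩ := hh.exists_bound
  exact ⟨hf.continuous.add hh.continuous,
    ⟨C + D, fun x => (abs_add_le _ _).trans (add_le_add (hC x) (hD x))⟩,
    hf.tendstoUniformly.add hh.tendstoUniformly⟩

lemma abs (hf : RightUniform G f) : RightUniform G (fun x => |f x|) := by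
  obtain ⟨C, hC⟩ := hf.exists_bound
  exact ⟨hf.continuous.abs, ⟨C, fun x => by simpa using hC x⟩,
    uniformContinuous_norm.comp_tendstoUniformly hf.tendstoUniformly⟩

lemma const_mul (c : ℝ) (hf : RightUniform G f) : RightUniform G (fun x => c * f x) := by
  obtain ⟨C, hC⟩ := hf.exists_bound
  refine ⟨continuous_const.mul hf.continuous, ⟨|c| * C, fun x => ?_⟩,
    (uniformContinuous_const_smul c).comp_tendstoUniformly hf.tendstoUniformly⟩
  rw [abs_mul]
  exact mul_le_mul_of_nonneg_left (hC x) (abs_nonneg _)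

lemma sub (hf : RightUniform G f) (hh : RightUniform G h) :
    RightUniform G (fun x => f x - h x) := by
  simpa [sub_eq_add_neg] using hf.add (hh.const_mul (-1))

lemma sum {ι : Type*} (s : Finset ι) {F : ι → X → ℝ} (hF : ∀ i ∈ s, RightUniform G (F i)) :
    RightUniform G (fun x => ∑ i ∈ s, F i x) := by
  induction s using Finset.cons_induction with
  | empty => simpa using const 0
  | cons a s ha ih =>
    simp only [Finset.sum_cons]
    exact (hF a (by simp)).add (ih fun i hi => hF i (by simp [hi]))

lemma translate [IsTopologicalGroup G] [ContinuousConstSMul Gᵐᵒᵖ X] (hf : RightUniform G f)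
    (a : G) : RightUniform G (fun x => f (x <• a)) := by
  obtain ⟨C, hC⟩ := hf.exists_bound
  refine ⟨hf.continuous.comp (continuous_const_smul _), ⟨C, fun x => hC _⟩,
    Metric.tendstoUniformly_iff.2 fun ε hε => ?_⟩
  have hconj : Tendsto (fun g : G => a⁻¹ * g * a) (𝓝 1) (𝓝 1) := by
    have hcont : Continuous (fun g : G => a⁻¹ * g * a) := by fun_prop
    simpa using hcont.tendsto 1
  filter_upwards [hconj.eventually (Metric.tendstoUniformly_iff.1 hf.tendstoUniformly ε hε)]
    with g hg x
  simpa only [op_smul_op_smul, mul_assoc, mul_inv_cancel_left] using hg (x <• a)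

lemma birkhoffAverage [IsTopologicalGroup G] [ContinuousConstSMul Gᵐᵒᵖ X]
    (hf : RightUniform G f) (u : G) (H : ℕ) :
    RightUniform G (birkhoffAverage ℝ (· <• u) f H) := by
  unfold _root_.birkhoffAverage _root_.birkhoffSum
  simp only [smul_iterate, ← op_pow, smul_eq_mul]
  exact (sum _ fun b _ => hf.translate (u ^ b)).const_mul _

variable [MeasurableSpace X] [OpensMeasurableSpace X]

lemma memLp [SecondCountableTopologyEither X ℝ] (hf : RightUniform G f) (p : ℝ≥0∞)
    (μ : Measure X) [IsFiniteMeasure μ] : MemLp f p μ := by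
  obtain ⟨C, hC⟩ := hf.exists_bound
  exact MemLp.of_bound hf.continuous.aestronglyMeasurable C (.of_forall hC)

lemma integrable (hf : RightUniform G f) (μ : Measure X) [IsFiniteMeasure μ] :
    Integrable f μ := memLp_one_iff_integrable.1 (hf.memLp 1 μ)

end RightUniform

section Measure

variable [ContinuousSMul Gᵐᵒᵖ X] [SecondCountableTopology G] [MeasurableSpace G] [BorelSpace G]
  [MeasurableSpace X] [BorelSpace X]

lemma measurable_op_smul : Measurable (fun p : X × G => p.1 <• p.2) :=
  Continuous.measurable (by fun_prop)

variable [IsTopologicalGroup G] [LocallyCompactSpace G] [SecondCountableTopology X]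

lemma ae_const_of_forall_ae_eq_op_smul [MulAction.IsPretransitive Gᵐᵒᵖ X] {μ : Measure X}
    [IsProbabilityMeasure μ] [SMulInvariantMeasure Gᵐᵒᵖ X μ] {v : X → ℝ} (hv : Measurable v)
    (hvi : ∀ g : G, (fun x => v (x <• g)) =ᵐ[μ] v) : ∃ c, v =ᵐ[μ] fun _ => c := by
  let ν : Measure G := Measure.haar
  have hact : Measurable (fun p : X × G => v (p.1 <• p.2)) := hv.comp measurable_op_smul
  have hae : ∀ᵐ x ∂μ, ∀ᵐ g ∂ν, v (x <• g) = v x := by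
    have hset : MeasurableSet {p : X × G | v (p.1 <• p.2) = v p.1} :=
      measurableSet_eq_fun hact (hv.comp measurable_fst)
    exact (Measure.ae_ae_comm hset).2 (.of_forall hvi)
  obtain ⟨x₀, hx₀⟩ := hae.exists
  have horbit : ∀ x, ∀ᵐ g ∂ν, v (x <• g) = v x₀ := by
    intro x
    obtain ⟨w, rfl⟩ := MulAction.exists_smul_eq Gᵐᵒᵖ x₀ x
    simpa [mul_smul] using
      (measurePreserving_mul_left ν w.unop).quasiMeasurePreserving.ae hx₀
  have hae_const : ∀ᵐ g ∂ν, ∀ᵐ x ∂μ, v (x <• g) = v x₀ := by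
    have hset : MeasurableSet {p : X × G | v (p.1 <• p.2) = v x₀} :=
      measurableSet_eq_fun hact measurable_const
    exact (Measure.ae_ae_comm hset).1 (.of_forall horbit)
  obtain ⟨g, hg⟩ := hae_const.exists
  exact ⟨v x₀, by filter_upwards [hvi g, hg] with x hx hx' using hx.symm.trans hx'⟩

lemma ae_orbit_of_ae (ν : Measure G) [ν.IsHaarMeasure] [MulAction.IsPretransitive Gᵐᵒᵖ X]
    {μ : Measure X} [IsProbabilityMeasure μ] [SMulInvariantMeasure Gᵐᵒᵖ X μ] {p : X → Prop}
    (hp : ∀ᵐ x ∂μ, p x) (x : X) : ∀ᵐ g ∂ν, p (x <• g) := by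
  obtain ⟨s, hsp, hs, hs0⟩ := exists_measurable_superset_of_null hp
  have htranslate (g : G) : ∀ᵐ y ∂μ, y <• g ∈ sᶜ :=
    (measurePreserving_smul (op g) μ).quasiMeasurePreserving.ae (compl_mem_ae_iff.2 hs0)
  obtain ⟨x₀, hx₀⟩ := ((Measure.ae_ae_comm (μ := μ) (ν := ν)
    (p := fun y g => y <• g ∈ sᶜ) (measurable_op_smul hs.compl)).2 (.of_forall htranslate)).exists
  obtain ⟨w, rfl⟩ := MulAction.exists_smul_eq Gᵐᵒᵖ x₀ x
  filter_upwards [(measurePreserving_mul_left ν w.unop).quasiMeasurePreserving.ae hx₀] with g hg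
  by_contra hpg
  exact hg (hsp (by simpa [mul_smul] using hpg))

lemma exists_setLIntegral_orbit_le (ν : Measure G) [ν.IsHaarMeasure] {μ : Measure X}
    [IsProbabilityMeasure μ] [SMulInvariantMeasure Gᵐᵒᵖ X μ] [μ.IsOpenPosMeasure] {x₀ : X}
    (hx₀ : IsOpenMap (fun g : G => x₀ <• g)) {K : Set G}
    (hK : IsCompact (closure K)) (hKm : MeasurableSet K) :
    ∃ C : ℝ≥0∞, C ≠ ⊤ ∧ ∀ h : X → ℝ≥0∞, Measurable h →
      ∫⁻ g in K, h (x₀ <• g) ∂ν ≤ C * ∫⁻ x, h x ∂μ := by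
  obtain ⟨W, hW, hW1⟩ := exists_compact_mem_nhds (1 : G)
  set V := closure (W⁻¹ * closure K)
  have hVc : IsCompact V := (hW.inv.mul hK).closure
  have hVm : MeasurableSet V := isClosed_closure.measurableSet
  set O := (fun g : G => x₀ <• g) '' interior W
  have hO : IsOpen O := hx₀ _ isOpen_interior
  have hOpos : μ O ≠ 0 := hO.measure_ne_zero μ ⟨_, 1, mem_interior_iff_mem_nhds.2 hW1, rfl⟩
  refine ⟨ν V / μ O, ENNReal.div_ne_top hVc.measure_lt_top.ne hOpos, fun h hh => ?_⟩
  have hswap : ∫⁻ x, ∫⁻ g in V, h (x <• g) ∂ν ∂μ = ν V * ∫⁻ x, h x ∂μ := by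
    have hact : Measurable (fun p : X × G => h (p.1 <• p.2)) := hh.comp measurable_op_smul
    rw [lintegral_lintegral_swap hact.aemeasurable]
    have hinv (g : G) : ∫⁻ x, h (x <• g) ∂μ = ∫⁻ x, h x ∂μ :=
      (measurePreserving_smul (op g) μ).lintegral_comp hh
    simp [hinv, mul_comm]
  have hpoint : ∀ x ∈ O, ∫⁻ g in K, h (x₀ <• g) ∂ν ≤ ∫⁻ g in V, h (x <• g) ∂ν := by
    rintro _ ⟨w, hw, rfl⟩
    rw [← lintegral_indicator hKm, ← lintegral_indicator hVm, ← lintegral_mul_left_eq_self _ w]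
    refine lintegral_mono fun g => ?_
    by_cases hg : w * g ∈ K
    · have hgV : g ∈ V :=
        subset_closure ⟨w⁻¹, by simpa using interior_subset hw, w * g, subset_closure hg, by simp⟩
      simp [hg, hgV, mul_smul]
    · simp [hg]
  have hle : (∫⁻ g in K, h (x₀ <• g) ∂ν) * μ O ≤ ν V * ∫⁻ x, h x ∂μ := by
    calc (∫⁻ g in K, h (x₀ <• g) ∂ν) * μ O = ∫⁻ _ in O, (∫⁻ g in K, h (x₀ <• g) ∂ν) ∂μ := by simp
      _ ≤ ∫⁻ x in O, ∫⁻ g in V, h (x <• g) ∂ν ∂μ := setLIntegral_mono' hO.measurableSet hpoint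
      _ ≤ ∫⁻ x, ∫⁻ g in V, h (x <• g) ∂ν ∂μ := setLIntegral_le_lintegral _ _
      _ = ν V * ∫⁻ x, h x ∂μ := hswap
  rwa [ENNReal.div_eq_inv_mul, mul_assoc, ← ENNReal.div_eq_inv_mul,
    ENNReal.le_div_iff_mul_le (Or.inl hOpos) (Or.inl (measure_ne_top _ _))]

lemma exists_memLp_setIntegral_orbit_eq (ν : Measure G) [ν.IsHaarMeasure] {μ : Measure X}
    [IsProbabilityMeasure μ] [SMulInvariantMeasure Gᵐᵒᵖ X μ] [μ.IsOpenPosMeasure] {x₀ : X}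
    (hx₀ : IsOpenMap (fun g : G => x₀ <• g)) {K : Set G}
    (hK : IsCompact (closure K)) (hKm : MeasurableSet K) :
    ∃ ρ : X → ℝ, MemLp ρ 2 μ ∧ ∀ h : X → ℝ, Measurable h →
      ∫ g in K, h (x₀ <• g) ∂ν = ∫ x, ρ x * h x ∂μ := by
  obtain ⟨C, hC, hCle⟩ := exists_setLIntegral_orbit_le ν (μ := μ) hx₀ hK hKm
  have : IsFiniteMeasure (ν.restrict K) := isFiniteMeasure_restrict.2
    ((measure_mono subset_closure).trans_lt hK.measure_lt_top).ne
  have horbit : Measurable (fun g : G => x₀ <• g) := Continuous.measurable (by fun_prop)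
  let η := (ν.restrict K).map (fun g => x₀ <• g)
  have hη_le : ∀ s, MeasurableSet s → η s ≤ C * μ s := by
    intro s hs
    rw [← lintegral_indicator_one hs, ← lintegral_indicator_one hs,
      lintegral_map (measurable_one.indicator hs) horbit]
    exact hCle _ (measurable_one.indicator hs)
  have hη_ac : η ≪ μ := Measure.AbsolutelyContinuous.mk fun s hs h0 => by
    simpa [h0] using hη_le s hs
  have hρ_le : ∀ᵐ x ∂μ, η.rnDeriv μ x ≤ C := by
    refine ae_le_of_forall_setLIntegral_le_of_sigmaFinite (Measure.measurable_rnDeriv _ _) ?_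
    intro s hs _
    rw [setLIntegral_const, ← withDensity_apply _ hs, Measure.withDensity_rnDeriv_eq _ _ hη_ac]
    exact hη_le s hs
  refine ⟨fun x => (η.rnDeriv μ x).toReal, ?_, fun h hh => ?_⟩
  · refine MemLp.of_bound (Measure.measurable_rnDeriv _ _).ennreal_toReal.aestronglyMeasurable
      C.toReal ?_
    filter_upwards [hρ_le] with x hx
    rw [Real.norm_of_nonneg ENNReal.toReal_nonneg]
    exact ENNReal.toReal_mono hC hx
  · rw [← integral_map horbit.aemeasurable hh.aestronglyMeasurable]
    exact (integral_rnDeriv_smul hη_ac).symm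

end Measure

end RightAction

section XSpaceMeasure

variable {n : ℕ} {μ : Measure (XSpace n)}

lemma smulInvariantMeasure_of_map_rightTranslate
    (hinv : ∀ g, Measure.map (rightTranslate n g) μ = μ) :
    SMulInvariantMeasure SL(n, ℝ)ᵐᵒᵖ (XSpace n) μ :=
  ((smulInvariantMeasure_tfae SL(n, ℝ)ᵐᵒᵖ μ).out 0 5 rfl rfl).2 fun g => hinv (unop g)

instance [IsProbabilityMeasure μ] [SMulInvariantMeasure SL(n, ℝ)ᵐᵒᵖ (XSpace n) μ] :
    μ.IsOpenPosMeasure where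
  open_pos _ hU hne := (measure_isOpen_pos_of_smulInvariant_of_ne_zero SL(n, ℝ)ᵐᵒᵖ
    (IsProbabilityMeasure.ne_zero μ) hU hne).ne'

end XSpaceMeasure

section Mautner

variable {G : Type*} [Group G] [TopologicalSpace G]

/-- A subgroup `S` is Mautner closed if it contains every limit of products `x g y` with
`x, y ∈ S` and `g → 1`. Stabilizers of vectors in unitary representations have this property. -/
def IsMautnerClosed (S : Subgroup G) : Prop :=
  ∀ (x y g : ℕ → G) (h : G), (∀ m, x m ∈ S) → (∀ m, y m ∈ S) →
    Tendsto g atTop (𝓝 1) → Tendsto (fun m => x m * g m * y m) atTop (𝓝 h) → h ∈ S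

/-- An element is Mautner generating if no proper Mautner closed subgroup contains it. -/
def IsMautnerGenerating (u : G) : Prop :=
  ∀ S : Subgroup G, IsMautnerClosed S → u ∈ S → S = ⊤

lemma IsMautnerClosed.mem_of_tendsto_conj {S : Subgroup G} (hS : IsMautnerClosed S) {d h : G}
    (hd : d ∈ S) (hconj : Tendsto (fun m : ℕ => (d ^ m)⁻¹ * h * d ^ m) atTop (𝓝 1)) : h ∈ S :=
  hS (fun m => d ^ m) (fun m => (d ^ m)⁻¹) _ h (fun m => pow_mem hd m)
    (fun m => inv_mem (pow_mem hd m)) hconj (tendsto_const_nhds.congr fun m => by group)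

end Mautner

section Transvection

variable {n : ℕ} {i k r c : Fin n}

lemma continuous_transvection (hik : i ≠ k) :
    Continuous fun t : ℝ => SpecialLinearGroup.transvection hik t := by
  rw [(isClosedEmbedding_coe_SL n).isEmbedding.continuous_iff]
  change Continuous fun t : ℝ => 1 + Matrix.single i k t
  refine continuous_const.add (continuous_matrix fun a b => ?_)
  simp only [Matrix.single_apply]
  split_ifs <;> fun_prop

lemma tendsto_transvection_one (hik : i ≠ k) {ι : Type*} {l : Filter ι} {t : ι → ℝ}
    (ht : Tendsto t l (𝓝 0)) :
    Tendsto (fun m => SpecialLinearGroup.transvection hik (t m)) l (𝓝 1) := by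
  simpa [Function.comp_def] using ((continuous_transvection hik).tendsto 0).comp ht

lemma transvection_pow (hik : i ≠ k) (t : ℝ) (m : ℕ) :
    SpecialLinearGroup.transvection hik t ^ m = SpecialLinearGroup.transvection hik (m * t) := by
  induction m with
  | zero => simp
  | succ m ih => rw [pow_succ, ih, ← SpecialLinearGroup.transvection_add]; congr 1; push_cast; ring

lemma transvection_intCast_mem {S : Subgroup SL(n, ℝ)} (hik : i ≠ k)
    (hS : SpecialLinearGroup.transvection hik 1 ∈ S) (m : ℤ) :
    SpecialLinearGroup.transvection hik (m : ℝ) ∈ S := by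
  obtain ⟨b, rfl | rfl⟩ := m.eq_nat_or_neg
  · simpa [transvection_pow] using pow_mem hS b
  · simpa [transvection_pow, SpecialLinearGroup.transvection_inv] using inv_mem (pow_mem hS b)

lemma conj_diag2n_two_transvection (hik : i ≠ k) (hrc : r ≠ c) (t : ℝ) :
    SpecialLinearGroup.diag2n hik 2 two_ne_zero * SpecialLinearGroup.transvection hrc t *
        (SpecialLinearGroup.diag2n hik 2 two_ne_zero)⁻¹ =
      SpecialLinearGroup.transvection hrc ((if r = i then 2 else if r = k then 2⁻¹ else 1) /
        (if c = i then 2 else if c = k then 2⁻¹ else 1) * t) := by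
  rw [mul_inv_eq_iff_eq_mul]
  ext a b
  simp only [Matrix.SpecialLinearGroup.coe_mul, SpecialLinearGroup.transvection_coe,
    SpecialLinearGroup.diag2n_coe, Matrix.diagonal_mul, Matrix.mul_diagonal,
    Matrix.add_apply, Matrix.one_apply, Matrix.single_apply]
  grind

-- The identity `[1 x; 0 1] [1 0; y 1] [1 z; 0 1] = [a 0; 0 a⁻¹] [1 0; w 1]`.
lemma transvection_mul_transvection_mul_transvection (hik : i ≠ k) {a : ℝ} (ha : a ≠ 0)
    {x y z w : ℝ} (hxy : 1 + x * y = a) (hz : a * z + x = 0) (hw : a * y = w) :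
    SpecialLinearGroup.transvection hik x * SpecialLinearGroup.transvection hik.symm y *
        SpecialLinearGroup.transvection hik z =
      SpecialLinearGroup.diag2n hik a ha * SpecialLinearGroup.transvection hik.symm w := by
  have hyz : y * z + 1 = a⁻¹ :=
    eq_inv_of_mul_eq_one_right (by linear_combination y * hz - hxy)
  have hxyz : x * y * z = -x - z := by linear_combination hz + z * hxy
  have haw : a⁻¹ * w = y := by rw [← hw]; field_simp
  have hxz : Matrix.single i k x * Matrix.single i k z = 0 :=
    Matrix.single_mul_single_of_ne _ _ _ _ hik.symm _
  ext p q
  simp only [Matrix.SpecialLinearGroup.coe_mul, SpecialLinearGroup.transvection_coe,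
    SpecialLinearGroup.diag2n_coe, mul_add, add_mul, mul_one, one_mul, Matrix.add_apply,
    Matrix.one_apply, Matrix.single_apply, Matrix.single_mul_single_same, Matrix.diagonal_mul,
    hxz, Matrix.zero_apply]
  grind

namespace IsMautnerClosed

variable {S : Subgroup SL(n, ℝ)}

lemma transvection_mem_of_conj_lt_one (hS : IsMautnerClosed S) {d : SL(n, ℝ)} (hd : d ∈ S)
    (hrc : r ≠ c) {κ : ℝ} (hκ₀ : 0 < κ) (hκ₁ : κ < 1)
    (hconj : ∀ t, d⁻¹ * SpecialLinearGroup.transvection hrc t * d =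
      SpecialLinearGroup.transvection hrc (κ * t)) (t : ℝ) :
    SpecialLinearGroup.transvection hrc t ∈ S := by
  have hpow (m : ℕ) : (d ^ m)⁻¹ * SpecialLinearGroup.transvection hrc t * d ^ m =
      SpecialLinearGroup.transvection hrc (κ ^ m * t) := by
    induction m with
    | zero => simp
    | succ m ih => rw [pow_succ' κ, mul_assoc κ, ← hconj, ← ih]; group
  refine hS.mem_of_tendsto_conj hd ?_
  simp only [hpow]
  exact tendsto_transvection_one hrc
    (by simpa using (tendsto_pow_atTop_nhds_zero_of_lt_one hκ₀.le hκ₁).mul_const t)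

lemma transvection_mem_of_conj (hS : IsMautnerClosed S) {d : SL(n, ℝ)} (hd : d ∈ S)
    (hrc : r ≠ c) {κ : ℝ} (hκ₀ : 0 < κ) (hκ₁ : κ ≠ 1)
    (hconj : ∀ t, d * SpecialLinearGroup.transvection hrc t * d⁻¹ =
      SpecialLinearGroup.transvection hrc (κ * t)) (t : ℝ) :
    SpecialLinearGroup.transvection hrc t ∈ S := by
  rcases hκ₁.lt_or_gt with hlt | hgt
  · exact hS.transvection_mem_of_conj_lt_one (inv_mem hd) hrc hκ₀ hlt
      (by simpa using hconj) t
  · refine hS.transvection_mem_of_conj_lt_one hd hrc (inv_pos.2 hκ₀) (inv_lt_one_of_one_lt₀ hgt)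
      (fun t => ?_) t
    have h := hconj (κ⁻¹ * t)
    rw [mul_inv_cancel_left₀ hκ₀.ne'] at h
    rw [← h]
    group

lemma diag2n_two_mem (hS : IsMautnerClosed S) (hik : i ≠ k)
    (hmem : SpecialLinearGroup.transvection hik 1 ∈ S) :
    SpecialLinearGroup.diag2n hik (2 : ℝ) two_ne_zero ∈ S := by
  have hzero := tendsto_one_div_add_atTop_nhds_zero_nat (𝕜 := ℝ)
  refine hS (fun m => SpecialLinearGroup.transvection hik ((2 * (m + 1) : ℤ) : ℝ))
    (fun m => SpecialLinearGroup.transvection hik ((-(m + 1) : ℤ) : ℝ))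
    (fun m => SpecialLinearGroup.transvection hik.symm (1 / (2 * (m + 1 : ℝ)))) _
    (fun m => transvection_intCast_mem hik hmem _) (fun m => transvection_intCast_mem hik hmem _)
    (tendsto_transvection_one _ ?_) ?_
  · simpa [one_div, mul_comm] using hzero.const_mul (2⁻¹)
  · have hprod (m : ℕ) : SpecialLinearGroup.transvection hik ((2 * (m + 1) : ℤ) : ℝ) *
        SpecialLinearGroup.transvection hik.symm (1 / (2 * (m + 1 : ℝ))) *
        SpecialLinearGroup.transvection hik ((-(m + 1) : ℤ) : ℝ) =
        SpecialLinearGroup.diag2n hik 2 two_ne_zero *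
          SpecialLinearGroup.transvection hik.symm (1 / (m + 1 : ℝ)) := by
      have hm : (m + 1 : ℝ) ≠ 0 := by positivity
      apply transvection_mul_transvection_mul_transvection <;> push_cast <;> field_simp <;> ring
    simpa only [hprod, mul_one] using (tendsto_transvection_one hik.symm hzero).const_mul
      (SpecialLinearGroup.diag2n hik 2 two_ne_zero)

lemma transvection_mem (hS : IsMautnerClosed S) (hik : i ≠ k)
    (hmem : SpecialLinearGroup.transvection hik 1 ∈ S) (hrc : r ≠ c) (t : ℝ) :
    SpecialLinearGroup.transvection hrc t ∈ S := by
  have hadj : ∀ {i k : Fin n} (hik : i ≠ k), SpecialLinearGroup.transvection hik 1 ∈ S →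
      ∀ {r c : Fin n} (hrc : r ≠ c), (r = i ∨ r = k ∨ c = i ∨ c = k) →
      ∀ t : ℝ, SpecialLinearGroup.transvection hrc t ∈ S := by
    intro i k hik hmem r c hrc hor
    refine hS.transvection_mem_of_conj (hS.diag2n_two_mem hik hmem) hrc (by positivity) ?_
      (conj_diag2n_two_transvection hik hrc)
    grind
  by_cases hir : i = r
  · exact hadj hik hmem hrc (by simp [hir]) t
  · exact hadj hir (hadj hik hmem hir (by simp) 1) hrc (by simp) t

end IsMautnerClosed

theorem isMautnerGenerating_transvection (hik : i ≠ k) :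
    IsMautnerGenerating (SpecialLinearGroup.transvection hik (1 : ℝ)) := by
  intro S hS hmem
  have : Nontrivial (Fin n) := ⟨i, k, hik⟩
  refine (Subgroup.eq_top_iff' S).2 fun g =>
    SpecialLinearGroup.diagonal_transvection_induction' (· ∈ S) g (fun i j hij a ha => ?_)
      (fun i j hij a => hS.transvection_mem hik hmem hij a) fun a b => mul_mem
  have hdiag := transvection_mul_transvection_mul_transvection hij ha (x := a - 1) (y := 1)
    (z := -(a - 1) / a) (w := a) (by ring) (by field_simp; ring) (by ring)
  rw [← mul_inv_eq_iff_eq_mul] at hdiag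
  rw [← hdiag]
  have hall {r c : Fin n} (hrc : r ≠ c) (t : ℝ) := hS.transvection_mem hik hmem hrc t
  exact mul_mem (mul_mem (mul_mem (hall _ _) (hall _ _)) (hall _ _)) (inv_mem (hall _ _))

end Transvection

section UnitaryRepresentation

variable {G E : Type*} [Group G] [NormedAddCommGroup E] [InnerProductSpace ℝ E]
  {π : G →* E ≃ₗᵢ[ℝ] E}

/-- The subgroup of elements that fix the vector `v` in the representation `π`. -/
def vectorStabilizer (π : G →* E ≃ₗᵢ[ℝ] E) (v : E) : Subgroup G where
  carrier := {g | π g v = v}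
  mul_mem' {a b} ha hb := by simp_all
  one_mem' := by simp
  inv_mem' {a} ha := by
    simpa [LinearIsometryEquiv.inv_def, LinearIsometryEquiv.symm_apply_eq] using Eq.symm ha

lemma birkhoffAverage_map_apply (u : G) (H : ℕ) (w : E) :
    birkhoffAverage ℝ (π u) _root_.id H w =
      (H : ℝ)⁻¹ • ∑ b ∈ Finset.range H, π (u ^ b) w := by
  have hiter (b : ℕ) : (π u)^[b] w = π (u ^ b) w := by
    induction b with
    | zero => simp
    | succ b ih => rw [Function.iterate_succ_apply', ih, pow_succ', map_mul]; rfl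
  simp [birkhoffAverage, birkhoffSum, hiter]

-- Moving `u ^ b` across the inner product replaces `w` by its average over powers of `u`, at the
-- cost of replacing `v` by `π (a⁻¹ u ^ b a) v`.
lemma abs_inner_sub_inner_birkhoffAverage_le (a u : G) (v w : E) {H : ℕ} (hH : H ≠ 0) :
    |inner ℝ (π a v) w - inner ℝ (π a v) (birkhoffAverage ℝ (π u) _root_.id H w)| ≤
      (H : ℝ)⁻¹ * ∑ b ∈ Finset.range H, ‖π (a⁻¹ * u ^ b * a) v - v‖ * ‖w‖ := by
  have hshift (b : ℕ) : inner ℝ (π a v) w - inner ℝ (π a v) (π (u ^ b) w) =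
      inner ℝ (π a (π (a⁻¹ * u ^ b * a) v - v)) (π (u ^ b) w) := by
    have hmul : π a (π (a⁻¹ * u ^ b * a) v) = π (u ^ b) (π a v) := by
      simp [map_mul]
    rw [map_sub, inner_sub_left, hmul, LinearIsometryEquiv.inner_map_map]
  have hsum : inner ℝ (π a v) w - inner ℝ (π a v) (birkhoffAverage ℝ (π u) _root_.id H w) =
      (H : ℝ)⁻¹ * ∑ b ∈ Finset.range H,
        inner ℝ (π a (π (a⁻¹ * u ^ b * a) v - v)) (π (u ^ b) w) := by
    simp only [← hshift, Finset.sum_sub_distrib, Finset.sum_const, Finset.card_range,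
      nsmul_eq_mul, mul_sub, birkhoffAverage_map_apply, inner_smul_right, inner_sum]
    rw [inv_mul_cancel_left₀ (Nat.cast_ne_zero.2 hH)]
  rw [hsum, abs_mul, abs_of_nonneg (by positivity)]
  gcongr
  refine (Finset.abs_sum_le_sum_abs _ _).trans (Finset.sum_le_sum fun b _ => ?_)
  exact (abs_real_inner_le_norm _ _).trans_eq (by simp only [LinearIsometryEquiv.norm_map])

variable [TopologicalSpace G]

lemma isMautnerClosed_vectorStabilizer (hπ : ∀ v, Continuous fun g => π g v) (v : E) :
    IsMautnerClosed (vectorStabilizer π v) := by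
  intro x y g h hx hy hg hh
  have hlim : Tendsto (fun m => π (x m * g m * y m) v) atTop (𝓝 (π h v)) :=
    ((hπ v).tendsto h).comp hh
  have hdist (m : ℕ) : dist (π (x m * g m * y m) v) v = dist (π (g m) v) v := by
    calc dist (π (x m * g m * y m) v) v = dist (π (x m * g m * y m) v) (π (x m) v) := by
          rw [show π (x m) v = v from hx m]
      _ = dist (π (g m) v) v := by
          rw [map_mul, map_mul, LinearIsometryEquiv.coe_mul, LinearIsometryEquiv.coe_mul,
            Function.comp_apply, Function.comp_apply, show π (y m) v = v from hy m,
            LinearIsometryEquiv.dist_map]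
  refine tendsto_nhds_unique hlim (tendsto_iff_dist_tendsto_zero.2 ?_)
  simp only [hdist]
  exact tendsto_iff_dist_tendsto_zero.1 (((hπ v).tendsto' 1 v (by simp)).comp hg)

lemma IsMautnerGenerating.map_apply_eq {u : G} (hu : IsMautnerGenerating u)
    (hπ : ∀ v, Continuous fun g => π g v) {v : E} (huv : π u v = v) (g : G) : π g v = v := by
  have hmem : g ∈ vectorStabilizer π v := by
    rw [hu _ (isMautnerClosed_vectorStabilizer hπ v) huv]
    trivial
  exact hmem

lemma tendsto_inner_of_tendsto_birkhoffAverage (hπ : ∀ v, Continuous fun g => π g v) {u : G}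
    {a : ℕ → G} (hau : ∀ b : ℕ, Tendsto (fun q => (a q)⁻¹ * u ^ b * a q) atTop (𝓝 1)) {w : E}
    (hw : Tendsto (fun H => birkhoffAverage ℝ (π u) _root_.id H w) atTop (𝓝 0)) (v : E) :
    Tendsto (fun q => inner ℝ (π (a q) v) w) atTop (𝓝 0) := by
  rw [Metric.tendsto_nhds]
  intro ε hε
  have havg : Tendsto (fun H => ‖v‖ * ‖birkhoffAverage ℝ (π u) _root_.id H w‖) atTop (𝓝 0) := by
    simpa using hw.norm.const_mul ‖v‖
  obtain ⟨H, hH, hH0⟩ :=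
    ((havg.eventually (gt_mem_nhds (half_pos hε))).and (eventually_ne_atTop 0)).exists
  have herr : Tendsto (fun q => (H : ℝ)⁻¹ * ∑ b ∈ Finset.range H,
      ‖π ((a q)⁻¹ * u ^ b * a q) v - v‖ * ‖w‖) atTop (𝓝 0) := by
    have hconj (b : ℕ) : Tendsto (fun q => π ((a q)⁻¹ * u ^ b * a q) v - v) atTop (𝓝 0) := by
      simpa [Function.comp_def] using (((hπ v).tendsto 1).comp (hau b)).sub_const v
    simpa using (tendsto_finsetSum (Finset.range H) fun b _ =>
      (hconj b).norm.mul_const ‖w‖).const_mul (H : ℝ)⁻¹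
  filter_upwards [herr.eventually (gt_mem_nhds (half_pos hε))] with q hq
  have hdiff := abs_inner_sub_inner_birkhoffAverage_le (π := π) (a q) u v w hH0
  have hinner := abs_real_inner_le_norm (π (a q) v) (birkhoffAverage ℝ (π u) _root_.id H w)
  rw [LinearIsometryEquiv.norm_map] at hinner
  have htri := abs_sub_abs_le_abs_sub (inner ℝ (π (a q) v) w)
    (inner ℝ (π (a q) v) (birkhoffAverage ℝ (π u) _root_.id H w))
  rw [Real.dist_0_eq_abs]
  linarith

end UnitaryRepresentation

lemma inner_Lp_const {X : Type*} [MeasurableSpace X] {μ : Measure X} [IsFiniteMeasure μ]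
    (w : Lp ℝ 2 μ) (c : ℝ) : inner ℝ w (Lp.const 2 μ c) = c * ∫ x, w x ∂μ := by
  rw [L2.inner_def, ← integral_const_mul]
  refine integral_congr_ae ?_
  filter_upwards [Lp.coeFn_const 2 μ c] with x hx
  rw [hx]
  rfl

lemma integral_Lp_const {X : Type*} [MeasurableSpace X] {μ : Measure X} [IsProbabilityMeasure μ]
    (c : ℝ) : ∫ x, Lp.const 2 μ c x ∂μ = c := by
  rw [integral_congr_ae (Lp.coeFn_const 2 μ c)]
  simp

section Koopman

variable {G X : Type*} [Group G] [MeasurableSpace X] [MulAction Gᵐᵒᵖ X]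
  [MeasurableConstSMul Gᵐᵒᵖ X] {μ : Measure X} [SMulInvariantMeasure Gᵐᵒᵖ X μ]

variable (G μ) in
/-- The Koopman representation `(g w)(x) = w(x g)` of `G` on `L²(X, μ)`. -/
def koopman : G →* Lp ℝ 2 μ ≃ₗᵢ[ℝ] Lp ℝ 2 μ where
  toFun g := ⟨DistribMulAction.toLinearEquiv ℝ _ (DomMulAct.mk (op g)), DomMulAct.norm_smul_Lp _⟩
  map_one' := LinearIsometryEquiv.ext fun w => one_smul (Gᵐᵒᵖ)ᵈᵐᵃ w
  map_mul' g h := LinearIsometryEquiv.ext fun w =>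
    mul_smul (DomMulAct.mk (op g)) (DomMulAct.mk (op h)) w

lemma coeFn_koopman (g : G) (w : Lp ℝ 2 μ) : koopman G μ g w =ᵐ[μ] fun x => w (x <• g) :=
  DomMulAct.smul_Lp_ae_eq _ w

lemma koopman_toLp (g : G) {h : X → ℝ} (hh : MemLp h 2 μ) :
    koopman G μ g hh.toLp =
      (hh.comp_measurePreserving (measurePreserving_smul (op g) μ)).toLp := rfl

lemma coeFn_birkhoffAverage_koopman (u : G) {h : X → ℝ} (hh : MemLp h 2 μ) (H : ℕ) :
    (birkhoffAverage ℝ (koopman G μ u) _root_.id H hh.toLp : Lp ℝ 2 μ) =ᵐ[μ]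
      birkhoffAverage ℝ (· <• u) h H := by
  have hterm (b : ℕ) : koopman G μ (u ^ b) hh.toLp =ᵐ[μ] fun x => h (x <• u ^ b) :=
    (hh.comp_measurePreserving (measurePreserving_smul (op (u ^ b)) μ)).coeFn_toLp
  rw [birkhoffAverage_map_apply]
  filter_upwards [Lp.coeFn_smul (H : ℝ)⁻¹ (∑ b ∈ Finset.range H, koopman G μ (u ^ b) hh.toLp),
    Lp.coeFn_finsetSum (Finset.range H) (fun b => koopman G μ (u ^ b) hh.toLp),
    ae_all_iff.2 hterm] with x hsmul hsum hx
  rw [hsmul, Pi.smul_apply, hsum, Finset.sum_apply]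
  simp only [hx, birkhoffAverage, birkhoffSum, smul_iterate, op_pow]

end Koopman

lemma integral_abs_le_norm {X : Type*} [MeasurableSpace X] {μ : Measure X}
    [IsProbabilityMeasure μ] (w : Lp ℝ 2 μ) : ∫ x, |w x| ∂μ ≤ ‖w‖ := by
  have hle : eLpNorm w 1 μ ≤ eLpNorm w 2 μ :=
    eLpNorm_le_eLpNorm_of_exponent_le (by norm_num) (Lp.aestronglyMeasurable w)
  rw [Lp.norm_def]
  refine le_trans ?_ (ENNReal.toReal_mono (Lp.eLpNorm_ne_top w) hle)
  rw [eLpNorm_one_eq_lintegral_enorm, ← integral_norm_eq_lintegral_enorm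
    (Lp.aestronglyMeasurable w)]
  rfl

section MeanErgodic

variable {G X : Type*} [Group G] [TopologicalSpace G] [TopologicalSpace X] [T2Space X]
  [LocallyCompactSpace X] [SecondCountableTopology X] [MulAction Gᵐᵒᵖ X] [ContinuousSMul Gᵐᵒᵖ X]
  [MeasurableSpace X] [BorelSpace X] {μ : Measure X} [IsProbabilityMeasure μ]
  [SMulInvariantMeasure Gᵐᵒᵖ X μ]

lemma continuous_koopman_apply (w : Lp ℝ 2 μ) : Continuous fun g => koopman G μ g w := by
  let _ : MeasurableSpace Gᵐᵒᵖ := borel _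
  have : BorelSpace Gᵐᵒᵖ := ⟨rfl⟩
  have : Fact ((2 : ℝ≥0∞) ≠ ⊤) := ⟨ENNReal.ofNat_ne_top⟩
  have hcont : Continuous fun g : G => DomMulAct.mk (op g) :=
    DomMulAct.continuous_mk.comp continuous_op
  exact hcont.smul continuous_const

variable [IsTopologicalGroup G] [LocallyCompactSpace G] [SecondCountableTopology G]
  [MulAction.IsPretransitive Gᵐᵒᵖ X] {u : G}

lemma exists_eq_const_of_koopman_eq (hu : IsMautnerGenerating u) {w : Lp ℝ 2 μ}
    (huw : koopman G μ u w = w) : ∃ c, w = Lp.const 2 μ c := by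
  let _ : MeasurableSpace G := borel _
  have : BorelSpace G := ⟨rfl⟩
  obtain ⟨c, hc⟩ := ae_const_of_forall_ae_eq_op_smul (G := G)
    (Lp.stronglyMeasurable w).measurable fun g =>
      (coeFn_koopman g w).symm.trans (by rw [hu.map_apply_eq continuous_koopman_apply huw])
  exact ⟨c, Lp.ext (hc.trans (Lp.coeFn_const 2 μ c).symm)⟩

theorem tendsto_birkhoffAverage_koopman (hu : IsMautnerGenerating u) (w : Lp ℝ 2 μ) :
    Tendsto (fun H => birkhoffAverage ℝ (koopman G μ u) _root_.id H w) atTop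
      (𝓝 (Lp.const 2 μ (∫ x, w x ∂μ))) := by
  let T : Lp ℝ 2 μ →L[ℝ] Lp ℝ 2 μ := (koopman G μ u).toLinearIsometry.toContinuousLinearMap
  let F := T.eqLocus (1 : Lp ℝ 2 μ →L[ℝ] Lp ℝ 2 μ)
  have hlim := T.tendsto_birkhoffAverage_orthogonalProjection
    (LinearIsometry.norm_toContinuousLinearMap_le _) w
  obtain ⟨c, hc⟩ := exists_eq_const_of_koopman_eq hu (F.orthogonalProjectionOnto w).2
  have hone : F.starProjection (Lp.const 2 μ 1) = Lp.const 2 μ 1 :=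
    Submodule.starProjection_eq_self_iff.2 (by rfl)
  have hint : inner ℝ (F.starProjection w) (Lp.const 2 μ 1) = inner ℝ w (Lp.const 2 μ 1) := by
    rw [Submodule.inner_starProjection_left_eq_right, hone]
  have hcw : c = ∫ x, w x ∂μ := by
    rw [inner_Lp_const, inner_Lp_const, one_mul, one_mul] at hint
    rw [← hint, Submodule.starProjection_apply, hc, integral_Lp_const]
  rwa [← hcw, ← hc]

theorem tendsto_integral_abs_birkhoffAverage_sub (hu : IsMautnerGenerating u) {h : X → ℝ}
    (hh : MemLp h 2 μ) :
    Tendsto (fun H => ∫ x, |birkhoffAverage ℝ (· <• u) h H x - ∫ y, h y ∂μ| ∂μ) atTop (𝓝 0) := by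
  have hlim := tendsto_iff_norm_sub_tendsto_zero.1 (tendsto_birkhoffAverage_koopman hu hh.toLp)
  refine squeeze_zero (fun H => integral_nonneg fun x => abs_nonneg _) (fun H => ?_) hlim
  have hae : ((birkhoffAverage ℝ (koopman G μ u) _root_.id H hh.toLp -
      Lp.const 2 μ (∫ x, hh.toLp h x ∂μ) : Lp ℝ 2 μ) : X → ℝ) =ᵐ[μ]
      fun x => birkhoffAverage ℝ (· <• u) h H x - ∫ y, h y ∂μ := by
    rw [integral_congr_ae hh.coeFn_toLp]
    filter_upwards [Lp.coeFn_sub (birkhoffAverage ℝ (koopman G μ u) _root_.id H hh.toLp)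
      (Lp.const 2 μ (∫ x, h x ∂μ)), coeFn_birkhoffAverage_koopman u hh H,
      Lp.coeFn_const 2 μ (∫ x, h x ∂μ)] with x hsub havg hconst
    rw [hsub, Pi.sub_apply, havg, hconst]
    rfl
  exact (integral_congr_ae (hae.fun_comp abs)).symm.trans_le (integral_abs_le_norm _)

variable {a : ℕ → G}

theorem tendsto_inner_koopman (hu : IsMautnerGenerating u)
    (hau : ∀ b : ℕ, Tendsto (fun q => (a q)⁻¹ * u ^ b * a q) atTop (𝓝 1)) (v w : Lp ℝ 2 μ) :
    Tendsto (fun q => inner ℝ (koopman G μ (a q) v) w) atTop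
      (𝓝 ((∫ x, v x ∂μ) * ∫ x, w x ∂μ)) := by
  let c : ℝ := ∫ x, w x ∂μ
  have hcentred : Tendsto (fun H => birkhoffAverage ℝ (koopman G μ u) _root_.id H
      (w - Lp.const 2 μ c)) atTop (𝓝 0) := by
    have hint : ∫ x, (w - Lp.const 2 μ c : Lp ℝ 2 μ) x ∂μ = 0 := by
      rw [← one_mul (∫ x, _ ∂μ), ← inner_Lp_const, inner_sub_left, inner_Lp_const, inner_Lp_const,
        integral_Lp_const, sub_self]
    simpa only [hint, map_zero] using tendsto_birkhoffAverage_koopman hu (w - Lp.const 2 μ c)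
  have hconst (q : ℕ) : inner ℝ (koopman G μ (a q) v) (Lp.const 2 μ c) = (∫ x, v x ∂μ) * c := by
    have hfix : koopman G μ (a q) (Lp.const 2 μ c) = Lp.const 2 μ c := rfl
    conv_lhs => rw [← hfix]
    rw [LinearIsometryEquiv.inner_map_map, inner_Lp_const, mul_comm]
  have hsplit (q : ℕ) : inner ℝ (koopman G μ (a q) v) w =
      inner ℝ (koopman G μ (a q) v) (w - Lp.const 2 μ c) + (∫ x, v x ∂μ) * c := by
    rw [← hconst q, ← inner_add_right, sub_add_cancel]
  simpa only [hsplit, zero_add] using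
    (tendsto_inner_of_tendsto_birkhoffAverage continuous_koopman_apply hau hcentred v).add_const
      ((∫ x, v x ∂μ) * c)

variable [MeasurableSpace G] [BorelSpace G] (ν : Measure G) [ν.IsHaarMeasure]
  [μ.IsOpenPosMeasure] {x₀ : X} {K : Set G}

theorem tendsto_setIntegral_orbit_translate (hx₀ : IsOpenMap (fun g : G => x₀ <• g))
    (hK : IsCompact (closure K)) (hKm : MeasurableSet K) (hu : IsMautnerGenerating u)
    (hau : ∀ b : ℕ, Tendsto (fun q => (a q)⁻¹ * u ^ b * a q) atTop (𝓝 1)) {F : X → ℝ}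
    (hF : RightUniform G F) :
    Tendsto (fun q => ∫ g in K, F (x₀ <• (g * a q)) ∂ν) atTop (𝓝 (ν.real K * ∫ x, F x ∂μ)) := by
  obtain ⟨ρ, hρ, hρK⟩ := exists_memLp_setIntegral_orbit_eq ν (μ := μ) hx₀ hK hKm
  have hFL := hF.memLp 2 μ
  have hmass : ∫ x, hρ.toLp ρ x ∂μ = ν.real K := by
    rw [integral_congr_ae hρ.coeFn_toLp]
    simpa using (hρK (fun _ => 1) measurable_const).symm
  have hmix := tendsto_inner_koopman hu hau hFL.toLp hρ.toLp
  rw [integral_congr_ae hFL.coeFn_toLp, hmass, mul_comm] at hmix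
  refine hmix.congr fun q => ?_
  simp only [op_mul, mul_smul]
  rw [hρK _ (hF.translate (a q)).continuous.measurable, koopman_toLp, L2.inner_def]
  refine integral_congr_ae ?_
  filter_upwards [hρ.coeFn_toLp, (hFL.comp_measurePreserving
    (measurePreserving_smul (op (a q)) μ)).coeFn_toLp] with x hx hx'
  rw [hx, hx']
  rfl

end MeanErgodic

section LowerUnipotent

variable {n j : ℕ}

/-- The positions of the lower left block of an `n × n` matrix cut after its first `j` rows and
columns. -/
abbrev LowerBlock (n j : ℕ) : Type := {x : Fin n × Fin n // j ≤ (x.1 : ℕ) ∧ (x.2 : ℕ) < j}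

/-- The matrix with lower left block `T` and zeros elsewhere. -/
def lowerBlockMatrix {R : Type*} [Zero R] (T : LowerBlock n j → R) : Matrix (Fin n) (Fin n) R :=
  Matrix.of fun r c => if h : j ≤ (r : ℕ) ∧ (c : ℕ) < j then T ⟨(r, c), h⟩ else 0

section LowerBlockMatrix

variable {R : Type*}

lemma lowerBlockMatrix_apply_of_mem [Zero R] (T : LowerBlock n j → R) {r c : Fin n}
    (h : j ≤ (r : ℕ) ∧ (c : ℕ) < j) : lowerBlockMatrix T r c = T ⟨(r, c), h⟩ := dif_pos h

lemma lowerBlockMatrix_apply_of_notMem [Zero R] (T : LowerBlock n j → R) {r c : Fin n}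
    (h : ¬ (j ≤ (r : ℕ) ∧ (c : ℕ) < j)) : lowerBlockMatrix T r c = 0 := dif_neg h

lemma lowerBlockMatrix_add [AddZeroClass R] (T T' : LowerBlock n j → R) :
    lowerBlockMatrix (T + T') = lowerBlockMatrix T + lowerBlockMatrix T' := by
  ext r c
  by_cases h : j ≤ (r : ℕ) ∧ (c : ℕ) < j <;> simp [lowerBlockMatrix, h]

lemma lowerBlockMatrix_mul [NonUnitalNonAssocSemiring R] (T T' : LowerBlock n j → R) :
    lowerBlockMatrix T * lowerBlockMatrix T' = 0 := by
  ext r c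
  rw [Matrix.mul_apply, Matrix.zero_apply]
  refine Finset.sum_eq_zero fun k _ => ?_
  by_cases hk : (k : ℕ) < j
  · rw [lowerBlockMatrix_apply_of_notMem T' (by omega), mul_zero]
  · rw [lowerBlockMatrix_apply_of_notMem T (by omega), zero_mul]

lemma det_one_add_lowerBlockMatrix [CommRing R] (T : LowerBlock n j → R) :
    (1 + lowerBlockMatrix T).det = 1 := by
  rw [Matrix.det_of_isLowerTriangular]
  · refine Finset.prod_eq_one fun i _ => ?_
    rw [Matrix.add_apply, lowerBlockMatrix_apply_of_notMem T (by omega), one_apply_eq, add_zero]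
  · intro r c (hrc : r < c)
    rw [Matrix.add_apply, lowerBlockMatrix_apply_of_notMem T (by rw [Fin.lt_def] at hrc; omega),
      one_apply_ne hrc.ne, add_zero]

end LowerBlockMatrix

/-- The element `[1, 0; T, 1]` of the unipotent radical opposite to the block upper triangular
parabolic subgroup. -/
def lowerUnipotent (T : LowerBlock n j → ℝ) : SL(n, ℝ) :=
  ⟨1 + lowerBlockMatrix T, det_one_add_lowerBlockMatrix T⟩

lemma coe_lowerUnipotent (T : LowerBlock n j → ℝ) :
    (lowerUnipotent T : Matrix (Fin n) (Fin n) ℝ) = 1 + lowerBlockMatrix T := rfl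

lemma lowerUnipotent_zero : lowerUnipotent (0 : LowerBlock n j → ℝ) = 1 := by
  ext r c
  simp [coe_lowerUnipotent, lowerBlockMatrix]

lemma lowerUnipotent_add (T T' : LowerBlock n j → ℝ) :
    lowerUnipotent (T + T') = lowerUnipotent T * lowerUnipotent T' := by
  apply Subtype.ext
  rw [Matrix.SpecialLinearGroup.coe_mul]
  simp only [coe_lowerUnipotent]
  rw [lowerBlockMatrix_add, mul_add, add_mul, add_mul, lowerBlockMatrix_mul]
  simp [add_assoc]

lemma lowerUnipotent_neg (T : LowerBlock n j → ℝ) :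
    lowerUnipotent (-T) = (lowerUnipotent T)⁻¹ := by
  rw [eq_inv_iff_mul_eq_one, ← lowerUnipotent_add, neg_add_cancel, lowerUnipotent_zero]

lemma lowerUnipotent_nsmul (b : ℕ) (T : LowerBlock n j → ℝ) :
    lowerUnipotent (b • T) = lowerUnipotent T ^ b := by
  induction b with
  | zero => simp [lowerUnipotent_zero]
  | succ b ih => rw [pow_succ, ← ih, ← lowerUnipotent_add, succ_nsmul]

lemma continuous_lowerUnipotent :
    Continuous (lowerUnipotent : (LowerBlock n j → ℝ) → SL(n, ℝ)) := by
  rw [(isClosedEmbedding_coe_SL n).isEmbedding.continuous_iff]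
  refine continuous_const.add (continuous_matrix fun r c => ?_)
  by_cases h : j ≤ (r : ℕ) ∧ (c : ℕ) < j
  · simpa only [lowerBlockMatrix_apply_of_mem _ h] using continuous_apply _
  · simpa only [lowerBlockMatrix_apply_of_notMem _ h] using continuous_const

lemma LowerBlock.fst_ne_snd (s : LowerBlock n j) : s.1.1 ≠ s.1.2 := by
  intro h
  have hlt := s.2.2
  rw [← h] at hlt
  exact hlt.not_ge s.2.1

lemma lowerUnipotent_single (s : LowerBlock n j) (t : ℝ) :
    lowerUnipotent (Pi.single s t) = SpecialLinearGroup.transvection s.fst_ne_snd t := by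
  obtain ⟨⟨a, b⟩, hs⟩ := s
  ext r c
  by_cases h : j ≤ (r : ℕ) ∧ (c : ℕ) < j
  · simp [coe_lowerUnipotent, lowerBlockMatrix, h, SpecialLinearGroup.transvection_coe,
      Matrix.single_apply, Pi.single_apply, eq_comm]
  · have hne : ¬ (a = r ∧ b = c) := by rintro ⟨rfl, rfl⟩; exact h hs
    simp [coe_lowerUnipotent, lowerBlockMatrix, h, SpecialLinearGroup.transvection_coe, hne]

lemma mem_Gamma_of_coe_eq_map_intCast {g : SL(n, ℝ)} (B : Matrix (Fin n) (Fin n) ℤ)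
    (hB : (g : Matrix (Fin n) (Fin n) ℝ) = B.map (Int.cast : ℤ → ℝ)) : g ∈ Gamma n := by
  have hdet : B.det = 1 := by
    have : ((B.det : ℤ) : ℝ) = 1 := by
      rw [← g.2, hB]
      exact (Int.castRingHom ℝ).map_det B
    exact_mod_cast this
  exact ⟨⟨B, hdet⟩, Subtype.ext hB.symm⟩

lemma map_one_add_lowerBlockMatrix_intCast (T : LowerBlock n j → ℤ) :
    (1 + lowerBlockMatrix T).map (Int.cast : ℤ → ℝ) =
      lowerUnipotent (fun s => (T s : ℝ)) := by
  ext r c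
  by_cases h : j ≤ (r : ℕ) ∧ (c : ℕ) < j <;>
    simp [coe_lowerUnipotent, lowerBlockMatrix, h, one_apply, apply_ite]

lemma lowerUnipotent_intCast_mem_Gamma (T : LowerBlock n j → ℤ) :
    lowerUnipotent (fun s => (T s : ℝ)) ∈ Gamma n :=
  mem_Gamma_of_coe_eq_map_intCast _ (map_one_add_lowerBlockMatrix_intCast T).symm

end LowerUnipotent

section HeckeDiagonal

variable {n : ℕ}

lemma rpow_neg_div_pow_mul_pow (j : ℕ) {N : ℕ} (hn : n ≠ 0) (hN : N ≠ 0) :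
    ((N : ℝ) ^ (-(j : ℝ) / (n : ℝ))) ^ n * (N : ℝ) ^ j = 1 := by
  have hN' : (0 : ℝ) < N := by positivity
  rw [← Real.rpow_natCast, ← Real.rpow_mul hN'.le, ← Real.rpow_natCast, ← Real.rpow_add hN',
    div_mul_cancel₀ _ (by exact_mod_cast hn), neg_add_cancel, Real.rpow_zero]

/-- The unimodular matrix `N^{-j/n} B` attached to an integer matrix `B` of determinant `N ^ j`
(and `1` for other `B`). -/
def rescaledSL (j N : ℕ) (B : Matrix (Fin n) (Fin n) ℤ) : SL(n, ℝ) :=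
  open Classical in
  if h : ((N : ℝ) ^ (-(j : ℝ) / (n : ℝ)) • B.map (Int.cast : ℤ → ℝ)).det = 1 then ⟨_, h⟩ else 1

lemma coe_rescaledSL {j N : ℕ} {B : Matrix (Fin n) (Fin n) ℤ} (hn : n ≠ 0) (hN : N ≠ 0)
    (hB : B.det = (N : ℤ) ^ j) : (rescaledSL j N B : Matrix (Fin n) (Fin n) ℝ) =
      (N : ℝ) ^ (-(j : ℝ) / (n : ℝ)) • B.map (Int.cast : ℤ → ℝ) := by
  have hdet : (B.map (Int.cast : ℤ → ℝ)).det = (N : ℝ) ^ j := by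
    rw [← (Int.cast_det B), hB]
    push_cast
    rfl
  have h : ((N : ℝ) ^ (-(j : ℝ) / (n : ℝ)) • B.map (Int.cast : ℤ → ℝ)).det = 1 := by
    rw [det_smul, hdet, Fintype.card_fin, rpow_neg_div_pow_mul_pow j hn hN]
  exact congrArg Subtype.val (dif_pos h)

/-- The diagonal entries `(q, …, q, 1, …, 1)`, with `j` entries `q`, of the Hecke matrix. -/
def heckeWeight (j q : ℕ) (i : Fin n) : ℕ := if (i : ℕ) < j then q else 1

variable {j q : ℕ}

lemma heckeWeight_of_lt {i : Fin n} (hi : (i : ℕ) < j) : heckeWeight j q i = q := if_pos hi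

lemma heckeWeight_of_le {i : Fin n} (hi : j ≤ (i : ℕ)) : heckeWeight j q i = 1 :=
  if_neg hi.not_gt

lemma heckeWeight_ne_zero (hq : q ≠ 0) (i : Fin n) : heckeWeight j q i ≠ 0 := by
  unfold heckeWeight
  split_ifs <;> simp [hq]

lemma prod_heckeWeight (hj : j ≤ n) (q : ℕ) : ∏ i : Fin n, heckeWeight j q i = q ^ j := by
  simp [heckeWeight, Finset.prod_ite, Fin.card_filter_val_lt, hj]

variable (n j q) in
/-- The element `q^{-j/n} diag(q, …, q, 1, …, 1)` of `SL(n, ℝ)`. -/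
def heckeDiagonal : SL(n, ℝ) := rescaledSL j q (diagonal fun i => (heckeWeight j q i : ℤ))

lemma coe_heckeDiagonal (hj : j < n) (hq : q ≠ 0) :
    (heckeDiagonal n j q : Matrix (Fin n) (Fin n) ℝ) =
      (q : ℝ) ^ (-(j : ℝ) / (n : ℝ)) • diagonal fun i => (heckeWeight j q i : ℝ) := by
  rw [heckeDiagonal, coe_rescaledSL (by omega) hq, diagonal_map Int.cast_zero]
  · simp
  · rw [det_diagonal]
    exact_mod_cast prod_heckeWeight hj.le q

lemma heckeDiagonal_conj_apply (hj : j < n) (hq : q ≠ 0) (p : SL(n, ℝ)) (r c : Fin n) :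
    ((heckeDiagonal n j q)⁻¹ * p * heckeDiagonal n j q) r c =
      (heckeWeight j q r : ℝ)⁻¹ * p r c * heckeWeight j q c := by
  set x := (heckeDiagonal n j q)⁻¹ * p * heckeDiagonal n j q with hx
  have hcomm : heckeDiagonal n j q * x = p * heckeDiagonal n j q := by rw [hx]; group
  have hentry := congrArg (fun g : SL(n, ℝ) => g r c) hcomm
  simp only [Matrix.SpecialLinearGroup.coe_mul, coe_heckeDiagonal hj hq, Matrix.smul_mul,
    Matrix.mul_smul, Matrix.smul_apply, Matrix.diagonal_mul, Matrix.mul_diagonal,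
    smul_eq_mul] at hentry
  have hscale : (q : ℝ) ^ (-(j : ℝ) / (n : ℝ)) ≠ 0 := by positivity
  have hr : (heckeWeight j q r : ℝ) ≠ 0 := by exact_mod_cast heckeWeight_ne_zero hq r
  rw [mul_assoc, eq_inv_mul_iff_mul_eq₀ hr]
  exact mul_left_cancel₀ hscale hentry

lemma lowerUnipotent_mul_heckeDiagonal (hj : j < n) (hq : q ≠ 0) (T : LowerBlock n j → ℝ) :
    lowerUnipotent T * heckeDiagonal n j q =
      heckeDiagonal n j q * lowerUnipotent ((q : ℝ) • T) := by
  rw [← inv_mul_eq_iff_eq_mul, ← mul_assoc]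
  ext r c
  rw [heckeDiagonal_conj_apply hj hq, coe_lowerUnipotent, coe_lowerUnipotent, Matrix.add_apply,
    Matrix.add_apply]
  by_cases h : j ≤ (r : ℕ) ∧ (c : ℕ) < j
  · have hrc : r ≠ c := by rintro rfl; omega
    rw [lowerBlockMatrix_apply_of_mem _ h, lowerBlockMatrix_apply_of_mem _ h, one_apply_ne hrc,
      heckeWeight_of_le h.1, heckeWeight_of_lt h.2]
    simp [mul_comm]
  · rw [lowerBlockMatrix_apply_of_notMem _ h, lowerBlockMatrix_apply_of_notMem _ h]
    obtain rfl | hrc := eq_or_ne r c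
    · simp [heckeWeight_ne_zero hq r]
    · simp [hrc]

lemma heckeDiagonal_conj_transvection (hj : j < n) (hq : q ≠ 0) {i k : Fin n} (hik : i ≠ k)
    (hi : (i : ℕ) < j) (hk : j ≤ (k : ℕ)) (t : ℝ) :
    (heckeDiagonal n j q)⁻¹ * SpecialLinearGroup.transvection hik t * heckeDiagonal n j q =
      SpecialLinearGroup.transvection hik (t / q) := by
  ext r c
  rw [heckeDiagonal_conj_apply hj hq]
  simp only [SpecialLinearGroup.transvection_coe, Matrix.add_apply, Matrix.single_apply]
  by_cases h : i = r ∧ k = c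
  · obtain ⟨rfl, rfl⟩ := h
    rw [heckeWeight_of_lt hi, heckeWeight_of_le hk, one_apply_ne hik]
    simp [div_eq_inv_mul]
  · obtain rfl | hrc := eq_or_ne r c
    · simp [heckeWeight_ne_zero hq r, h]
    · simp [hrc, h]

lemma tendsto_heckeDiagonal_conj_transvection_pow (hj : j < n) {i k : Fin n} (hik : i ≠ k)
    (hi : (i : ℕ) < j) (hk : j ≤ (k : ℕ)) (b : ℕ) :
    Tendsto (fun q => (heckeDiagonal n j q)⁻¹ * SpecialLinearGroup.transvection hik (1 : ℝ) ^ b *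
      heckeDiagonal n j q) atTop (𝓝 1) := by
  refine (tendsto_transvection_one hik (tendsto_const_div_atTop_nhds_zero_nat (b : ℝ))).congr' ?_
  filter_upwards [eventually_ne_atTop 0] with q hq
  rw [transvection_pow, mul_one, heckeDiagonal_conj_transvection hj hq hik hi hk]

end HeckeDiagonal

section Parabolic

variable {n j : ℕ}

variable (n j) in
/-- The parabolic subgroup of block upper triangular matrices with diagonal blocks of sizes `j` and
`n - j`. -/
def blockUpper : Subgroup SL(n, ℝ) where
  carrier := {p | ∀ r c : Fin n, j ≤ (r : ℕ) → (c : ℕ) < j → p r c = 0}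
  one_mem' := fun r c hr hc => one_apply_ne (by rintro rfl; omega)
  mul_mem' := by
    intro p p' hp hp' r c hr hc
    rw [Matrix.SpecialLinearGroup.coe_mul, Matrix.mul_apply]
    refine Finset.sum_eq_zero fun k _ => ?_
    obtain hk | hk := lt_or_ge (k : ℕ) j
    · rw [hp r k hr hk, zero_mul]
    · rw [hp' k c hk hc, mul_zero]
  inv_mem' := by
    intro p hp r c hr hc
    have hblock : BlockTriangular (p : Matrix (Fin n) (Fin n) ℝ) fun i => decide (j ≤ (i : ℕ)) := by
      intro r c hrc
      obtain ⟨hc, hr⟩ := Bool.lt_iff.1 hrc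
      exact hp r c (of_decide_eq_true hr) (not_le.1 (of_decide_eq_false hc))
    have hinv : ((p⁻¹ : SL(n, ℝ)) : Matrix (Fin n) (Fin n) ℝ) =
        (p : Matrix (Fin n) (Fin n) ℝ)⁻¹ := by simp [Matrix.inv_def]
    have := (p : Matrix (Fin n) (Fin n) ℝ).invertibleOfIsUnitDet (by simp)
    rw [hinv]
    exact blockTriangular_inv_of_blockTriangular hblock
      (Bool.lt_iff.2 ⟨decide_eq_false hc.not_ge, decide_eq_true hr⟩)

lemma isClosed_blockUpper : IsClosed (blockUpper n j : Set SL(n, ℝ)) := by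
  simp only [blockUpper, Subgroup.coe_set_mk, Submonoid.coe_set_mk, Subsemigroup.coe_set_mk,
    Set.ofPred_forall]
  refine isClosed_iInter fun r => isClosed_iInter fun c => isClosed_iInter fun _ =>
    isClosed_iInter fun _ => ?_
  exact isClosed_eq ((isClosedEmbedding_coe_SL n).continuous.matrix_elem r c) continuous_const

lemma eq_zero_of_lowerUnipotent_mem_blockUpper {T : LowerBlock n j → ℝ}
    (hT : lowerUnipotent T ∈ blockUpper n j) : T = 0 := by
  ext s
  have h := hT s.1.1 s.1.2 s.2.1 s.2.2
  rwa [coe_lowerUnipotent, Matrix.add_apply, one_apply_ne s.fst_ne_snd,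
    lowerBlockMatrix_apply_of_mem T s.2, zero_add] at h

lemma injOn_lowerUnipotent_mul : Set.InjOn
    (fun x : (LowerBlock n j → ℝ) × SL(n, ℝ) => lowerUnipotent x.1 * x.2)
    (Set.univ ×ˢ (blockUpper n j : Set SL(n, ℝ))) := by
  rintro ⟨T, p⟩ ⟨-, hp⟩ ⟨T', p'⟩ ⟨-, hp'⟩ h
  have hmem : lowerUnipotent (T - T') ∈ blockUpper n j := by
    have : lowerUnipotent (T - T') = p' * p⁻¹ := by
      rw [sub_eq_neg_add, lowerUnipotent_add, lowerUnipotent_neg, eq_mul_inv_iff_mul_eq, mul_assoc,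
        inv_mul_eq_iff_eq_mul]
      exact h
    rw [this]
    exact mul_mem hp' (inv_mem hp)
  obtain rfl := sub_eq_zero.1 (eq_zero_of_lowerUnipotent_mem_blockUpper hmem)
  exact Prod.ext rfl (mul_left_cancel h)

end Parabolic

section EntryBall

variable {n j : ℕ}

variable (n) in
/-- The matrices in `SL(n, ℝ)` whose entries differ from those of `1` by at most `r`. -/
def entryBall (r : ℝ) : Set SL(n, ℝ) :=
  {p | ∀ a b, |p a b - (1 : Matrix (Fin n) (Fin n) ℝ) a b| ≤ r}

lemma entryBall_eq_preimage_pi (r : ℝ) :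
    entryBall n r = (fun g : SL(n, ℝ) => (g : Matrix (Fin n) (Fin n) ℝ)) ⁻¹'
      Set.univ.pi fun a => Set.univ.pi fun b => Metric.closedBall ((1 : Matrix _ _ ℝ) a b) r := by
  ext p
  exact ⟨fun h a _ b _ => h a b, fun h a b => h a trivial b trivial⟩

lemma isCompact_entryBall (r : ℝ) : IsCompact (entryBall n r) := by
  rw [entryBall_eq_preimage_pi]
  exact (isClosedEmbedding_coe_SL n).isCompact_preimage
    (isCompact_univ_pi fun a => isCompact_univ_pi fun b => isCompact_closedBall _ _)

lemma entryBall_mem_nhds_one {r : ℝ} (hr : 0 < r) : entryBall n r ∈ 𝓝 1 := by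
  rw [entryBall_eq_preimage_pi]
  exact (isClosedEmbedding_coe_SL n).continuous.continuousAt.preimage_mem_nhds
    (set_pi_mem_nhds Set.finite_univ fun a _ => set_pi_mem_nhds Set.finite_univ fun b _ =>
      Metric.closedBall_mem_nhds _ hr)

lemma exists_entryBall_subset {V : Set SL(n, ℝ)} (hV : V ∈ 𝓝 1) :
    ∃ r > 0, entryBall n r ⊆ V := by
  rw [(isClosedEmbedding_coe_SL n).isInducing.nhds_eq_comap] at hV
  obtain ⟨t, ht, htV⟩ := hV
  obtain ⟨r, hr, hrt⟩ := (Metric.nhds_basis_closedBall (α := Fin n → Fin n → ℝ)).mem_iff.1 ht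
  refine ⟨r, hr, fun g hg => htV (hrt ?_)⟩
  exact (dist_pi_le_iff hr.le).2 fun a => (dist_pi_le_iff hr.le).2 fun b => hg a b

lemma heckeDiagonal_conj_mem_entryBall (hj : j < n) {q : ℕ} (hq : q ≠ 0) {r : ℝ} {p : SL(n, ℝ)}
    (hp : p ∈ entryBall n r) (hpb : p ∈ blockUpper n j) :
    (heckeDiagonal n j q)⁻¹ * p * heckeDiagonal n j q ∈ entryBall n r := by
  intro a b
  have hab := hp a b
  rw [heckeDiagonal_conj_apply hj hq]
  obtain rfl | hne := eq_or_ne a b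
  · rwa [mul_comm, mul_inv_cancel_left₀ (by exact_mod_cast heckeWeight_ne_zero hq a)]
  rw [Matrix.one_apply_ne hne, sub_zero] at hab ⊢
  obtain ha | ha := lt_or_ge (a : ℕ) j <;> obtain hb | hb := lt_or_ge (b : ℕ) j
  · rw [heckeWeight_of_lt ha, heckeWeight_of_lt hb, mul_right_comm,
      inv_mul_cancel₀ (by exact_mod_cast hq), one_mul]
    exact hab
  · rw [heckeWeight_of_lt ha, heckeWeight_of_le hb, Nat.cast_one, mul_one, abs_mul,
      abs_of_nonneg (by positivity)]
    exact (mul_le_of_le_one_left (abs_nonneg _) (Nat.cast_inv_le_one q)).trans hab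
  · rw [hpb a b ha hb] at hab ⊢
    simpa using hab
  · simpa [heckeWeight_of_le ha, heckeWeight_of_le hb] using hab

end EntryBall

section LowerCoordinate

variable {n j : ℕ}

variable (j) in
/-- The coordinate `T` in the decomposition `g = [1, 0; T, 1] * p` with `p` block upper triangular,
namely `C * A⁻¹` for `g = [A, B; C, D]`. It is a junk value when `A` is singular. -/
def lowerCoordinate (g : SL(n, ℝ)) : LowerBlock n j → ℝ := fun s =>
  ((g : Matrix (Fin n) (Fin n) ℝ).toBlock (fun i => ¬ (i : ℕ) < j) (fun i => (i : ℕ) < j) *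
    ((g : Matrix (Fin n) (Fin n) ℝ).toBlock (fun i => (i : ℕ) < j) (fun i => (i : ℕ) < j))⁻¹)
      ⟨s.1.1, s.2.1.not_gt⟩ ⟨s.1.2, s.2.2⟩

lemma lowerUnipotent_neg_lowerCoordinate_mul_mem {g : SL(n, ℝ)}
    (hg : ((g : Matrix (Fin n) (Fin n) ℝ).toBlock (fun i => (i : ℕ) < j)
      (fun i => (i : ℕ) < j)).det ≠ 0) :
    lowerUnipotent (-lowerCoordinate j g) * g ∈ blockUpper n j := by
  set L : Fin n → Prop := fun i => ¬ (i : ℕ) < j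
  set U : Fin n → Prop := fun i => (i : ℕ) < j
  set M := (g : Matrix (Fin n) (Fin n) ℝ)
  set u := (lowerUnipotent (-lowerCoordinate j g) : Matrix (Fin n) (Fin n) ℝ) with hu
  have hlower : u.toBlock L U = -(M.toBlock L U * (M.toBlock U U)⁻¹) := by
    ext ⟨r, hr⟩ ⟨c, hc⟩
    have hrc : r ≠ c := by rintro rfl; exact hr hc
    rw [toBlock_apply, hu, coe_lowerUnipotent, Matrix.add_apply, one_apply_ne hrc, zero_add,
      lowerBlockMatrix_apply_of_mem _ ⟨not_lt.1 hr, hc⟩]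
    rfl
  have hdiag : u.toBlock L L = 1 := by
    ext ⟨r, hr⟩ ⟨c, hc⟩
    rw [toBlock_apply, hu, coe_lowerUnipotent, Matrix.add_apply,
      lowerBlockMatrix_apply_of_notMem _ (fun h => hc h.2), add_zero]
    simp [one_apply]
  have hzero : (u * M).toBlock L U = 0 := by
    rw [toBlock_mul_eq_add L U U, hlower, hdiag, Matrix.neg_mul, Matrix.mul_assoc,
      nonsing_inv_mul _ (isUnit_iff_ne_zero.2 hg), Matrix.mul_one, Matrix.one_mul, neg_add_cancel]
  exact fun r c hr hc => congrFun (congrFun hzero ⟨r, hr.not_gt⟩) ⟨c, hc⟩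

lemma lowerCoordinate_one : lowerCoordinate j (1 : SL(n, ℝ)) = 0 := by
  ext s
  simp [lowerCoordinate, toBlock_one_self, inv_one, one_apply_ne s.fst_ne_snd]

lemma continuous_toBlock_coe (P Q : Fin n → Prop) :
    Continuous fun g : SL(n, ℝ) => (g : Matrix (Fin n) (Fin n) ℝ).toBlock P Q :=
  (isClosedEmbedding_coe_SL n).continuous.matrix_submatrix _ _

lemma continuousAt_lowerCoordinate_one :
    ContinuousAt (lowerCoordinate j : SL(n, ℝ) → LowerBlock n j → ℝ) 1 := by
  have hinv : ContinuousAt (fun g : SL(n, ℝ) => ((g : Matrix (Fin n) (Fin n) ℝ).toBlock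
      (fun i => (i : ℕ) < j) (fun i => (i : ℕ) < j))⁻¹) 1 := by
    refine (continuousAt_matrix_inv _ ?_).comp (continuous_toBlock_coe _ _).continuousAt
    simp [toBlock_one_self]
  exact continuousAt_pi.2 fun s =>
    ((continuous_fst.matrix_mul continuous_snd).matrix_elem _ _).continuousAt.comp
      ((continuous_toBlock_coe _ _).continuousAt.prodMk hinv)

lemma eventually_lowerUnipotent_neg_lowerCoordinate_mul_mem :
    ∀ᶠ g : SL(n, ℝ) in 𝓝 1, lowerUnipotent (-lowerCoordinate j g) * g ∈ blockUpper n j := by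
  have hdet : ∀ᶠ g : SL(n, ℝ) in 𝓝 1, ((g : Matrix (Fin n) (Fin n) ℝ).toBlock
      (fun i => (i : ℕ) < j) (fun i => (i : ℕ) < j)).det ≠ 0 := by
    refine (continuous_toBlock_coe _ _).matrix_det.continuousAt.eventually_ne ?_
    simp [toBlock_one_self]
  filter_upwards [hdet] with g hg using lowerUnipotent_neg_lowerCoordinate_mul_mem hg

lemma tendsto_lowerUnipotent_neg_lowerCoordinate_mul :
    Tendsto (fun g : SL(n, ℝ) => lowerUnipotent (-lowerCoordinate j g) * g) (𝓝 1) (𝓝 1) := by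
  have h : ContinuousAt (fun g : SL(n, ℝ) => lowerUnipotent (-lowerCoordinate j g) * g) 1 :=
    (continuous_lowerUnipotent.continuousAt.comp continuousAt_lowerCoordinate_one.neg).mul
      continuousAt_id
  simpa [ContinuousAt, lowerCoordinate_one, lowerUnipotent_zero] using h

end LowerCoordinate

section ThickBox

variable {n j : ℕ} {r : ℝ}

instance : PolishSpace SL(n, ℝ) :=
  IsClosedEmbedding.polishSpace (β := Fin n → Fin n → ℝ) (isClosedEmbedding_coe_SL n)

/-- The set of products `[1, 0; T, 1] * p` with `T ∈ B` and `p` block upper triangular with entries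
`r`-close to those of `1`. -/
def thickBox (r : ℝ) (B : Set (LowerBlock n j → ℝ)) : Set SL(n, ℝ) :=
  (fun x : (LowerBlock n j → ℝ) × SL(n, ℝ) => lowerUnipotent x.1 * x.2) ''
    (B ×ˢ ((blockUpper n j : Set SL(n, ℝ)) ∩ entryBall n r))

variable {B B' : Set (LowerBlock n j → ℝ)}

lemma continuous_lowerUnipotent_mul :
    Continuous fun x : (LowerBlock n j → ℝ) × SL(n, ℝ) => lowerUnipotent x.1 * x.2 :=
  (continuous_lowerUnipotent.comp continuous_fst).mul continuous_snd

lemma thickBox_mono (h : B ⊆ B') : thickBox r B ⊆ thickBox r B' :=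
  Set.image_mono (Set.prod_mono h subset_rfl)

lemma thickBox_iUnion {ι : Sort*} (B : ι → Set (LowerBlock n j → ℝ)) :
    thickBox r (⋃ i, B i) = ⋃ i, thickBox r (B i) := by
  simp only [thickBox, Set.iUnion_prod_const, Set.image_iUnion]

lemma isCompact_thickBox (hB : IsCompact B) : IsCompact (thickBox r B) :=
  (hB.prod ((isCompact_entryBall r).inter_left isClosed_blockUpper)).image
    continuous_lowerUnipotent_mul

lemma isCompact_closure_thickBox (hB : Bornology.IsBounded B) :
    IsCompact (closure (thickBox r B)) :=
  (isCompact_thickBox hB.isCompact_closure).closure_of_subset (thickBox_mono subset_closure)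

lemma injOn_lowerUnipotent_mul_thickBox (r : ℝ) (B : Set (LowerBlock n j → ℝ)) : Set.InjOn
    (fun x : (LowerBlock n j → ℝ) × SL(n, ℝ) => lowerUnipotent x.1 * x.2)
    (B ×ˢ ((blockUpper n j : Set SL(n, ℝ)) ∩ entryBall n r)) :=
  injOn_lowerUnipotent_mul.mono (Set.prod_mono (Set.subset_univ _) Set.inter_subset_left)

lemma measurableSet_thickBox (hB : MeasurableSet B) : MeasurableSet (thickBox r B) :=
  (hB.prod ((isClosed_blockUpper.inter
    (isCompact_entryBall r).isClosed).measurableSet)).image_of_continuousOn_injOn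
      continuous_lowerUnipotent_mul.continuousOn (injOn_lowerUnipotent_mul_thickBox r B)

lemma disjoint_thickBox (h : Disjoint B B') : Disjoint (thickBox r B) (thickBox r B') := by
  rw [Set.disjoint_left]
  rintro _ ⟨⟨T, p⟩, ⟨hT, hp⟩, rfl⟩ ⟨⟨T', p'⟩, ⟨hT', hp'⟩, heq⟩
  have : T' = T := congrArg Prod.fst
    (injOn_lowerUnipotent_mul ⟨trivial, hp'.1⟩ ⟨trivial, hp.1⟩ heq)
  exact h.notMem_of_mem_left hT (this ▸ hT')

lemma smul_thickBox (S : LowerBlock n j → ℝ) (B : Set (LowerBlock n j → ℝ)) :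
    lowerUnipotent S • thickBox r B = thickBox r (S +ᵥ B) := by
  ext g
  constructor
  · rintro ⟨_, ⟨⟨T, p⟩, ⟨hT, hp⟩, rfl⟩, rfl⟩
    exact ⟨(S + T, p), ⟨Set.vadd_mem_vadd_set hT, hp⟩, by
      simp only [lowerUnipotent_add, smul_eq_mul, mul_assoc]⟩
  · rintro ⟨⟨_, p⟩, ⟨⟨T, hT, rfl⟩, hp⟩, rfl⟩
    exact ⟨lowerUnipotent T * p, ⟨(T, p), ⟨hT, hp⟩, rfl⟩, by
      simp only [lowerUnipotent_add, vadd_eq_add, smul_eq_mul, mul_assoc]⟩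

lemma thickBox_mem_nhds_one (hr : 0 < r) (hB : B ∈ 𝓝 0) : thickBox r B ∈ 𝓝 1 := by
  have hcoord : ∀ᶠ g : SL(n, ℝ) in 𝓝 1, lowerCoordinate j g ∈ B :=
    continuousAt_lowerCoordinate_one (lowerCoordinate_one (n := n) (j := j) ▸ hB)
  filter_upwards [hcoord, eventually_lowerUnipotent_neg_lowerCoordinate_mul_mem (j := j),
    tendsto_lowerUnipotent_neg_lowerCoordinate_mul (j := j) (entryBall_mem_nhds_one hr)]
    with g hT hblock hball
  exact ⟨(lowerCoordinate j g, _), ⟨hT, hblock, hball⟩, by simp [lowerUnipotent_neg]⟩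

variable (ν : Measure SL(n, ℝ))

lemma measure_thickBox_vadd [ν.IsMulLeftInvariant] (S : LowerBlock n j → ℝ) :
    ν (thickBox r (S +ᵥ B)) = ν (thickBox r B) := by
  rw [← smul_thickBox, measure_smul]

lemma setIntegral_thickBox_vadd [ν.IsMulLeftInvariant] (S : LowerBlock n j → ℝ)
    (ψ : SL(n, ℝ) → ℝ) : ∫ g in thickBox r (S +ᵥ B), ψ g ∂ν =
      ∫ g in thickBox r B, ψ (lowerUnipotent S * g) ∂ν := by
  rw [← smul_thickBox]
  exact (measurePreserving_mul_left ν _).setIntegral_image_emb (measurableEmbedding_mulLeft _) ψ _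

end ThickBox

section Cube

variable {ι : Type*} {q : ℕ} {t : ℝ}

variable (ι) in
/-- The half-open cube `[0, t)^ι`. -/
def cube (t : ℝ) : Set (ι → ℝ) := Set.univ.pi fun _ => Set.Ico 0 t

lemma mem_vadd_cube {x y : ι → ℝ} : y ∈ x +ᵥ cube ι t ↔ ∀ s, x s ≤ y s ∧ y s < x s + t := by
  simp [Set.mem_vadd_set_iff_neg_vadd_mem, cube, neg_add_lt_iff_lt_add]

lemma measurableSet_cube [Countable ι] (t : ℝ) : MeasurableSet (cube ι t) :=
  MeasurableSet.univ_pi fun _ => measurableSet_Ico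

lemma isBounded_cube [Finite ι] (t : ℝ) : Bornology.IsBounded (cube ι t) :=
  Bornology.IsBounded.pi fun _ => Metric.isBounded_Ico 0 t

lemma cube_one_subset_iUnion_vadd (hq : q ≠ 0) :
    cube ι 1 ⊆ ⋃ A : ι → Fin q, (fun s => ((A s : ℕ) : ℝ) / q) +ᵥ cube ι (1 / q) := by
  have hq' : (0 : ℝ) < q := by positivity
  intro x hx
  have hx' (s : ι) : 0 ≤ q * x s := mul_nonneg hq'.le (hx s trivial).1
  have hfloor (s : ι) : ⌊q * x s⌋₊ < q := by
    rw [Nat.floor_lt (hx' s)]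
    exact mul_lt_of_lt_one_right hq' (hx s trivial).2
  refine Set.mem_iUnion.2 ⟨fun s => ⟨⌊q * x s⌋₊, hfloor s⟩, mem_vadd_cube.2 fun s => ?_⟩
  rw [div_le_iff₀ hq', ← add_div, lt_div_iff₀ hq', mul_comm]
  exact ⟨Nat.floor_le (hx' s), Nat.lt_floor_add_one _⟩

lemma floor_mul_of_mem_vadd_cube (hq : q ≠ 0) (ht : t ≤ 1 / q) {A : ι → Fin q} {x : ι → ℝ}
    (hx : x ∈ (fun s => ((A s : ℕ) : ℝ) / q) +ᵥ cube ι t) (s : ι) : ⌊q * x s⌋₊ = A s := by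
  have hq' : (0 : ℝ) < q := by positivity
  obtain ⟨hle, hlt⟩ := mem_vadd_cube.1 hx s
  have hlt' : x s < ((A s : ℕ) + 1) / q := by rw [add_div]; linarith
  rw [div_le_iff₀ hq', mul_comm] at hle
  rw [lt_div_iff₀ hq', mul_comm] at hlt'
  exact (Nat.floor_eq_iff ((Nat.cast_nonneg _).trans hle)).2 ⟨hle, hlt'⟩

lemma pairwise_disjoint_vadd_cube (hq : q ≠ 0) (ht : t ≤ 1 / q) :
    Pairwise (Function.onFun Disjoint fun A : ι → Fin q =>
      (fun s => ((A s : ℕ) : ℝ) / q) +ᵥ cube ι t) := by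
  intro A A' hne
  refine Set.disjoint_left.2 fun x hx hx' => hne (funext fun s => Fin.ext ?_)
  rw [← floor_mul_of_mem_vadd_cube hq ht hx s, floor_mul_of_mem_vadd_cube hq ht hx' s]

lemma vadd_cube_subset_cube_one (hq : q ≠ 0) (ht : t ≤ 1 / q) (A : ι → Fin q) :
    (fun s => ((A s : ℕ) : ℝ) / q) +ᵥ cube ι t ⊆ cube ι 1 := by
  have hq' : (0 : ℝ) < q := by positivity
  intro x hx s _
  obtain ⟨hle, hlt⟩ := mem_vadd_cube.1 hx s
  refine ⟨le_trans (by positivity) hle, ?_⟩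
  calc x s < (A s : ℕ) / q + 1 / q := by linarith
    _ = ((A s + 1 : ℕ) : ℝ) / q := by push_cast; ring
    _ ≤ 1 := (div_le_one hq').2 (by exact_mod_cast (A s).2)

end Cube

section ThickCube

variable {n j : ℕ} {r : ℝ} {q : ℕ} (ν : Measure SL(n, ℝ)) [ν.IsHaarMeasure]

lemma measure_thickBox_cube_lt_top (t : ℝ) : ν (thickBox r (cube (LowerBlock n j) t)) < ∞ :=
  (measure_mono subset_closure).trans_lt
    (isCompact_closure_thickBox (isBounded_cube t)).measure_lt_top

lemma measureReal_thickBox_cube_one_pos (hr : 0 < r) :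
    0 < ν.real (thickBox r (cube (LowerBlock n j) 1)) := by
  set S : LowerBlock n j → ℝ := fun _ => -(1 / 2)
  have hnhds : S +ᵥ cube (LowerBlock n j) 1 ∈ 𝓝 0 := by
    have hball : Metric.ball (0 : LowerBlock n j → ℝ) (1 / 2) ∈ 𝓝 0 :=
      Metric.ball_mem_nhds 0 (by norm_num)
    refine mem_of_superset hball fun x hx => mem_vadd_cube.2 fun s => ?_
    have hxs := abs_lt.1 ((norm_le_pi_norm x s).trans_lt (mem_ball_zero_iff.1 hx))
    constructor <;> simp only [S] <;> linarith
  refine ENNReal.toReal_pos ?_ (measure_thickBox_cube_lt_top ν 1).ne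
  rw [← measure_thickBox_vadd ν S]
  exact (Measure.measure_pos_of_mem_nhds ν (thickBox_mem_nhds_one hr hnhds)).ne'

lemma measureReal_thickBox_cube_one_le (hq : q ≠ 0) :
    ν.real (thickBox r (cube (LowerBlock n j) 1)) ≤
      (q : ℝ) ^ Fintype.card (LowerBlock n j) *
        ν.real (thickBox r (cube (LowerBlock n j) (1 / q))) := by
  calc ν.real (thickBox r (cube (LowerBlock n j) 1))
      ≤ ν.real (⋃ A : LowerBlock n j → Fin q,
          thickBox r ((fun s => ((A s : ℕ) : ℝ) / q) +ᵥ cube (LowerBlock n j) (1 / q))) := by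
        rw [← thickBox_iUnion]
        refine measureReal_mono (thickBox_mono (cube_one_subset_iUnion_vadd hq)) ?_
        rw [thickBox_iUnion]
        refine ((measure_iUnion_fintype_le ν _).trans_lt (ENNReal.sum_lt_top.2 fun A _ => ?_)).ne
        rw [measure_thickBox_vadd]
        exact measure_thickBox_cube_lt_top ν _
    _ ≤ ∑ A : LowerBlock n j → Fin q, ν.real (thickBox r (cube (LowerBlock n j) (1 / q))) := by
        refine (measureReal_iUnion_fintype_le _).trans_eq (Finset.sum_congr rfl fun A _ => ?_)
        rw [Measure.real, measure_thickBox_vadd, Measure.real]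
    _ = _ := by simp

lemma sum_setIntegral_thickBox_cube_le (hq : q ≠ 0) {t : ℝ} (ht : t ≤ 1 / q) {ψ : SL(n, ℝ) → ℝ}
    (hψ : ∀ g, 0 ≤ ψ g) (hint : IntegrableOn ψ (thickBox r (cube (LowerBlock n j) 1)) ν) :
    ∑ A : LowerBlock n j → Fin q, ∫ g in thickBox r (cube (LowerBlock n j) t),
        ψ (lowerUnipotent (fun s => ((A s : ℕ) : ℝ) / q) * g) ∂ν ≤
      ∫ g in thickBox r (cube (LowerBlock n j) 1), ψ g ∂ν := by
  simp only [← setIntegral_thickBox_vadd]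
  have hsub (A : LowerBlock n j → Fin q) :
      thickBox r ((fun s => ((A s : ℕ) : ℝ) / q) +ᵥ cube (LowerBlock n j) t) ⊆
        thickBox r (cube (LowerBlock n j) 1) :=
    thickBox_mono (vadd_cube_subset_cube_one hq ht A)
  rw [← integral_iUnion_fintype
    (fun A => measurableSet_thickBox ((measurableSet_cube t).const_vadd _))
    (fun A A' h => disjoint_thickBox (pairwise_disjoint_vadd_cube hq ht h))
    (fun A => hint.mono_set (hsub A))]
  exact setIntegral_mono_set hint (Eventually.of_forall hψ) (Set.iUnion_subset hsub).eventuallyLE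

end ThickCube

section HorosphereAverage

variable {n j q : ℕ}

/-- The average of `f` over the `q`-division points of the closed horosphere through the image of
`heckeDiagonal n j q`. -/
def horosphereAverage (j : ℕ) (f : XSpace n → ℝ) (q : ℕ) : ℝ :=
  𝔼 A : LowerBlock n j → Fin q,
    f (XSpace.mk (heckeDiagonal n j q * lowerUnipotent fun s => ((A s : ℕ) : ℝ)))

lemma expect_birkhoffAverage {ι X : Type*} (s : Finset ι) (x : ι → X) (T : X → X) (f : X → ℝ)
    (H : ℕ) : 𝔼 i ∈ s, birkhoffAverage ℝ T f H (x i) =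
      (H : ℝ)⁻¹ * ∑ b ∈ Finset.range H, 𝔼 i ∈ s, f (T^[b] (x i)) := by
  simp only [birkhoffAverage, birkhoffSum, smul_eq_mul, ← Finset.mul_expect,
    Finset.expect_sum_comm]

lemma mk_heckeDiagonal_mul_lowerUnipotent_mod (hj : j < n) (hq : q ≠ 0) (x : LowerBlock n j → ℕ) :
    XSpace.mk (heckeDiagonal n j q * lowerUnipotent fun s => (x s : ℝ)) =
      XSpace.mk (heckeDiagonal n j q * lowerUnipotent fun s => ((x s % q : ℕ) : ℝ)) := by
  have hdiv : (fun s => (x s : ℝ)) = (q : ℝ) • (fun s => (((x s / q : ℕ) : ℤ) : ℝ)) +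
      fun s => ((x s % q : ℕ) : ℝ) := by
    ext s
    rw [Pi.add_apply, Pi.smul_apply, smul_eq_mul, Int.cast_natCast, ← Nat.cast_mul,
      ← Nat.cast_add, Nat.div_add_mod]
  rw [hdiv, lowerUnipotent_add, ← mul_assoc, ← lowerUnipotent_mul_heckeDiagonal hj hq, mul_assoc]
  exact XSpace.mk_mul_of_mem_Gamma (lowerUnipotent_intCast_mem_Gamma _) _

lemma horosphereAverage_op_smul (hj : j < n) (hq : q ≠ 0) (f : XSpace n → ℝ)
    (B : LowerBlock n j → ℕ) :
    horosphereAverage j (fun x => f (x <• lowerUnipotent fun s => (B s : ℝ))) q =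
      horosphereAverage j f q := by
  have : NeZero q := ⟨hq⟩
  refine Fintype.expect_equiv (Equiv.addRight fun s => Fin.ofNat q (B s)) _ _ fun A => ?_
  have hadd : ((fun s => ((A s : ℕ) : ℝ)) + fun s => (B s : ℝ)) =
      fun s => ((A s + B s : ℕ) : ℝ) := by
    ext s
    simp
  simp only [XSpace.mk_op_smul]
  rw [mul_assoc, ← lowerUnipotent_add, hadd,
    mk_heckeDiagonal_mul_lowerUnipotent_mod hj hq]
  simp [Fin.val_add]

lemma horosphereAverage_birkhoffAverage (hj : j < n) (hq : q ≠ 0) (s : LowerBlock n j)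
    (f : XSpace n → ℝ) {H : ℕ} (hH : H ≠ 0) :
    horosphereAverage j (birkhoffAverage ℝ (· <• lowerUnipotent (Pi.single s 1)) f H) q =
      horosphereAverage j f q := by
  have hinv (b : ℕ) :
      horosphereAverage j (fun x => f ((· <• lowerUnipotent (Pi.single s 1))^[b] x)) q =
        horosphereAverage j f q := by
    have hpow : lowerUnipotent (Pi.single s (1 : ℝ)) ^ b =
        lowerUnipotent fun k => ((b • Pi.single s 1 : LowerBlock n j → ℕ) k : ℝ) := by
      rw [← lowerUnipotent_nsmul]
      congr 1
      ext k
      by_cases hk : k = s <;> simp [hk]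
    simp only [smul_iterate, ← op_pow, hpow]
    exact horosphereAverage_op_smul hj hq f _
  unfold horosphereAverage at hinv ⊢
  simp only [expect_birkhoffAverage, hinv, Finset.sum_const, Finset.card_range, nsmul_eq_mul]
  exact inv_mul_cancel_left₀ (by exact_mod_cast hH) _

lemma RightUniform.exists_abs_sub_le_of_lowerUnipotent {f : XSpace n → ℝ}
    (hf : RightUniform SL(n, ℝ) f) {ε : ℝ} (hε : 0 < ε) (j : ℕ) :
    ∃ R : ℕ, R ≠ 0 ∧ ∀ t : LowerBlock n j → ℝ, (∀ s, |t s| ≤ 1 / R) →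
      ∀ x, |f (x <• lowerUnipotent t) - f x| ≤ ε := by
  have htendsto : Tendsto (lowerUnipotent : (LowerBlock n j → ℝ) → SL(n, ℝ)) (𝓝 0) (𝓝 1) :=
    lowerUnipotent_zero (n := n) (j := j) ▸ continuous_lowerUnipotent.tendsto 0
  obtain ⟨δ, hδ, hδf⟩ :=
    Metric.eventually_nhds_iff.1 (htendsto.eventually (hf.eventually_abs_sub_lt hε))
  obtain ⟨R, hR⟩ := exists_nat_one_div_lt hδ
  refine ⟨R + 1, R.succ_ne_zero, fun t ht x => (hδf ((dist_pi_lt_iff hδ).2 fun s => ?_) x).le⟩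
  rw [Pi.zero_apply, Real.dist_eq, sub_zero]
  exact (ht s).trans_lt (by exact_mod_cast hR)

lemma mk_lowerUnipotent_div_mul_mul_heckeDiagonal (hj : j < n) (hq : q ≠ 0)
    (A T : LowerBlock n j → ℝ) (p : SL(n, ℝ)) :
    XSpace.mk (lowerUnipotent (fun s => A s / q) * (lowerUnipotent T * p) * heckeDiagonal n j q) =
      XSpace.mk (heckeDiagonal n j q * lowerUnipotent A) <• lowerUnipotent ((q : ℝ) • T) <•
        ((heckeDiagonal n j q)⁻¹ * p * heckeDiagonal n j q) := by
  have hA : A = (q : ℝ) • fun s => A s / q := by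
    ext s
    simp [mul_div_cancel₀ (A s) (Nat.cast_ne_zero (R := ℝ).2 hq)]
  rw [XSpace.mk_op_smul, XSpace.mk_op_smul]
  conv_rhs => rw [hA, ← lowerUnipotent_mul_heckeDiagonal hj hq, mul_assoc (lowerUnipotent _),
    ← lowerUnipotent_mul_heckeDiagonal hj hq]
  congr 1
  group

variable {F : XSpace n → ℝ} {ε r : ℝ} {R : ℕ}

lemma sub_two_mul_le_of_mem_thickBox (hj : j < n) (hq : q ≠ 0) (hR : R ≠ 0)
    (hFr : ∀ k ∈ entryBall n r, ∀ x, |F (x <• k) - F x| ≤ ε)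
    (hFR : ∀ t : LowerBlock n j → ℝ, (∀ s, |t s| ≤ 1 / R) →
      ∀ x, |F (x <• lowerUnipotent t) - F x| ≤ ε) (A : LowerBlock n j → ℝ) {g : SL(n, ℝ)}
    (hg : g ∈ thickBox r (cube (LowerBlock n j) (1 / (q * R : ℕ)))) :
    F (XSpace.mk (heckeDiagonal n j q * lowerUnipotent A)) - 2 * ε ≤
      F (XSpace.mk (lowerUnipotent (fun s => A s / q) * g * heckeDiagonal n j q)) := by
  obtain ⟨⟨T, p⟩, ⟨hT, hpblock, hpball⟩, rfl⟩ := hg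
  rw [mk_lowerUnipotent_div_mul_mul_heckeDiagonal hj hq]
  set x := XSpace.mk (heckeDiagonal n j q * lowerUnipotent A)
  have hsmall (s : LowerBlock n j) : |((q : ℝ) • T) s| ≤ 1 / R := by
    obtain ⟨hpos, hlt⟩ := hT s trivial
    rw [Pi.smul_apply, smul_eq_mul, abs_of_nonneg (by positivity)]
    calc (q : ℝ) * T s ≤ q * (1 / (q * R : ℕ)) := by gcongr
      _ = 1 / R := by push_cast; field_simp
  have hunip := abs_le.1 (hFR _ hsmall x)
  have hball := abs_le.1 (hFr _ (heckeDiagonal_conj_mem_entryBall hj hq hpball hpblock)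
    (x <• lowerUnipotent ((q : ℝ) • T)))
  linarith

-- Each of the `q ^ d` division points is compared with a box of side `1 / (q * R)` next to it;
-- these boxes are disjoint inside the unit box and fill a proportion `R ^ (-d)` of it.
lemma pow_mul_horosphereAverage_sub_mul_le (ν : Measure SL(n, ℝ)) [ν.IsHaarMeasure]
    (hj : j < n) (hq : q ≠ 0) (hR : R ≠ 0) (hF : RightUniform SL(n, ℝ) F) (hF0 : ∀ x, 0 ≤ F x)
    (hFr : ∀ k ∈ entryBall n r, ∀ x, |F (x <• k) - F x| ≤ ε)
    (hFR : ∀ t : LowerBlock n j → ℝ, (∀ s, |t s| ≤ 1 / R) →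
      ∀ x, |F (x <• lowerUnipotent t) - F x| ≤ ε) :
    (q : ℝ) ^ Fintype.card (LowerBlock n j) * ((horosphereAverage j F q - 2 * ε) *
        ν.real (thickBox r (cube (LowerBlock n j) (1 / (q * R : ℕ))))) ≤
      ∫ g in thickBox r (cube (LowerBlock n j) 1),
        F (XSpace.mk (g * heckeDiagonal n j q)) ∂ν := by
  have : NeZero q := ⟨hq⟩
  set v := ν.real (thickBox r (cube (LowerBlock n j) (1 / (q * R : ℕ))))
  have hcont : Continuous fun g => F (XSpace.mk (g * heckeDiagonal n j q)) :=
    hF.continuous.comp (XSpace.continuous_mk.comp (continuous_mul_const _))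
  obtain ⟨C, hC⟩ := hF.exists_bound
  have hint (S : LowerBlock n j → ℝ) (t : ℝ) :
      IntegrableOn (fun g => F (XSpace.mk (lowerUnipotent S * g * heckeDiagonal n j q)))
        (thickBox r (cube (LowerBlock n j) t)) ν :=
    Measure.integrableOn_of_bounded (measure_thickBox_cube_lt_top ν t).ne
      (hcont.comp (continuous_const_mul _)).aestronglyMeasurable (.of_forall fun g => hC _)
  have hside : (1 : ℝ) / (q * R : ℕ) ≤ 1 / q := by
    gcongr
    exact Nat.le_mul_of_pos_right q (Nat.pos_of_ne_zero hR)
  have havg : (q : ℝ) ^ Fintype.card (LowerBlock n j) * ((horosphereAverage j F q - 2 * ε) * v) =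
      ∑ A : LowerBlock n j → Fin q, (F (XSpace.mk (heckeDiagonal n j q *
        lowerUnipotent fun s => ((A s : ℕ) : ℝ))) - 2 * ε) * v := by
    rw [← Fintype.card_mul_expect, ← Finset.expect_mul, Finset.expect_sub_distrib,
      Fintype.expect_const, Fintype.card_fun, Fintype.card_fin, Nat.cast_pow]
    rfl
  rw [havg]
  refine (Finset.sum_le_sum fun A _ => setIntegral_ge_of_const_le_real
    (measurableSet_thickBox (measurableSet_cube _)) (measure_thickBox_cube_lt_top ν _).ne
    (fun g hg => sub_two_mul_le_of_mem_thickBox hj hq hR hFr hFR _ hg) (hint _ _)).trans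
      (sum_setIntegral_thickBox_cube_le ν hq hside
        (ψ := fun g => F (XSpace.mk (g * heckeDiagonal n j q))) (fun g => hF0 _) ?_)
  simpa [lowerUnipotent_zero] using hint 0 1

lemma measureReal_mul_horosphereAverage_sub_le (ν : Measure SL(n, ℝ)) [ν.IsHaarMeasure]
    (hj : j < n) (hq : q ≠ 0) (hR : R ≠ 0) (hF : RightUniform SL(n, ℝ) F) (hF0 : ∀ x, 0 ≤ F x)
    (hFr : ∀ k ∈ entryBall n r, ∀ x, |F (x <• k) - F x| ≤ ε)
    (hFR : ∀ t : LowerBlock n j → ℝ, (∀ s, |t s| ≤ 1 / R) →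
      ∀ x, |F (x <• lowerUnipotent t) - F x| ≤ ε) :
    ν.real (thickBox r (cube (LowerBlock n j) 1)) * (horosphereAverage j F q - 2 * ε) ≤
      (R : ℝ) ^ Fintype.card (LowerBlock n j) * ∫ g in thickBox r (cube (LowerBlock n j) 1),
        F (XSpace.mk (g * heckeDiagonal n j q)) ∂ν := by
  set d := Fintype.card (LowerBlock n j)
  set v := ν.real (thickBox r (cube (LowerBlock n j) (1 / (q * R : ℕ))))
  obtain hneg | hpos := le_total (horosphereAverage j F q - 2 * ε) 0
  · exact (mul_nonpos_of_nonneg_of_nonpos measureReal_nonneg hneg).trans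
      (mul_nonneg (by positivity) (integral_nonneg fun g => hF0 _))
  calc _ ≤ ((q * R : ℕ) : ℝ) ^ d * v * (horosphereAverage j F q - 2 * ε) :=
        mul_le_mul_of_nonneg_right (measureReal_thickBox_cube_one_le ν (mul_ne_zero hq hR)) hpos
    _ = (R : ℝ) ^ d * ((q : ℝ) ^ d * ((horosphereAverage j F q - 2 * ε) * v)) := by
        push_cast; ring
    _ ≤ _ := mul_le_mul_of_nonneg_left
        (pow_mul_horosphereAverage_sub_mul_le ν hj hq hR hF hF0 hFr hFR) (by positivity)

variable {μ : Measure (XSpace n)} [IsProbabilityMeasure μ]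
  [SMulInvariantMeasure SL(n, ℝ)ᵐᵒᵖ (XSpace n) μ]

lemma eventually_horosphereAverage_le (hj0 : 0 < j) (hj : j < n) (hF : RightUniform SL(n, ℝ) F)
    (hF0 : ∀ x, 0 ≤ F x) {η : ℝ} (hε : 0 < ε) (hη : 0 < η) (hR : R ≠ 0)
    (hFR : ∀ t : LowerBlock n j → ℝ, (∀ s, |t s| ≤ 1 / R) →
      ∀ x, |F (x <• lowerUnipotent t) - F x| ≤ ε) :
    ∀ᶠ q in atTop, horosphereAverage j F q ≤
      2 * ε + (R : ℝ) ^ Fintype.card (LowerBlock n j) * (∫ x, F x ∂μ + η) := by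
  obtain ⟨r, hr, hrF⟩ := exists_entryBall_subset (hF.eventually_abs_sub_lt hε)
  let ν : Measure SL(n, ℝ) := Measure.haar
  have hv := measureReal_thickBox_cube_one_pos (j := j) ν hr
  have hik : (⟨0, by omega⟩ : Fin n) ≠ ⟨n - 1, by omega⟩ := by
    simp only [ne_eq, Fin.mk.injEq]
    omega
  have hmix := tendsto_setIntegral_orbit_translate ν (μ := μ)
    (XSpace.isOpenQuotientMap_orbit (XSpace.mk 1)).isOpenMap
    (isCompact_closure_thickBox (r := r) (isBounded_cube (ι := LowerBlock n j) 1))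
    (measurableSet_thickBox (measurableSet_cube 1)) (isMautnerGenerating_transvection hik)
    (tendsto_heckeDiagonal_conj_transvection_pow hj hik hj0 (Nat.le_sub_one_of_lt hj)) hF
  have hlt := (mul_lt_mul_iff_right₀ hv).2 (lt_add_of_pos_right (∫ x, F x ∂μ) hη)
  filter_upwards [hmix.eventually_lt_const hlt, eventually_ne_atTop 0] with q hqlt hq
  simp only [XSpace.mk_op_smul, one_mul] at hqlt
  have hle := (measureReal_mul_horosphereAverage_sub_le ν hj hq hR hF hF0
    (fun k hk x => (hrF hk x).le) hFR).trans
      (mul_le_mul_of_nonneg_left hqlt.le (pow_nonneg (Nat.cast_nonneg R) _))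
  rw [mul_left_comm] at hle
  linarith [le_of_mul_le_mul_left hle hv]

lemma abs_birkhoffAverage_op_smul_sub_le {u g : SL(n, ℝ)} (hug : Commute g u) {f : XSpace n → ℝ}
    (hε : 0 ≤ ε) (hf : ∀ x, |f (x <• g) - f x| ≤ ε) (H : ℕ) (x : XSpace n) :
    |birkhoffAverage ℝ (· <• u) f H (x <• g) - birkhoffAverage ℝ (· <• u) f H x| ≤ ε := by
  have hsum : dist (birkhoffSum (· <• u) f H (x <• g)) (birkhoffSum (· <• u) f H x) ≤ H * ε := by
    refine (dist_birkhoffSum_birkhoffSum_le _ _ _ _ _).trans ?_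
    refine (Finset.sum_le_card_nsmul (Finset.range H) _ ε fun b _ => ?_).trans_eq (by simp)
    simp only [smul_iterate, ← op_pow, op_smul_op_smul, (hug.pow_right b).eq]
    rw [← op_smul_op_smul]
    exact hf _
  rw [← Real.dist_eq, dist_birkhoffAverage_birkhoffAverage]
  exact div_le_of_le_mul₀ (Nat.cast_nonneg H) hε (by linarith)

lemma eventually_horosphereAverage_abs_birkhoffAverage_le (hj0 : 0 < j) (hj : j < n)
    {h : XSpace n → ℝ} (hh : RightUniform SL(n, ℝ) h) (hint : ∫ x, h x ∂μ = 0)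
    (s : LowerBlock n j) (hε : 0 < ε) :
    ∃ H ≠ 0, ∀ᶠ q in atTop, horosphereAverage j (fun x =>
      |birkhoffAverage ℝ (· <• lowerUnipotent (Pi.single s 1)) h H x|) q ≤ 4 * ε := by
  set u := lowerUnipotent (Pi.single s (1 : ℝ)) with hu
  obtain ⟨R, hR, hRh⟩ := hh.exists_abs_sub_le_of_lowerUnipotent hε j
  set d := Fintype.card (LowerBlock n j)
  have hgen : IsMautnerGenerating u := by
    rw [hu, lowerUnipotent_single]
    exact isMautnerGenerating_transvection _
  have hmean := tendsto_integral_abs_birkhoffAverage_sub hgen (hh.memLp 2 μ)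
  simp only [hint, sub_zero] at hmean
  have hη : 0 < ε / (R : ℝ) ^ d := by positivity
  obtain ⟨H, hHlt, hH⟩ := ((hmean.eventually_lt_const hη).and (eventually_ne_atTop 0)).exists
  refine ⟨H, hH, ?_⟩
  filter_upwards [eventually_horosphereAverage_le hj0 hj (hh.birkhoffAverage u H).abs
    (fun x => abs_nonneg _) hε hη hR (μ := μ) fun t ht x =>
      (abs_abs_sub_abs_le_abs_sub _ _).trans (abs_birkhoffAverage_op_smul_sub_le
        (by rw [hu, Commute, SemiconjBy, ← lowerUnipotent_add, add_comm, lowerUnipotent_add])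
        hε.le (hRh t ht) H x)] with q hq
  calc _ ≤ 2 * ε + (R : ℝ) ^ d * (ε / (R : ℝ) ^ d + ε / (R : ℝ) ^ d) := by
        refine hq.trans ?_
        gcongr
    _ = 4 * ε := by field_simp; ring

theorem tendsto_horosphereAverage (hj0 : 0 < j) (hj : j < n) {f : XSpace n → ℝ}
    (hf : RightUniform SL(n, ℝ) f) :
    Tendsto (horosphereAverage j f) atTop (𝓝 (∫ x, f x ∂μ)) := by
  set c := ∫ x, f x ∂μ with hc
  have hint : ∫ x, (f x - c) ∂μ = 0 := by
    simp [integral_sub (hf.integrable μ) (integrable_const c), ← hc]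
  let s : LowerBlock n j := ⟨(⟨n - 1, by omega⟩, ⟨0, by omega⟩), Nat.le_sub_one_of_lt hj, hj0⟩
  refine Metric.tendsto_nhds.2 fun ε hε => ?_
  obtain ⟨H, hH, hle⟩ := eventually_horosphereAverage_abs_birkhoffAverage_le hj0 hj
    (hf.sub (.const c)) hint s (ε := ε / 5) (by positivity)
  filter_upwards [hle, eventually_ne_atTop 0] with q hq hq0
  have : NeZero q := ⟨hq0⟩
  have hcentre : horosphereAverage j (fun x => f x - c) q = horosphereAverage j f q - c := by
    simp only [horosphereAverage, Finset.expect_sub_distrib, Fintype.expect_const]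
  rw [Real.dist_eq, ← hcentre, ← horosphereAverage_birkhoffAverage hj hq0 s _ hH]
  calc _ ≤ _ := Finset.abs_expect_le _ _
    _ ≤ 4 * (ε / 5) := hq
    _ < ε := by linarith

end HorosphereAverage

section Lattices

variable {m n j N : ℕ} {L : AddSubgroup (Fin n → ℤ)}

/-- The lattice spanned by the rows of an integer matrix. -/
def rowLattice (B : Matrix (Fin n) (Fin n) ℤ) : AddSubgroup (Fin n → ℤ) :=
  AddSubgroup.closure (Set.range fun i : Fin n => (B i : Fin n → ℤ))

lemma row_mem_rowLattice (B : Matrix (Fin n) (Fin n) ℤ) (i : Fin n) : B i ∈ rowLattice B :=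
  AddSubgroup.subset_closure ⟨i, rfl⟩

lemma mem_rowLattice {B : Matrix (Fin n) (Fin n) ℤ} {v : Fin n → ℤ} :
    v ∈ rowLattice B ↔ ∃ x, x ᵥ* B = v := by
  simp only [rowLattice, AddSubgroup.mem_closure_range_iff_of_fintype, vecMul_eq_sum, eq_comm]

lemma rowLattice_mul (B C : Matrix (Fin n) (Fin n) ℤ) :
    rowLattice (B * C) = (rowLattice B).map C.vecMulLinear.toAddMonoidHom := by
  ext v
  simp [mem_rowLattice, vecMul_vecMul]

lemma rowLattice_diagonal_mul_le (d : Fin n → ℤ) (B : Matrix (Fin n) (Fin n) ℤ) :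
    rowLattice (diagonal d * B) ≤ rowLattice B := by
  intro v
  simp only [mem_rowLattice, ← vecMul_vecMul]
  exact fun ⟨x, hx⟩ => ⟨_, hx⟩

lemma mem_rowLattice_diagonal {d : Fin n → ℤ} {v : Fin n → ℤ} :
    v ∈ rowLattice (diagonal d) ↔ ∀ i, d i ∣ v i := by
  simp only [mem_rowLattice, funext_iff, vecMul_diagonal, dvd_def, Classical.skolem, mul_comm,
    eq_comm]

lemma exists_rowLattice_eq (hL : L.index ≠ 0) :
    ∃ B : Matrix (Fin n) (Fin n) ℤ, rowLattice B = L ∧ B.det.natAbs = L.index := by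
  obtain ⟨e⟩ := Int.addSubgroup_index_ne_zero_iff.1 hL
  let b : Module.Basis (Fin n) ℤ L.toIntSubmodule := Module.Basis.ofEquivFun e.toIntLinearEquiv
  refine ⟨of fun i => (b i : Fin n → ℤ), ?_, ?_⟩
  · ext v
    rw [mem_rowLattice]
    refine ⟨?_, fun hv => ⟨b.repr ⟨v, hv⟩, ?_⟩⟩
    · rintro ⟨x, rfl⟩
      rw [vecMul_eq_sum]
      exact sum_mem fun i _ => zsmul_mem (b i).2 _
    · have hsum := congrArg (Subtype.val : L.toIntSubmodule → _) (b.sum_repr ⟨v, hv⟩)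
      rw [Submodule.coe_sum] at hsum
      rwa [vecMul_eq_sum]
  · rw [AddSubgroup.index_eq_natAbs_det (Pi.basisFun ℤ (Fin n)) L b, Module.Basis.det_apply,
      ← det_transpose]
    rfl

lemma exists_rowLattice_eq_det_eq_index (hn : n ≠ 0) (hL : L.index ≠ 0) :
    ∃ B : Matrix (Fin n) (Fin n) ℤ, rowLattice B = L ∧ B.det = L.index := by
  obtain ⟨B, hBL, hdet⟩ := exists_rowLattice_eq hL
  rcases Int.natAbs_eq B.det with h | h
  · exact ⟨B, hBL, by rw [h, hdet]⟩
  have : NeZero n := ⟨hn⟩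
  let D : Matrix (Fin n) (Fin n) ℤ := diagonal fun i => if i = 0 then -1 else 1
  have hDD : D * D = 1 := by
    rw [diagonal_mul_diagonal, ← diagonal_one]
    congr with i
    split_ifs <;> rfl
  refine ⟨D * B, ?_, ?_⟩
  · refine hBL ▸ (rowLattice_diagonal_mul_le _ B).antisymm ?_
    calc rowLattice B = rowLattice (D * (D * B)) := by rw [← Matrix.mul_assoc, hDD, Matrix.one_mul]
      _ ≤ rowLattice (D * B) := rowLattice_diagonal_mul_le _ _
  · rw [det_mul, h, hdet, det_diagonal, Finset.prod_ite_eq']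
    simp

lemma mem_latticeSet_iff_exists_ker_eq : L ∈ latticeSet N n j ↔
    ∃ φ : (Fin n → ℤ) →+ (Fin j → ZMod N), Function.Surjective φ ∧ φ.ker = L := by
  constructor
  · rintro ⟨e⟩
    refine ⟨e.toAddMonoidHom.comp (QuotientAddGroup.mk' L),
      e.surjective.comp (QuotientAddGroup.mk'_surjective L), ?_⟩
    ext v
    simp
  · rintro ⟨φ, hφ, rfl⟩
    exact ⟨QuotientAddGroup.quotientKerEquivOfSurjective φ hφ⟩

lemma index_of_mem_latticeSet (hL : L ∈ latticeSet N n j) : L.index = N ^ j := by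
  obtain ⟨e⟩ := hL
  rw [AddSubgroup.index, Nat.card_congr e.toEquiv, Nat.card_fun, Nat.card_zmod, Nat.card_fin]

lemma map_mem_latticeSet (hL : L ∈ latticeSet N n j) (e : (Fin n → ℤ) ≃+ (Fin n → ℤ)) :
    L.map e.toAddMonoidHom ∈ latticeSet N n j := by
  obtain ⟨equiv⟩ := hL
  exact ⟨(QuotientAddGroup.congr L _ e rfl).symm.trans equiv⟩

/-- The homomorphism `v ↦ v C mod N` from `ℤⁿ` to `(ℤ/N)ʲ` given by a matrix `C` over `ℤ/N`. -/
def vecMulMod (C : Matrix (Fin n) (Fin j) (ZMod N)) : (Fin n → ℤ) →+ (Fin j → ZMod N) :=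
  C.vecMulLinear.toAddMonoidHom.comp ((Int.castAddHom (ZMod N)).compLeft (Fin n))

lemma vecMulMod_apply (C : Matrix (Fin n) (Fin j) (ZMod N)) (v : Fin n → ℤ) :
    vecMulMod C v = (fun i => (v i : ZMod N)) ᵥ* C := rfl

lemma intCast_vecMul (v : Fin m → ℤ) (B : Matrix (Fin m) (Fin n) ℤ) :
    (fun c => (((v ᵥ* B) c : ℤ) : ZMod N)) =
      (fun i => (v i : ZMod N)) ᵥ* B.map (Int.cast : ℤ → ZMod N) :=
  funext fun c => (Int.castRingHom (ZMod N)).map_vecMul B v c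

lemma exists_vecMulMod_eq (φ : (Fin n → ℤ) →+ (Fin j → ZMod N)) : ∃ C, vecMulMod C = φ := by
  refine ⟨of fun i => φ (Pi.single i 1), ?_⟩
  ext i c
  have hsingle : (fun k => ((Pi.single i 1 : Fin n → ℤ) k : ZMod N)) = Pi.single i 1 := by
    ext k
    simp [Pi.single_apply]
  simp [vecMulMod_apply, hsingle]

lemma finite_latticeSet (hN : N ≠ 0) : (latticeSet N n j).Finite := by
  have : NeZero N := ⟨hN⟩
  refine (Set.finite_range fun C : Matrix (Fin n) (Fin j) (ZMod N) => (vecMulMod C).ker).subset ?_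
  intro L hL
  obtain ⟨φ, -, rfl⟩ := mem_latticeSet_iff_exists_ker_eq.1 hL
  obtain ⟨C, rfl⟩ := exists_vecMulMod_eq φ
  exact ⟨C, rfl⟩

variable (n j N) in
/-- The set `L_{N,j}(n)` as a `Finset` (empty for `N = 0`, where the set may be infinite). -/
def latticeFinset : Finset (AddSubgroup (Fin n → ℤ)) :=
  if hN : N ≠ 0 then (finite_latticeSet (n := n) (j := j) hN).toFinset else ∅

lemma mem_latticeFinset (hN : N ≠ 0) : L ∈ latticeFinset n j N ↔ L ∈ latticeSet N n j := by
  rw [latticeFinset, dif_pos hN, Set.Finite.mem_toFinset]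

lemma coe_latticeFinset (hN : N ≠ 0) : (latticeFinset n j N : Set _) = latticeSet N n j :=
  Set.ext fun _ => mem_latticeFinset hN

end Lattices

section RescaledBasis

variable {n j N : ℕ} {L : AddSubgroup (Fin n → ℤ)} {g g' : SL(n, ℝ)}

/-- `g = N^{-j/n} B` for a matrix `B` whose rows span `L`; the point `x_L` is then `Γ g`. -/
def IsRescaledBasis (j N : ℕ) (L : AddSubgroup (Fin n → ℤ)) (g : SL(n, ℝ)) : Prop :=
  ∃ B : Matrix (Fin n) (Fin n) ℤ, rowLattice B = L ∧
    (g : Matrix (Fin n) (Fin n) ℝ) = (N : ℝ) ^ (-(j : ℝ) / (n : ℝ)) • B.map (Int.cast : ℤ → ℝ)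

lemma map_intCast_mul (B C : Matrix (Fin n) (Fin n) ℤ) :
    (B * C).map (Int.cast : ℤ → ℝ) = B.map (Int.cast : ℤ → ℝ) * C.map (Int.cast : ℤ → ℝ) :=
  Matrix.map_mul (f := Int.castRingHom ℝ)

lemma IsRescaledBasis.mk_eq (h : IsRescaledBasis j N L g) (h' : IsRescaledBasis j N L g') :
    XSpace.mk g = XSpace.mk g' := by
  obtain ⟨B, hB, hg⟩ := h
  obtain ⟨B', hB', hg'⟩ := h'
  choose x hx using fun i => mem_rowLattice.1 (hB'.trans hB.symm ▸ row_mem_rowLattice B' i)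
  have hmul : B' = of x * B := by
    ext i k
    rw [mul_apply_eq_vecMul]
    exact congrFun (hx i).symm k
  have hcoe : (g' : Matrix (Fin n) (Fin n) ℝ) = (of x).map (Int.cast : ℤ → ℝ) * g := by
    rw [hg', hg, hmul, Matrix.mul_smul, map_intCast_mul]
  rw [XSpace.mk_eq_mk_iff]
  refine mem_Gamma_of_coe_eq_map_intCast (of x) ?_
  rw [Matrix.SpecialLinearGroup.coe_mul, hcoe, Matrix.mul_assoc,
    ← Matrix.SpecialLinearGroup.coe_mul, mul_inv_cancel, Matrix.SpecialLinearGroup.coe_one,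
    Matrix.mul_one]

lemma exists_isRescaledBasis (hn : n ≠ 0) (hN : N ≠ 0) (hL : L ∈ latticeSet N n j) :
    ∃ g, IsRescaledBasis j N L g := by
  have hindex := index_of_mem_latticeSet hL
  obtain ⟨B, hB, hdet⟩ :=
    exists_rowLattice_eq_det_eq_index hn (hindex ▸ pow_ne_zero j hN : L.index ≠ 0)
  exact ⟨rescaledSL j N B, B, hB, coe_rescaledSL hn hN (by rw [hdet, hindex]; push_cast; rfl)⟩

lemma det_eq_of_coe_eq_smul_map (hn : n ≠ 0) (hN : N ≠ 0) {B : Matrix (Fin n) (Fin n) ℤ}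
    (hg : (g : Matrix (Fin n) (Fin n) ℝ) =
      (N : ℝ) ^ (-(j : ℝ) / (n : ℝ)) • B.map (Int.cast : ℤ → ℝ)) : B.det = (N : ℤ) ^ j := by
  have hdet : ((N : ℝ) ^ (-(j : ℝ) / (n : ℝ))) ^ n * (B.det : ℝ) = 1 := by
    rw [Int.cast_det, ← g.det_coe, hg, det_smul, Fintype.card_fin]
  have hpow := rpow_neg_div_pow_mul_pow j hn hN
  have hscale : ((N : ℝ) ^ (-(j : ℝ) / (n : ℝ))) ^ n ≠ 0 := left_ne_zero_of_mul_eq_one hpow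
  exact_mod_cast mul_left_cancel₀ hscale (hdet.trans hpow.symm)

open Classical in
/-- A representative `N^{-j/n} B` of the point `x_L` (and `1` if there is none). -/
def latticeSL (j N : ℕ) (L : AddSubgroup (Fin n → ℤ)) : SL(n, ℝ) :=
  if h : ∃ g, IsRescaledBasis j N L g then h.choose else 1

lemma isRescaledBasis_latticeSL (hn : n ≠ 0) (hN : N ≠ 0) (hL : L ∈ latticeSet N n j) :
    IsRescaledBasis j N L (latticeSL j N L) := by
  have h := exists_isRescaledBasis hn hN hL
  rw [latticeSL, dif_pos h]
  exact h.choose_spec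

/-- Right multiplication of row vectors by an integer unimodular matrix. -/
def vecMulEquiv (γ : SL(n, ℤ)) : (Fin n → ℤ) ≃+ (Fin n → ℤ) :=
  (SpecialLinearGroup.toLin' γ.transpose).toAddEquiv

lemma vecMulEquiv_apply (γ : SL(n, ℤ)) (v : Fin n → ℤ) :
    vecMulEquiv γ v = v ᵥ* (γ : Matrix (Fin n) (Fin n) ℤ) := by
  rw [← mulVec_transpose]
  rfl

lemma IsRescaledBasis.mul_map_intCast (h : IsRescaledBasis j N L g) (γ : SL(n, ℤ)) :
    IsRescaledBasis j N (L.map (vecMulEquiv γ).toAddMonoidHom)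
      (g * SpecialLinearGroup.map (Int.castRingHom ℝ) γ) := by
  obtain ⟨B, rfl, hg⟩ := h
  refine ⟨B * γ, ?_, ?_⟩
  · rw [rowLattice_mul]
    congr 1
    exact AddMonoidHom.ext fun v => (vecMulEquiv_apply γ v).symm
  · rw [Matrix.SpecialLinearGroup.coe_mul, hg, Matrix.smul_mul, map_intCast_mul]
    rfl

end RescaledBasis

section CellLattice

variable {n j q : ℕ}

/-- The integer matrix `diag(q, …, q, 1, …, 1) · (1 + T)`, with `T` supported on the lower left
block. Its row lattices form the big cell of `L_{q,j}(n)`. -/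
def cellMatrix (q : ℕ) (T : LowerBlock n j → ℤ) : Matrix (Fin n) (Fin n) ℤ :=
  diagonal (fun i => (heckeWeight j q i : ℤ)) * (1 + lowerBlockMatrix T)

lemma one_add_lowerBlockMatrix_mul_one_sub {R : Type*} [Ring R] (T T' : LowerBlock n j → R) :
    (1 + lowerBlockMatrix T) * (1 - lowerBlockMatrix T') =
      1 + lowerBlockMatrix T - lowerBlockMatrix T' := by
  rw [mul_sub, add_mul _ _ (lowerBlockMatrix T'), lowerBlockMatrix_mul, mul_one, one_mul, add_zero]

lemma one_add_lowerBlockMatrix_mul_one_sub_self {R : Type*} [Ring R] (T : LowerBlock n j → R) :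
    (1 + lowerBlockMatrix T) * (1 - lowerBlockMatrix T) = 1 := by
  rw [one_add_lowerBlockMatrix_mul_one_sub, add_sub_cancel_right]

lemma mem_rowLattice_cellMatrix {T : LowerBlock n j → ℤ} {v : Fin n → ℤ} :
    v ∈ rowLattice (cellMatrix q T) ↔
      ∀ c : Fin n, (c : ℕ) < j → (q : ℤ) ∣ (v ᵥ* (1 - lowerBlockMatrix T)) c := by
  have hshear : v ∈ rowLattice (cellMatrix q T) ↔
      v ᵥ* (1 - lowerBlockMatrix T) ∈ rowLattice (diagonal fun i => (heckeWeight j q i : ℤ)) := by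
    simp only [mem_rowLattice, cellMatrix]
    refine exists_congr fun x => ⟨?_, fun h => ?_⟩
    · rintro rfl
      rw [vecMul_vecMul, Matrix.mul_assoc, one_add_lowerBlockMatrix_mul_one_sub_self,
        Matrix.mul_one]
    · rw [← vecMul_vecMul, h, vecMul_vecMul,
        mul_eq_one_comm.1 (one_add_lowerBlockMatrix_mul_one_sub_self T), vecMul_one]
  rw [hshear, mem_rowLattice_diagonal]
  refine forall_congr' fun c => ?_
  rcases lt_or_ge (c : ℕ) j with hc | hc
  · simp [heckeWeight_of_lt hc, hc]
  · simp [heckeWeight_of_le hc, hc.not_gt]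

/-- The matrix over `ℤ/q` of the linear congruences that define a lattice of the big cell. -/
def cellCongruence (hj : j ≤ n) (T : LowerBlock n j → ZMod q) :
    Matrix (Fin n) (Fin j) (ZMod q) :=
  (1 - lowerBlockMatrix T).submatrix id (Fin.castLE hj)

lemma lowerBlockMatrix_map {R S : Type*} [Zero R] [Zero S] {f : R → S} (hf : f 0 = 0)
    (T : LowerBlock n j → R) : (lowerBlockMatrix T).map f = lowerBlockMatrix (f ∘ T) := by
  ext r c
  by_cases h : j ≤ (r : ℕ) ∧ (c : ℕ) < j
  · simp [lowerBlockMatrix_apply_of_mem _ h]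
  · simp [lowerBlockMatrix_apply_of_notMem _ h, hf]

lemma vecMulMod_cellCongruence (hj : j ≤ n) (T : LowerBlock n j → ℤ) (v : Fin n → ℤ) (c : Fin j) :
    vecMulMod (cellCongruence (q := q) hj fun s => (T s : ZMod q)) v c =
      ((v ᵥ* (1 - lowerBlockMatrix T)) (Fin.castLE hj c) : ℤ) := by
  have hmap : (1 - lowerBlockMatrix T).map (Int.cast : ℤ → ZMod q) =
      1 - lowerBlockMatrix (fun s => (T s : ZMod q)) := by
    rw [Matrix.map_sub _ Int.cast_sub, lowerBlockMatrix_map Int.cast_zero,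
      Matrix.map_one _ Int.cast_zero Int.cast_one]
    rfl
  rw [congrFun (intCast_vecMul (N := q) v (1 - lowerBlockMatrix T)) (Fin.castLE hj c), hmap]
  rfl

lemma ker_vecMulMod_cellCongruence (hj : j ≤ n) (T : LowerBlock n j → ℤ) :
    (vecMulMod (cellCongruence (q := q) hj fun s => (T s : ZMod q))).ker =
      rowLattice (cellMatrix q T) := by
  ext v
  simp only [mem_rowLattice_cellMatrix, AddMonoidHom.mem_ker, funext_iff, Pi.zero_apply,
    vecMulMod_cellCongruence, ZMod.intCast_zmod_eq_zero_iff_dvd]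
  exact ⟨fun h c hc => h ⟨c, hc⟩, fun h c => h _ c.2⟩

lemma rowLattice_cellMatrix_mem_latticeSet (hj : j ≤ n) (T : LowerBlock n j → ℤ) :
    rowLattice (cellMatrix q T) ∈ latticeSet q n j := by
  refine mem_latticeSet_iff_exists_ker_eq.2
    ⟨_, fun y => ?_, ker_vecMulMod_cellCongruence hj T⟩
  choose z hz using fun c => ZMod.intCast_surjective (y c)
  let x : Fin n → ℤ := fun i => if h : (i : ℕ) < j then z ⟨i, h⟩ else 0
  refine ⟨x ᵥ* (1 + lowerBlockMatrix T), funext fun c => ?_⟩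
  rw [vecMulMod_cellCongruence, vecMul_vecMul, one_add_lowerBlockMatrix_mul_one_sub_self,
    vecMul_one]
  simp [x, hz]

lemma latticeFinset_nonempty (hj : j ≤ n) (hq : q ≠ 0) : (latticeFinset n j q).Nonempty :=
  ⟨_, (mem_latticeFinset hq).2 (rowLattice_cellMatrix_mem_latticeSet hj 0)⟩

lemma dvd_sub_of_rowLattice_cellMatrix_eq {T T' : LowerBlock n j → ℤ}
    (h : rowLattice (cellMatrix q T) = rowLattice (cellMatrix q T')) (s : LowerBlock n j) :
    (q : ℤ) ∣ T s - T' s := by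
  obtain ⟨⟨r, c⟩, hr, hc⟩ := s
  have hrow := h ▸ row_mem_rowLattice (cellMatrix q T) r
  have hdvd := mem_rowLattice_cellMatrix.1 hrow c hc
  have hentry : (cellMatrix q T r ᵥ* (1 - lowerBlockMatrix T')) c =
      T ⟨(r, c), hr, hc⟩ - T' ⟨(r, c), hr, hc⟩ := by
    have hrc : r ≠ c := by rintro rfl; exact hc.not_ge hr
    rw [← mul_apply_eq_vecMul, cellMatrix, Matrix.mul_assoc,
      one_add_lowerBlockMatrix_mul_one_sub, diagonal_mul, heckeWeight_of_le hr]
    simp [lowerBlockMatrix_apply_of_mem _ ⟨hr, hc⟩, hrc]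
  rwa [hentry] at hdvd

lemma injective_rowLattice_cellMatrix :
    Function.Injective fun A : LowerBlock n j → Fin q =>
      rowLattice (cellMatrix q fun s => ((A s : ℕ) : ℤ)) := by
  intro A A' h
  ext s
  have hdvd := dvd_sub_of_rowLattice_cellMatrix_eq h s
  have := (A s).2
  have := (A' s).2
  have := Int.eq_zero_of_abs_lt_dvd hdvd (by rw [abs_lt]; constructor <;> omega)
  omega

lemma card_fun_lowerBlock_le_card_latticeFinset (hj : j ≤ n) (hq : q ≠ 0) :
    Fintype.card (LowerBlock n j → Fin q) ≤ (latticeFinset n j q).card :=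
  Finset.card_le_card_of_injOn _
    (fun _ _ => (mem_latticeFinset hq).2 (rowLattice_cellMatrix_mem_latticeSet hj _))
    injective_rowLattice_cellMatrix.injOn

lemma isRescaledBasis_heckeDiagonal_mul_lowerUnipotent (hj : j < n) (hq : q ≠ 0)
    (T : LowerBlock n j → ℤ) : IsRescaledBasis j q (rowLattice (cellMatrix q T))
      (heckeDiagonal n j q * lowerUnipotent fun s => (T s : ℝ)) := by
  refine ⟨_, rfl, ?_⟩
  rw [Matrix.SpecialLinearGroup.coe_mul, coe_heckeDiagonal hj hq, coe_lowerUnipotent, cellMatrix,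
    map_intCast_mul, Matrix.smul_mul, map_one_add_lowerBlockMatrix_intCast]
  congr 2
  rw [diagonal_map Int.cast_zero]
  simp

end CellLattice

section HeckeOperator

variable {n j N : ℕ} {f : XSpace n → ℝ}

lemma expect_mk_latticeSL_mul_of_mem_Gamma (hn : n ≠ 0) (hN : N ≠ 0) {γ : SL(n, ℝ)}
    (hγ : γ ∈ Gamma n) (f : XSpace n → ℝ) :
    𝔼 L ∈ latticeFinset n j N, f (XSpace.mk (latticeSL j N L * γ)) =
      𝔼 L ∈ latticeFinset n j N, f (XSpace.mk (latticeSL j N L)) := by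
  obtain ⟨γ, rfl⟩ := hγ
  have hmaps (e : (Fin n → ℤ) ≃+ (Fin n → ℤ)) (L) (hL : L ∈ latticeFinset n j N) :
      L.map e.toAddMonoidHom ∈ latticeFinset n j N :=
    (mem_latticeFinset hN).2 (map_mem_latticeSet ((mem_latticeFinset hN).1 hL) e)
  have hinv (e : (Fin n → ℤ) ≃+ (Fin n → ℤ)) (L : AddSubgroup (Fin n → ℤ)) :
      (L.map e.toAddMonoidHom).map e.symm.toAddMonoidHom = L := by
    ext v
    simp [AddSubgroup.mem_map]
  refine Finset.expect_nbij' (fun L => L.map (vecMulEquiv γ).toAddMonoidHom)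
    (fun L => L.map (vecMulEquiv γ).symm.toAddMonoidHom) (hmaps _) (hmaps _)
    (fun L _ => hinv _ L) (fun L _ => hinv (vecMulEquiv γ).symm L) (fun L hL => congrArg f ?_)
  have hL' := (mem_latticeFinset hN).1 hL
  exact ((isRescaledBasis_latticeSL hn hN hL').mul_map_intCast γ).mk_eq
    (isRescaledBasis_latticeSL hn hN (map_mem_latticeSet hL' _))

/-- The Hecke operator `T_N`, which averages `f` over the points `Γ N^{-j/n} B g` for `B` running
through bases of the lattices of `L_{N,j}(n)`. -/
def heckeOperator (j N : ℕ) (f : XSpace n → ℝ) (x : XSpace n) : ℝ :=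
  𝔼 L ∈ latticeFinset n j N,
    f (XSpace.mk (latticeSL j N L * Function.surjInv XSpace.mk_surjective x))

lemma heckeOperator_mk (hn : n ≠ 0) (hN : N ≠ 0) (f : XSpace n → ℝ) (g : SL(n, ℝ)) :
    heckeOperator j N f (XSpace.mk g) =
      𝔼 L ∈ latticeFinset n j N, f (XSpace.mk (latticeSL j N L * g)) := by
  rw [heckeOperator]
  set g' := Function.surjInv XSpace.mk_surjective (XSpace.mk g)
  have hγ : g' * g⁻¹ ∈ Gamma n :=
    XSpace.mk_eq_mk_iff.1 (Function.surjInv_eq XSpace.mk_surjective (XSpace.mk g)).symm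
  have h := expect_mk_latticeSL_mul_of_mem_Gamma (j := j) hn hN hγ (fun x => f (x <• g))
  simpa only [XSpace.mk_op_smul, mul_assoc, inv_mul_cancel, mul_one] using h

lemma heckeOperator_op_smul (hn : n ≠ 0) (hN : N ≠ 0) (f : XSpace n → ℝ) (g : SL(n, ℝ))
    (x : XSpace n) :
    heckeOperator j N f (x <• g) = heckeOperator j N (fun y => f (y <• g)) x := by
  obtain ⟨h, rfl⟩ := XSpace.mk_surjective x
  simp only [XSpace.mk_op_smul, heckeOperator_mk hn hN, mul_assoc]

lemma heckeOperator_sub_const (hj : j ≤ n) (hN : N ≠ 0) (f : XSpace n → ℝ) (c : ℝ)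
    (x : XSpace n) : heckeOperator j N (fun y => f y - c) x = heckeOperator j N f x - c := by
  rw [heckeOperator, Finset.expect_sub_distrib, Finset.expect_const (latticeFinset_nonempty hj hN)]
  rfl

lemma abs_heckeOperator_le (f : XSpace n → ℝ) (x : XSpace n) :
    |heckeOperator j N f x| ≤ heckeOperator j N (fun y => |f y|) x :=
  Finset.abs_expect_le _ _

lemma abs_heckeOperator_sub_const_le (hj : j ≤ n) (hN : N ≠ 0) (f : XSpace n → ℝ) (c : ℝ)
    (x : XSpace n) : |heckeOperator j N f x - c| ≤ heckeOperator j N (fun y => |f y - c|) x :=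
  heckeOperator_sub_const hj hN f c x ▸ abs_heckeOperator_le _ x

lemma abs_heckeOperator_op_smul_sub_le (hj : j < n) (hN : N ≠ 0) {g : SL(n, ℝ)} {δ : ℝ}
    (hg : ∀ y, |f (y <• g) - f y| ≤ δ) (x : XSpace n) :
    |heckeOperator j N f (x <• g) - heckeOperator j N f x| ≤ δ := by
  rw [heckeOperator_op_smul hj.ne_bot hN]
  calc |heckeOperator j N (fun y => f (y <• g)) x - heckeOperator j N f x|
      = |heckeOperator j N (fun y => f (y <• g) - f y) x| :=
        congrArg _ (Finset.expect_sub_distrib _ _ _).symm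
    _ ≤ heckeOperator j N (fun y => |f (y <• g) - f y|) x := abs_heckeOperator_le _ x
    _ ≤ δ := Finset.expect_le (latticeFinset_nonempty hj.le hN) fun L _ => hg _

lemma heckeOperator_birkhoffAverage (hn : n ≠ 0) (hN : N ≠ 0) (f : XSpace n → ℝ) (u : SL(n, ℝ))
    (H : ℕ) (x : XSpace n) : heckeOperator j N (birkhoffAverage ℝ (· <• u) f H) x =
      birkhoffAverage ℝ (· <• u) (heckeOperator j N f) H x := by
  have hiter (b : ℕ) : (fun y : XSpace n => y <• u)^[b] = fun y => y <• u ^ b := by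
    rw [smul_iterate, op_pow]
  rw [heckeOperator, expect_birkhoffAverage, birkhoffAverage, birkhoffSum, smul_eq_mul]
  congr 1
  refine Finset.sum_congr rfl fun b _ => ?_
  rw [hiter, heckeOperator_op_smul hn hN]
  rfl

lemma RightUniform.heckeOperator (hj : j < n) (hN : N ≠ 0) (hf : RightUniform SL(n, ℝ) f) :
    RightUniform SL(n, ℝ) (heckeOperator j N f) := by
  have hn := hj.ne_bot
  have hne := latticeFinset_nonempty hj.le hN
  refine ⟨?_, ?_, Metric.tendstoUniformly_iff.2 fun ε hε => ?_⟩
  · rw [(XSpace.isOpenQuotientMap_mk n).isQuotientMap.continuous_iff]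
    have hcomp : _root_.heckeOperator j N f ∘ XSpace.mk = fun g =>
        𝔼 L ∈ latticeFinset n j N, f (XSpace.mk (latticeSL j N L * g)) :=
      funext (heckeOperator_mk hn hN f)
    rw [hcomp]
    simp only [Finset.expect_eq_sum_div_card]
    exact (continuous_finsetSum _ fun L _ => hf.continuous.comp
      (XSpace.continuous_mk.comp (continuous_const_mul _))).div_const _
  · obtain ⟨C, hC⟩ := hf.exists_bound
    exact ⟨C, fun x => (abs_heckeOperator_le f x).trans (Finset.expect_le hne fun L _ => hC _)⟩
  · filter_upwards [hf.eventually_abs_sub_lt (half_pos hε)] with g hg x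
    rw [dist_comm, Real.dist_eq]
    exact (abs_heckeOperator_op_smul_sub_le hj hN (fun y => (hg y).le) x).trans_lt
      (half_lt_self hε)

lemma exists_seq_ae_tendsto_of_tendsto_integral_abs_sub {X : Type*} [MeasurableSpace X]
    {μ : Measure X} {F : ℕ → X → ℝ} {G : X → ℝ} (hF : ∀ H, Integrable (F H) μ)
    (hG : Integrable G μ)
    (hlim : Tendsto (fun H => ∫ x, |F H x - G x| ∂μ) atTop (𝓝 0)) :
    ∃ ns : ℕ → ℕ, StrictMono ns ∧ ∀ᵐ x ∂μ, Tendsto (fun i => F (ns i) x) atTop (𝓝 (G x)) := by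
  refine (tendstoInMeasure_of_tendsto_eLpNorm one_ne_zero (fun H => (hF H).aestronglyMeasurable)
    hG.aestronglyMeasurable ?_).exists_seq_tendsto_ae
  have h := (ENNReal.continuous_ofReal.tendsto 0).comp hlim
  rw [ENNReal.ofReal_zero] at h
  refine h.congr fun H => ?_
  rw [eLpNorm_one_eq_lintegral_enorm, ← ofReal_integral_norm_eq_lintegral_enorm ((hF H).sub hG)]
  rfl

variable {μ : Measure (XSpace n)} [IsProbabilityMeasure μ]
  [SMulInvariantMeasure SL(n, ℝ)ᵐᵒᵖ (XSpace n) μ]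

-- Both constants are the a.e. limit of the Birkhoff averages of `T_N f`: the averages commute with
-- `T_N`, and left multiplication by a representative of `L` preserves Haar null sets.
theorem integral_heckeOperator (hj0 : 0 < j) (hj : j < n) (hN : N ≠ 0)
    (hf : RightUniform SL(n, ℝ) f) : ∫ x, heckeOperator j N f x ∂μ = ∫ x, f x ∂μ := by
  have hn := hj.ne_bot
  have hik : (⟨0, by omega⟩ : Fin n) ≠ ⟨j, hj⟩ := by simp [Fin.ext_iff, hj0.ne]
  set u : SL(n, ℝ) := SpecialLinearGroup.transvection hik (1 : ℝ)
  have hu : IsMautnerGenerating u := isMautnerGenerating_transvection hik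
  have hTf := hf.heckeOperator hj hN
  obtain ⟨ns, hns, hlim⟩ := exists_seq_ae_tendsto_of_tendsto_integral_abs_sub
    (fun H => (hf.birkhoffAverage u H).integrable μ) (integrable_const _)
    (tendsto_integral_abs_birkhoffAverage_sub hu (hf.memLp 2 μ))
  obtain ⟨ms, hms, hlimT⟩ := exists_seq_ae_tendsto_of_tendsto_integral_abs_sub
    (fun i => (hTf.birkhoffAverage u (ns i)).integrable μ) (integrable_const _)
    ((tendsto_integral_abs_birkhoffAverage_sub hu (hTf.memLp 2 μ)).comp hns.tendsto_atTop)
  have hae : ∀ᵐ g ∂(Measure.haar : Measure SL(n, ℝ)), ∀ L ∈ latticeFinset n j N,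
      Tendsto (fun i => birkhoffAverage ℝ (· <• u) f (ns i) (XSpace.mk (latticeSL j N L * g)))
        atTop (𝓝 (∫ x, f x ∂μ)) := by
    refine (Finset.eventually_all _).2 fun L _ => ?_
    exact ae_orbit_of_ae Measure.haar hlim (XSpace.mk (latticeSL j N L))
  obtain ⟨g, hg, hgT⟩ :=
    (hae.and (ae_orbit_of_ae Measure.haar hlimT (XSpace.mk (1 : SL(n, ℝ))))).exists
  rw [XSpace.mk_op_smul, one_mul] at hgT
  refine tendsto_nhds_unique hgT ?_
  simp only [← heckeOperator_birkhoffAverage hn hN, heckeOperator_mk hn hN,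
    Finset.expect_eq_sum_div_card]
  have hsum := (tendsto_finsetSum _ hg).div_const ((latticeFinset n j N).card : ℝ)
  rw [Finset.sum_const, nsmul_eq_mul, mul_div_cancel_left₀] at hsum
  · exact hsum.comp hms.tendsto_atTop
  · exact_mod_cast (latticeFinset_nonempty hj.le hN).card_ne_zero

end HeckeOperator

section SignedPermutation

variable {n : ℕ}

/-- The signs of a signed permutation matrix of determinant one: the first one is the sign of the
permutation, the others are positive. -/
def permSigns (σ : Equiv.Perm (Fin n)) (i : Fin n) : ℤˣ :=
  if (i : ℕ) = 0 then Equiv.Perm.sign σ else 1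

lemma prod_permSigns (σ : Equiv.Perm (Fin n)) : ∏ i, permSigns σ i = Equiv.Perm.sign σ := by
  cases n with
  | zero => simp [Subsingleton.elim σ 1]
  | succ n => simp [permSigns]

/-- A permutation matrix made unimodular by changing the sign of its first row if necessary. -/
def signedPerm (σ : Equiv.Perm (Fin n)) : SL(n, ℤ) :=
  ⟨diagonal (fun i => (permSigns σ i : ℤ)) * σ.permMatrix ℤ, by
    rw [det_mul, det_diagonal, det_permutation, ← Units.coe_prod, prod_permSigns]
    simp [← Units.val_mul, Int.units_mul_self]⟩

lemma map_signedPerm_mul {R m : Type*} [CommRing R] (σ : Equiv.Perm (Fin n))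
    (C : Matrix (Fin n) m R) :
    (signedPerm σ : Matrix (Fin n) (Fin n) ℤ).map (Int.cast : ℤ → R) * C =
      diagonal (fun i => ((permSigns σ i : ℤ) : R)) * C.submatrix σ id := by
  have hmap : (signedPerm σ : Matrix (Fin n) (Fin n) ℤ).map (Int.cast : ℤ → R) =
      diagonal (fun i => ((permSigns σ i : ℤ) : R)) * σ.permMatrix R := by
    ext i k
    simp [signedPerm, diagonal_mul, PEquiv.toMatrix_apply, apply_ite (Int.cast : ℤ → R)]
  rw [hmap, Matrix.mul_assoc, PEquiv.toMatrix_toPEquiv_mul]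

lemma isUnit_det_submatrix_map_signedPerm_mul {R m : Type*} [CommRing R] [Fintype m]
    [DecidableEq m] (σ : Equiv.Perm (Fin n)) (C : Matrix (Fin n) m R) (ρ : m → Fin n) :
    IsUnit (((signedPerm σ : Matrix (Fin n) (Fin n) ℤ).map (Int.cast : ℤ → R) * C).submatrix
      ρ id).det ↔ IsUnit (C.submatrix (σ ∘ ρ) id).det := by
  have hrows : ((signedPerm σ : Matrix (Fin n) (Fin n) ℤ).map (Int.cast : ℤ → R) * C).submatrix
      ρ id = of fun i k => ((permSigns σ (ρ i) : ℤ) : R) * C.submatrix (σ ∘ ρ) id i k := by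
    ext i k
    simp [map_signedPerm_mul]
  have hsigns : IsUnit (∏ i, ((permSigns σ (ρ i) : ℤ) : R)) :=
    (IsUnit.prod_univ_iff).2 fun i => (permSigns σ (ρ i)).isUnit.map (Int.castRingHom R)
  rw [hrows, det_mul_column, IsUnit.mul_iff, and_iff_right hsigns]

end SignedPermutation

section MaximalMinor

variable {n j : ℕ}

lemma exists_isUnit_det_submatrix_of_surjective_vecMul {K : Type*} [Field K]
    {C : Matrix (Fin n) (Fin j) K} (hC : Function.Surjective fun x => x ᵥ* C) :
    ∃ ρ : Fin j ↪ Fin n, IsUnit (C.submatrix ρ id).det := by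
  obtain ⟨κ, a, ha, hspan, hli⟩ := exists_linearIndependent' K C.row
  have htop : Submodule.span K (Set.range C.row) = ⊤ := by
    rw [eq_top_iff]
    rintro y -
    obtain ⟨x, rfl⟩ := hC y
    simp only [vecMul_eq_sum]
    exact Submodule.sum_mem _ fun i _ => Submodule.smul_mem _ _ (Submodule.subset_span ⟨i, rfl⟩)
  have b := Module.Basis.mk hli (by rw [hspan, htop])
  let e : Fin j ≃ κ := (Pi.basisFun K (Fin j)).indexEquiv b
  refine ⟨⟨a ∘ e, ha.comp e.injective⟩, ?_⟩
  rw [← isUnit_iff_isUnit_det, ← linearIndependent_rows_iff_isUnit]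
  exact hli.comp e e.injective

lemma exists_isUnit_det_submatrix_of_isLocalHom {R K : Type*} [CommRing R] [Field K] (π : R →+* K)
    [IsLocalHom π] (hπ : Function.Surjective π) {C : Matrix (Fin n) (Fin j) R}
    (hC : Function.Surjective fun x => x ᵥ* C) :
    ∃ ρ : Fin j ↪ Fin n, IsUnit (C.submatrix ρ id).det := by
  obtain ⟨ρ, hρ⟩ := exists_isUnit_det_submatrix_of_surjective_vecMul (C := C.map π) fun y => by
    choose z hz using fun c => hπ (y c)
    obtain ⟨x, rfl⟩ := hC z
    exact ⟨π ∘ x, funext fun c => (π.map_vecMul C x c).symm.trans (hz c)⟩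
  refine ⟨ρ, (isUnit_map_iff π _).1 ?_⟩
  rwa [π.map_det]

lemma isLocalHom_castHom_pow {p k : ℕ} (hp : p.Prime) (hk : k ≠ 0) :
    IsLocalHom (ZMod.castHom (dvd_pow_self p hk) (ZMod p)) := by
  have : NeZero (p ^ k) := ⟨pow_ne_zero k hp.ne_zero⟩
  refine ⟨fun d hd => ?_⟩
  rw [← ZMod.natCast_zmod_val d, map_natCast, ZMod.isUnit_iff_coprime] at hd
  rw [← ZMod.natCast_zmod_val d, ZMod.isUnit_iff_coprime]
  exact hd.pow_right k

end MaximalMinor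

section Cells

variable {n j q : ℕ}

lemma vecMulMod_vecMul (B : Matrix (Fin n) (Fin n) ℤ) (C : Matrix (Fin n) (Fin j) (ZMod q))
    (v : Fin n → ℤ) :
    vecMulMod C (v ᵥ* B) = vecMulMod (B.map (Int.cast : ℤ → ZMod q) * C) v := by
  rw [vecMulMod_apply, intCast_vecMul, vecMul_vecMul, vecMulMod_apply]

lemma ker_vecMulMod_mul (C : Matrix (Fin n) (Fin j) (ZMod q)) {U : Matrix (Fin j) (Fin j) (ZMod q)}
    (hU : IsUnit U) : (vecMulMod (C * U)).ker = (vecMulMod C).ker := by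
  ext v
  rw [AddMonoidHom.mem_ker, AddMonoidHom.mem_ker, vecMulMod_apply, ← vecMul_vecMul,
    ← vecMulMod_apply]
  exact map_eq_zero_iff U.vecMulLinear (vecMul_injective_of_isUnit hU)

lemma eq_cellCongruence (hj : j ≤ n) {C : Matrix (Fin n) (Fin j) (ZMod q)}
    (hC : C.submatrix (Fin.castLE hj) id = 1) :
    C = cellCongruence hj fun s => -C s.1.1 ⟨s.1.2, s.2.2⟩ := by
  ext i c
  rw [cellCongruence, submatrix_apply, id, Matrix.sub_apply, Matrix.one_apply]
  rcases lt_or_ge (i : ℕ) j with hi | hi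
  · rw [lowerBlockMatrix_apply_of_notMem _ (by simp [hi]), sub_zero]
    have hentry := congrFun (congrFun hC ⟨i, hi⟩) c
    rw [submatrix_apply, Matrix.one_apply] at hentry
    simpa [Fin.ext_iff] using hentry
  · have hic : i ≠ Fin.castLE hj c := fun h => by simp [h] at hi; omega
    rw [lowerBlockMatrix_apply_of_mem _ ⟨hi, c.2⟩, if_neg hic]
    simp

lemma exists_ker_vecMulMod_eq_rowLattice_cellMatrix [NeZero q] (hj : j ≤ n)
    {C : Matrix (Fin n) (Fin j) (ZMod q)} (hC : IsUnit (C.submatrix (Fin.castLE hj) id).det) :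
    ∃ A : LowerBlock n j → Fin q,
      (vecMulMod C).ker = rowLattice (cellMatrix q fun s => ((A s : ℕ) : ℤ)) := by
  set U := C.submatrix (Fin.castLE hj) id
  have hnorm := eq_cellCongruence (C := C * U⁻¹) hj (mul_nonsing_inv U hC)
  refine ⟨fun s => ⟨(-(C * U⁻¹) s.1.1 ⟨s.1.2, s.2.2⟩).val, ZMod.val_lt _⟩, ?_⟩
  rw [← ker_vecMulMod_mul C ((isUnit_nonsing_inv_iff).2 ((isUnit_iff_isUnit_det U).2 hC)),
    ← ker_vecMulMod_cellCongruence hj]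
  simpa using congrArg (fun D => (vecMulMod D).ker) hnorm

lemma exists_map_signedPerm_cellMatrix_eq (hj : j ≤ n) (hq : IsPrimePow q)
    {L : AddSubgroup (Fin n → ℤ)} (hL : L ∈ latticeSet q n j) :
    ∃ (σ : Equiv.Perm (Fin n)) (A : LowerBlock n j → Fin q),
      (rowLattice (cellMatrix q fun s => ((A s : ℕ) : ℤ))).map
        (vecMulEquiv (signedPerm σ)).toAddMonoidHom = L := by
  have : NeZero q := ⟨hq.ne_zero⟩
  obtain ⟨φ, hφ, rfl⟩ := mem_latticeSet_iff_exists_ker_eq.1 hL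
  obtain ⟨C, rfl⟩ := exists_vecMulMod_eq φ
  obtain ⟨ρ, hρ⟩ : ∃ ρ : Fin j ↪ Fin n, IsUnit (C.submatrix ρ id).det := by
    obtain ⟨p, k, hp, hk, rfl⟩ := (isPrimePow_nat_iff q).1 hq
    have : Fact p.Prime := ⟨hp⟩
    have := isLocalHom_castHom_pow hp hk.ne'
    refine exists_isUnit_det_submatrix_of_isLocalHom _
      (ZMod.castHom_surjective (dvd_pow_self p hk.ne')) fun y => ?_
    obtain ⟨v, rfl⟩ := hφ y
    exact ⟨_, rfl⟩
  have := Equiv.Perm.isMultiplyPretransitive (Fin n) j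
  obtain ⟨σ, rfl⟩ := MulAction.exists_smul_eq (Equiv.Perm (Fin n)) (Fin.castLEEmb hj) ρ
  obtain ⟨A, hA⟩ := exists_ker_vecMulMod_eq_rowLattice_cellMatrix hj
    (C := (signedPerm σ : Matrix (Fin n) (Fin n) ℤ).map (Int.cast : ℤ → ZMod q) * C) <| by
      rwa [isUnit_det_submatrix_map_signedPerm_mul]
  refine ⟨σ, A, ?_⟩
  rw [← hA]
  ext v
  rw [AddSubgroup.mem_map_equiv, AddMonoidHom.mem_ker, ← vecMulMod_vecMul, ← vecMulEquiv_apply,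
    AddEquiv.apply_symm_apply, AddMonoidHom.mem_ker]

end Cells

section PrimePowers

variable {n j N q : ℕ} {f : XSpace n → ℝ}

lemma expect_le_sum_expect_of_forall_exists_eq {ι κ α : Type*} [Fintype ι] [Fintype κ] [Nonempty κ]
    {s : Finset α} {F : α → ℝ} (hF : ∀ a, 0 ≤ F a) (e : ι → κ → α)
    (he : ∀ a ∈ s, ∃ i k, e i k = a) (hcard : Fintype.card κ ≤ s.card) :
    𝔼 a ∈ s, F a ≤ ∑ i, 𝔼 k, F (e i k) := by
  classical
  have hsum : ∑ a ∈ s, F a ≤ ∑ x : ι × κ, F (e x.1 x.2) := by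
    have he' (a : s) : ∃ x : ι × κ, e x.1 x.2 = a :=
      let ⟨i, k, h⟩ := he a a.2; ⟨(i, k), h⟩
    choose x hx using he'
    have hinj : Function.Injective x := fun a b h => Subtype.ext (by rw [← hx, ← hx b, h])
    rw [← Finset.sum_coe_sort]
    calc ∑ a : s, F a = ∑ a : s, F (e (x a).1 (x a).2) := by simp only [hx]
      _ = ∑ y ∈ Finset.univ.image x, F (e y.1 y.2) := by
          rw [Finset.sum_image hinj.injOn]
      _ ≤ _ := Finset.sum_le_univ_sum_of_nonneg fun y => hF _
  simp only [Finset.expect_eq_sum_div_card, ← Finset.sum_div, Finset.card_univ]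
  rw [← Fintype.sum_prod_type']
  have hpos : (0 : ℝ) < Fintype.card κ := by exact_mod_cast Fintype.card_pos
  exact div_le_div₀ (Finset.sum_nonneg fun _ _ => hF _) hsum hpos (by exact_mod_cast hcard)

lemma heckeOperator_mk_one_le_sum_horosphereAverage (hj : j < n) (hq : IsPrimePow q)
    (hf : ∀ x, 0 ≤ f x) :
    heckeOperator j q f (XSpace.mk 1) ≤ ∑ σ : Equiv.Perm (Fin n), horosphereAverage j
      (fun x => f (x <• SpecialLinearGroup.map (Int.castRingHom ℝ) (signedPerm σ))) q := by
  have hq0 := hq.ne_zero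
  have : NeZero q := ⟨hq0⟩
  have hpoint (σ : Equiv.Perm (Fin n)) (A : LowerBlock n j → Fin q) :
      XSpace.mk (latticeSL j q ((rowLattice (cellMatrix q fun s => ((A s : ℕ) : ℤ))).map
          (vecMulEquiv (signedPerm σ)).toAddMonoidHom)) =
        XSpace.mk (heckeDiagonal n j q * lowerUnipotent fun s => ((A s : ℕ) : ℝ)) <•
          SpecialLinearGroup.map (Int.castRingHom ℝ) (signedPerm σ) := by
    rw [XSpace.mk_op_smul]
    have hcell := (isRescaledBasis_heckeDiagonal_mul_lowerUnipotent hj hq0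
      fun s => ((A s : ℕ) : ℤ)).mul_map_intCast (signedPerm σ)
    simp only [Int.cast_natCast] at hcell
    exact (isRescaledBasis_latticeSL hj.ne_bot hq0 (map_mem_latticeSet
      (rowLattice_cellMatrix_mem_latticeSet hj.le _) _)).mk_eq hcell
  simp only [heckeOperator_mk hj.ne_bot hq0, mul_one, horosphereAverage, ← hpoint]
  exact expect_le_sum_expect_of_forall_exists_eq
    (F := fun L => f (XSpace.mk (latticeSL j q L))) (fun _ => hf _) _
    (fun L hL => exists_map_signedPerm_cellMatrix_eq hj.le hq ((mem_latticeFinset hq0).1 hL))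
    (card_fun_lowerBlock_le_card_latticeFinset hj.le hq0)

lemma transvection_one_mem_Gamma {i k : Fin n} (hik : i ≠ k) :
    SpecialLinearGroup.transvection hik (1 : ℝ) ∈ Gamma n := by
  refine mem_Gamma_of_coe_eq_map_intCast (1 + single i k 1) ?_
  ext a b
  simp [SpecialLinearGroup.transvection, transvection, Matrix.one_apply, single_apply]

lemma heckeOperator_birkhoffAverage_mk_one (hn : n ≠ 0) (hN : N ≠ 0) (f : XSpace n → ℝ)
    {γ : SL(n, ℝ)} (hγ : γ ∈ Gamma n) {H : ℕ} (hH : H ≠ 0) :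
    heckeOperator j N (birkhoffAverage ℝ (· <• γ) f H) (XSpace.mk 1) =
      heckeOperator j N f (XSpace.mk 1) := by
  rw [heckeOperator_birkhoffAverage hn hN]
  refine Function.IsFixedPt.birkhoffAverage_eq ℝ ?_ _ (Nat.cast_ne_zero.2 hH)
  rw [Function.IsFixedPt, XSpace.mk_op_smul, one_mul]
  simpa using XSpace.mk_mul_of_mem_Gamma hγ 1

/-- The filter of prime powers tending to infinity. -/
def atTopPrimePow : Filter ℕ := atTop ⊓ 𝓟 {q | IsPrimePow q}

lemma eventually_isPrimePow : ∀ᶠ q in atTopPrimePow, IsPrimePow q :=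
  mem_inf_of_right (mem_principal_self _)

variable {μ : Measure (XSpace n)} [IsProbabilityMeasure μ]
  [SMulInvariantMeasure SL(n, ℝ)ᵐᵒᵖ (XSpace n) μ]

-- `T_q` evaluated at the base point is `Γ`-invariant, so `f` may be replaced by its Birkhoff
-- averages along a transvection in `Γ`; these are close to the constant `∫ f` in `L¹`, and
-- the sum over the cells only costs a factor `n!`.
theorem tendsto_heckeOperator_mk_one_atTopPrimePow (hj0 : 0 < j) (hj : j < n)
    (hf : RightUniform SL(n, ℝ) f) :
    Tendsto (fun q => heckeOperator j q f (XSpace.mk 1)) atTopPrimePow (𝓝 (∫ x, f x ∂μ)) := by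
  have hn := hj.ne_bot
  have hik : (⟨0, by omega⟩ : Fin n) ≠ ⟨j, hj⟩ := by simp [Fin.ext_iff, hj0.ne]
  set u : SL(n, ℝ) := SpecialLinearGroup.transvection hik (1 : ℝ)
  set c := ∫ x, f x ∂μ
  have hmean := (tendsto_integral_abs_birkhoffAverage_sub (isMautnerGenerating_transvection hik)
    (hf.memLp 2 μ)).const_mul (Fintype.card (Equiv.Perm (Fin n)) : ℝ)
  rw [mul_zero] at hmean
  refine Metric.tendsto_nhds.2 fun ε hε => ?_
  obtain ⟨H, hHlt, hH⟩ := ((hmean.eventually_lt_const hε).and (eventually_ne_atTop 0)).exists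
  set F : XSpace n → ℝ := fun x => |birkhoffAverage ℝ (· <• u) f H x - c|
  have hF : RightUniform SL(n, ℝ) F := ((hf.birkhoffAverage u H).sub (.const c)).abs
  have hcells : Tendsto (fun q => ∑ σ : Equiv.Perm (Fin n), horosphereAverage j
      (fun x => F (x <• SpecialLinearGroup.map (Int.castRingHom ℝ) (signedPerm σ))) q) atTop
      (𝓝 (Fintype.card (Equiv.Perm (Fin n)) * ∫ x, F x ∂μ)) := by
    rw [← nsmul_eq_mul, ← Finset.card_univ, ← Finset.sum_const]
    refine tendsto_finsetSum _ fun σ _ => ?_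
    rw [← integral_smul_eq_self F
      (g := op (SpecialLinearGroup.map (Int.castRingHom ℝ) (signedPerm σ)))]
    exact tendsto_horosphereAverage hj0 hj (hF.translate _)
  filter_upwards [(hcells.eventually_lt_const hHlt).filter_mono inf_le_left,
    eventually_isPrimePow] with q hlt hq
  rw [Real.dist_eq, ← heckeOperator_birkhoffAverage_mk_one hn hq.ne_zero f
    (transvection_one_mem_Gamma hik) hH]
  calc _ ≤ heckeOperator j q F (XSpace.mk 1) :=
        abs_heckeOperator_sub_const_le hj.le hq.ne_zero _ c _
    _ ≤ _ := heckeOperator_mk_one_le_sum_horosphereAverage hj hq fun _ => abs_nonneg _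
    _ < ε := hlt

lemma tendsto_heckeOperator_atTopPrimePow (hj0 : 0 < j) (hj : j < n)
    (hf : RightUniform SL(n, ℝ) f) (x : XSpace n) :
    Tendsto (fun q => heckeOperator j q f x) atTopPrimePow (𝓝 (∫ y, f y ∂μ)) := by
  obtain ⟨g, rfl⟩ := XSpace.mk_surjective x
  rw [← integral_smul_eq_self f (g := op g)]
  refine (tendsto_heckeOperator_mk_one_atTopPrimePow hj0 hj (hf.translate g)).congr' ?_
  filter_upwards [eventually_isPrimePow] with q hq
  rw [← heckeOperator_op_smul hj.ne_bot hq.ne_zero, XSpace.mk_op_smul, one_mul]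

lemma tendsto_integral_abs_heckeOperator_sub_atTopPrimePow (hj0 : 0 < j) (hj : j < n)
    (hf : RightUniform SL(n, ℝ) f) :
    Tendsto (fun q => ∫ x, |heckeOperator j q f x - ∫ y, f y ∂μ| ∂μ) atTopPrimePow (𝓝 0) := by
  set c := ∫ y, f y ∂μ
  obtain ⟨C, hC⟩ := hf.exists_bound
  have : IsCountablyGenerated atTopPrimePow := by rw [atTopPrimePow]; infer_instance
  rw [← integral_zero (XSpace n) ℝ (μ := μ)]
  refine tendsto_integral_filter_of_dominated_convergence (fun _ => C + |c|) ?_ ?_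
    (integrable_const _) (ae_of_all _ fun x => ?_)
  · filter_upwards [eventually_isPrimePow] with q hq
    exact (((hf.heckeOperator hj hq.ne_zero).sub (.const c)).abs.integrable μ).aestronglyMeasurable
  · filter_upwards [eventually_isPrimePow] with q hq
    refine ae_of_all _ fun x => ?_
    rw [Real.norm_eq_abs, abs_abs]
    refine (abs_heckeOperator_sub_const_le hj.le hq.ne_zero f c x).trans ?_
    exact Finset.expect_le (latticeFinset_nonempty hj.le hq.ne_zero) fun L _ =>
      (abs_sub _ _).trans (add_le_add_left (hC _) _)
  · simpa [c] using ((tendsto_heckeOperator_atTopPrimePow (μ := μ) hj0 hj hf x).sub_const c).abs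

end PrimePowers

section Multiplicativity

variable {n j M N q : ℕ} {L L' L₁ L₂ : AddSubgroup (Fin n → ℤ)} {B : Matrix (Fin n) (Fin n) ℤ}

lemma zsmul_mem_iff_of_isCoprime {A : Type*} [AddCommGroup A] {K : AddSubgroup A} {a b : ℤ}
    (hab : IsCoprime a b) {v : A} (hb : b • v ∈ K) : a • v ∈ K ↔ v ∈ K := by
  refine ⟨fun ha => ?_, fun hv => K.zsmul_mem hv a⟩
  obtain ⟨s, t, hst⟩ := hab
  rw [← one_zsmul v, ← hst, add_zsmul, mul_zsmul, mul_zsmul]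
  exact K.add_mem (K.zsmul_mem ha s) (K.zsmul_mem hb t)

lemma surjective_prod_of_isCoprime {A A₁ A₂ : Type*} [AddCommGroup A] [AddCommGroup A₁]
    [AddCommGroup A₂] {φ : A →+ A₁} {ψ : A →+ A₂} (hφ : Function.Surjective φ)
    (hψ : Function.Surjective ψ) {a b : ℤ} (hab : IsCoprime a b) (ha : ∀ x : A₁, a • x = 0)
    (hb : ∀ y : A₂, b • y = 0) : Function.Surjective (φ.prod ψ) := by
  rintro ⟨x, y⟩
  obtain ⟨v, rfl⟩ := hφ x
  obtain ⟨w, rfl⟩ := hψ y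
  obtain ⟨s, t, hst⟩ := hab
  have hs : s * a = 1 - t * b := by linarith
  have ht : t * b = 1 - s * a := by linarith
  refine ⟨(t * b) • v + (s * a) • w, Prod.ext ?_ ?_⟩
  · simp [ht, sub_zsmul, mul_zsmul, ha]
  · simp [hs, sub_zsmul, mul_zsmul, hb]

lemma natCast_zsmul_zmod_pi (N : ℕ) (x : Fin j → ZMod N) : (N : ℤ) • x = 0 := by
  ext c
  simp

lemma natCast_zsmul_mem (hL : L ∈ latticeSet N n j) (v : Fin n → ℤ) : (N : ℤ) • v ∈ L := by
  obtain ⟨φ, -, rfl⟩ := mem_latticeSet_iff_exists_ker_eq.1 hL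
  rw [AddMonoidHom.mem_ker, map_zsmul, natCast_zsmul_zmod_pi]

lemma zsmul_mem_iff_of_mem_latticeSet (hL : L ∈ latticeSet N n j) {a : ℤ} (ha : IsCoprime a N)
    {v : Fin n → ℤ} : a • v ∈ L ↔ v ∈ L :=
  zsmul_mem_iff_of_isCoprime ha (natCast_zsmul_mem hL v)

lemma vecMul_adjugate_vecMul (B : Matrix (Fin n) (Fin n) ℤ) (v : Fin n → ℤ) :
    (v ᵥ* B.adjugate) ᵥ* B = B.det • v := by
  rw [vecMul_vecMul, adjugate_mul, vecMul_smul, vecMul_one]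

lemma comap_vecMul_mem_latticeSet (hB : IsCoprime B.det N) (hL : L ∈ latticeSet N n j) :
    L.comap B.vecMulLinear.toAddMonoidHom ∈ latticeSet N n j := by
  obtain ⟨φ, hφ, rfl⟩ := mem_latticeSet_iff_exists_ker_eq.1 hL
  refine mem_latticeSet_iff_exists_ker_eq.2
    ⟨φ.comp B.vecMulLinear.toAddMonoidHom, fun y => ?_, (AddMonoidHom.comap_ker φ _).symm⟩
  obtain ⟨s, t, hst⟩ := hB
  obtain ⟨v, hv⟩ := hφ (s • y)
  refine ⟨v ᵥ* B.adjugate, ?_⟩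
  calc φ ((v ᵥ* B.adjugate) ᵥ* B) = (s * B.det) • y := by
        rw [vecMul_adjugate_vecMul, map_zsmul, hv, ← mul_zsmul']
    _ = (1 - t * N) • y := by rw [← hst, add_sub_cancel_right]
    _ = y := by rw [sub_zsmul, mul_zsmul, natCast_zsmul_zmod_pi, smul_zero, neg_zero, add_zero,
        one_zsmul]

lemma eq_of_comap_vecMul_eq (hB : IsCoprime B.det N) (hL : L ∈ latticeSet N n j)
    (hL' : L' ∈ latticeSet N n j)
    (h : L.comap B.vecMulLinear.toAddMonoidHom = L'.comap B.vecMulLinear.toAddMonoidHom) :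
    L = L' := by
  ext v
  rw [← zsmul_mem_iff_of_mem_latticeSet hL hB, ← zsmul_mem_iff_of_mem_latticeSet hL' hB,
    ← vecMul_adjugate_vecMul]
  exact SetLike.ext_iff.1 h (v ᵥ* B.adjugate)

lemma expect_comap_vecMul (hN : N ≠ 0) (hB : IsCoprime B.det N)
    (F : AddSubgroup (Fin n → ℤ) → ℝ) :
    𝔼 L ∈ latticeFinset n j N, F (L.comap B.vecMulLinear.toAddMonoidHom) =
      𝔼 L ∈ latticeFinset n j N, F L := by
  have hmaps : ∀ L ∈ latticeFinset n j N,
      L.comap B.vecMulLinear.toAddMonoidHom ∈ latticeFinset n j N := fun L hL =>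
    (mem_latticeFinset hN).2 (comap_vecMul_mem_latticeSet hB ((mem_latticeFinset hN).1 hL))
  have hinj : Set.InjOn (fun L => L.comap B.vecMulLinear.toAddMonoidHom)
      (latticeFinset n j N : Set (AddSubgroup (Fin n → ℤ))) := fun L hL L' hL' =>
    eq_of_comap_vecMul_eq hB ((mem_latticeFinset hN).1 hL) ((mem_latticeFinset hN).1 hL')
  exact Finset.expect_nbij _ hmaps (fun _ _ => rfl) hinj
    (Finset.surjOn_of_injOn_of_card_le _ hmaps hinj le_rfl)

/-- The Chinese remainder isomorphism, in each coordinate. -/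
def chineseRemainderPi (j : ℕ) (hc : M.Coprime q) :
    (Fin j → ZMod (M * q)) ≃+ (Fin j → ZMod M) × (Fin j → ZMod q) :=
  (AddEquiv.piCongrRight fun _ => (ZMod.chineseRemainder hc).toAddEquiv).trans
    { Equiv.arrowProdEquivProdArrow _ _ _ with map_add' := fun _ _ => rfl }

lemma inf_mem_latticeSet (hc : M.Coprime q) (h₁ : L₁ ∈ latticeSet M n j)
    (h₂ : L₂ ∈ latticeSet q n j) : L₁ ⊓ L₂ ∈ latticeSet (M * q) n j := by
  obtain ⟨φ, hφ, rfl⟩ := mem_latticeSet_iff_exists_ker_eq.1 h₁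
  obtain ⟨ψ, hψ, rfl⟩ := mem_latticeSet_iff_exists_ker_eq.1 h₂
  have hsurj := surjective_prod_of_isCoprime hφ hψ (Nat.isCoprime_iff_coprime.2 hc)
    (natCast_zsmul_zmod_pi M) (natCast_zsmul_zmod_pi q)
  rw [← AddMonoidHom.ker_prod]
  exact ⟨(QuotientAddGroup.quotientKerEquivOfSurjective _ hsurj).trans
    (chineseRemainderPi j hc).symm⟩

lemma exists_inf_eq_of_mem_latticeSet (hc : M.Coprime q) (hL : L ∈ latticeSet (M * q) n j) :
    ∃ L₁ ∈ latticeSet M n j, ∃ L₂ ∈ latticeSet q n j, L₁ ⊓ L₂ = L := by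
  obtain ⟨φ, hφ, rfl⟩ := mem_latticeSet_iff_exists_ker_eq.1 hL
  let Φ := (chineseRemainderPi j hc).toAddMonoidHom.comp φ
  have hΦ : Function.Surjective Φ := (chineseRemainderPi j hc).surjective.comp hφ
  refine ⟨((AddMonoidHom.fst _ _).comp Φ).ker, mem_latticeSet_iff_exists_ker_eq.2
      ⟨_, Prod.fst_surjective.comp hΦ, rfl⟩,
    ((AddMonoidHom.snd _ _).comp Φ).ker, mem_latticeSet_iff_exists_ker_eq.2
      ⟨_, Prod.snd_surjective.comp hΦ, rfl⟩, ?_⟩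
  rw [← AddMonoidHom.ker_prod, AddMonoidHom.prod_unique Φ]
  exact AddMonoidHom.ker_addEquiv_comp φ (chineseRemainderPi j hc)

lemma natCast_zsmul_mem_inf_iff (hc : M.Coprime q) (h₁ : L₁ ∈ latticeSet M n j)
    (h₂ : L₂ ∈ latticeSet q n j) {v : Fin n → ℤ} : (q : ℤ) • v ∈ L₁ ⊓ L₂ ↔ v ∈ L₁ := by
  rw [AddSubgroup.mem_inf, and_iff_left (natCast_zsmul_mem h₂ v),
    zsmul_mem_iff_of_mem_latticeSet h₁ (Nat.isCoprime_iff_coprime.2 hc.symm)]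

lemma eq_of_inf_eq_inf (hc : M.Coprime q) {L₁' L₂' : AddSubgroup (Fin n → ℤ)}
    (h₁ : L₁ ∈ latticeSet M n j) (h₂ : L₂ ∈ latticeSet q n j) (h₁' : L₁' ∈ latticeSet M n j)
    (h₂' : L₂' ∈ latticeSet q n j) (h : L₁ ⊓ L₂ = L₁' ⊓ L₂') : L₁ = L₁' := by
  ext v
  rw [← natCast_zsmul_mem_inf_iff hc h₁ h₂, h, natCast_zsmul_mem_inf_iff hc h₁' h₂']

lemma expect_inf (hM : M ≠ 0) (hq : q ≠ 0) (hc : M.Coprime q)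
    (F : AddSubgroup (Fin n → ℤ) → ℝ) :
    𝔼 L₁ ∈ latticeFinset n j M, 𝔼 L₂ ∈ latticeFinset n j q, F (L₁ ⊓ L₂) =
      𝔼 L ∈ latticeFinset n j (M * q), F L := by
  have hMq := mul_ne_zero hM hq
  rw [← Finset.expect_product']
  refine Finset.expect_nbij (fun K => K.1 ⊓ K.2) ?_ (fun _ _ => rfl) ?_ ?_
  · rintro ⟨L₁, L₂⟩ h
    simp only [Finset.mem_product, mem_latticeFinset hM, mem_latticeFinset hq,
      mem_latticeFinset hMq] at h ⊢
    exact inf_mem_latticeSet hc h.1 h.2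
  · rintro ⟨L₁, L₂⟩ h ⟨L₁', L₂'⟩ h' heq
    simp only [Finset.mem_coe, Finset.mem_product, mem_latticeFinset hM,
      mem_latticeFinset hq] at h h'
    refine Prod.ext (eq_of_inf_eq_inf hc h.1 h.2 h'.1 h'.2 heq) ?_
    exact eq_of_inf_eq_inf hc.symm h.2 h.1 h'.2 h'.1 (by simpa only [inf_comm] using heq)
  · intro L hL
    obtain ⟨L₁, h₁, L₂, h₂, h⟩ :=
      exists_inf_eq_of_mem_latticeSet hc ((mem_latticeFinset hMq).1 (Finset.mem_coe.1 hL))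
    refine ⟨(L₁, L₂), ?_, h⟩
    simpa only [Finset.mem_coe, Finset.mem_product, mem_latticeFinset hM, mem_latticeFinset hq]
      using ⟨h₁, h₂⟩

lemma IsRescaledBasis.mul_of_coe_eq {g₁ g₂ : SL(n, ℝ)}
    (h₁ : (g₁ : Matrix (Fin n) (Fin n) ℝ) =
      (M : ℝ) ^ (-(j : ℝ) / (n : ℝ)) • B.map (Int.cast : ℤ → ℝ))
    (h₂ : IsRescaledBasis j q L g₂) :
    IsRescaledBasis j (M * q) (L.map B.vecMulLinear.toAddMonoidHom) (g₂ * g₁) := by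
  obtain ⟨C, rfl, hC⟩ := h₂
  refine ⟨C * B, rowLattice_mul C B, ?_⟩
  rw [Matrix.SpecialLinearGroup.coe_mul, hC, h₁, Matrix.smul_mul, Matrix.mul_smul, smul_smul,
    map_intCast_mul, Nat.cast_mul, Real.mul_rpow (Nat.cast_nonneg _) (Nat.cast_nonneg _), mul_comm]

lemma range_toAddMonoidHom_vecMulLinear (B : Matrix (Fin n) (Fin n) ℤ) :
    B.vecMulLinear.toAddMonoidHom.range = rowLattice B := by
  ext v
  rw [mem_rowLattice]
  rfl

-- A basis of `L₁ ⊓ L₂` is `C * B` with `B` a basis of `L₁` and `C` one of the preimage of `L₂`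
-- under `B`; as `det B` is prime to `q`, this preimage runs through `L_{q,j}(n)` along with `L₂`.
theorem heckeOperator_heckeOperator (hn : n ≠ 0) (hM : M ≠ 0) (hq : q ≠ 0) (hc : M.Coprime q)
    (f : XSpace n → ℝ) (x : XSpace n) :
    heckeOperator j M (heckeOperator j q f) x = heckeOperator j (M * q) f x := by
  have hMq := mul_ne_zero hM hq
  obtain ⟨g, rfl⟩ := XSpace.mk_surjective x
  rw [heckeOperator_mk hn hM, heckeOperator_mk hn hMq, ← expect_inf hM hq hc]
  refine Finset.expect_congr rfl fun L₁ hL₁ => ?_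
  rw [mem_latticeFinset hM] at hL₁
  obtain ⟨B, hB, hg⟩ := isRescaledBasis_latticeSL hn hM hL₁
  have hdet : IsCoprime B.det q := by
    rw [det_eq_of_coe_eq_smul_map hn hM hg]
    exact (Nat.isCoprime_iff_coprime.2 hc).pow_left
  rw [heckeOperator_mk hn hq, ← expect_comap_vecMul hq hdet]
  refine Finset.expect_congr rfl fun L₂ hL₂ => ?_
  rw [mem_latticeFinset hq] at hL₂
  have hbasis := IsRescaledBasis.mul_of_coe_eq hg
    (isRescaledBasis_latticeSL hn hq (comap_vecMul_mem_latticeSet hdet hL₂))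
  rw [AddSubgroup.map_comap_eq, range_toAddMonoidHom_vecMulLinear, hB] at hbasis
  have hmk := hbasis.mk_eq (isRescaledBasis_latticeSL hn hMq (inf_mem_latticeSet hc hL₁ hL₂))
  rw [← mul_assoc, ← XSpace.mk_op_smul, hmk, XSpace.mk_op_smul]

end Multiplicativity

section Convergence

variable {n j M q : ℕ} {f : XSpace n → ℝ}

lemma dvd_factorial_of_forall_ordProj_le {N Q : ℕ} (hN : N ≠ 0)
    (h : ∀ p, p.Prime → p ∣ N → ordProj[p] N ≤ Q) : N ∣ Q.factorial := by
  rw [Nat.dvd_iff_prime_pow_dvd_dvd]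
  intro p k hp hk
  rcases eq_or_ne k 0 with rfl | hk0
  · exact one_dvd _
  have hle : p ^ k ≤ ordProj[p] N :=
    Nat.pow_le_pow_right hp.pos ((hp.pow_dvd_iff_le_factorization hN).1 hk)
  exact Nat.dvd_factorial (pow_pos hp.pos k) (hle.trans (h p hp ((dvd_pow_self p hk0).trans hk)))

lemma eventually_exists_coprime_mul_eq {P : ℕ → Prop} (hP : ∀ᶠ q in atTopPrimePow, P q) :
    ∀ᶠ N : ℕ in atTop, ∃ M q, M ≠ 0 ∧ M.Coprime q ∧ P q ∧ M * q = N := by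
  rw [atTopPrimePow, eventually_inf_principal, eventually_atTop] at hP
  obtain ⟨Q, hQ⟩ := hP
  filter_upwards [eventually_gt_atTop Q.factorial] with N hN
  have hN0 := Nat.ne_zero_of_lt hN
  have hndvd : ¬ N ∣ Q.factorial := fun h => (Nat.le_of_dvd Q.factorial_pos h).not_gt hN
  obtain ⟨p, hp, hpN, hlt⟩ : ∃ p, p.Prime ∧ p ∣ N ∧ Q < ordProj[p] N := by
    contrapose! hndvd
    exact dvd_factorial_of_forall_ordProj_le hN0 hndvd
  refine ⟨ordCompl[p] N, ordProj[p] N, (Nat.ordCompl_pos p hN0).ne',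
    ((Nat.coprime_ordCompl hp hN0).pow_left _).symm, hQ _ hlt.le ?_,
    (mul_comm _ _).trans (Nat.ordProj_mul_ordCompl_eq_self N p)⟩
  exact hp.isPrimePow.pow (hp.factorization_pos_of_dvd hN0 hpN).ne'

lemma heckeOperator_zero (f : XSpace n → ℝ) (x : XSpace n) : heckeOperator j 0 f x = 0 := by
  simp [heckeOperator, latticeFinset]

lemma equicontinuous_heckeOperator (hj : j < n) (hf : RightUniform SL(n, ℝ) f) :
    Equicontinuous fun N => heckeOperator j N f := by
  refine fun x => Metric.equicontinuousAt_iff_right.2 fun ε hε => ?_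
  have himage := (XSpace.isOpenQuotientMap_orbit x).isOpenMap.image_mem_nhds
    (hf.eventually_abs_sub_lt (half_pos hε))
  rw [op_one, one_smul] at himage
  filter_upwards [himage]
  rintro _ ⟨g, hg, rfl⟩ N
  rcases eq_or_ne N 0 with rfl | hN
  · simpa only [heckeOperator_zero, dist_self] using hε
  rw [dist_comm, Real.dist_eq]
  exact (abs_heckeOperator_op_smul_sub_le hj hN (fun y => (hg y).le) x).trans_lt (half_lt_self hε)

-- If `F i x₀` stays away from `c`, so does `F i` on a fixed neighbourhood of `x₀`, which has
-- positive measure.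
lemma tendsto_of_tendsto_integral_abs_sub_of_equicontinuousAt {ι X : Type*} {l : Filter ι}
    [TopologicalSpace X] [MeasurableSpace X] {μ : Measure X} [IsFiniteMeasure μ]
    [μ.IsOpenPosMeasure] {F : ι → X → ℝ} {c : ℝ} {x₀ : X} (hF : EquicontinuousAt F x₀)
    (hint : ∀ᶠ i in l, Integrable (fun x => |F i x - c|) μ)
    (hlim : Tendsto (fun i => ∫ x, |F i x - c| ∂μ) l (𝓝 0)) :
    Tendsto (fun i => F i x₀) l (𝓝 c) := by
  refine Metric.tendsto_nhds.2 fun ε hε => ?_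
  obtain hU := Metric.equicontinuousAt_iff_right.1 hF (ε / 2) (half_pos hε)
  set U := {x | ∀ i, dist (F i x₀) (F i x) < ε / 2}
  have hpos : 0 < μ.real U :=
    ENNReal.toReal_pos (Measure.measure_pos_of_mem_nhds μ hU).ne' (measure_ne_top μ U)
  filter_upwards [hint, hlim.eventually_lt_const (mul_pos (half_pos hε) hpos)] with i hint hi
  by_contra! hfar
  rw [Real.dist_eq] at hfar
  have hsub : U ⊆ {x | ε / 2 ≤ |F i x - c|} := fun x hx => by
    have hnear := hx i
    rw [Real.dist_eq] at hnear
    have htri := abs_sub_le (F i x₀) (F i x) c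
    exact sub_half ε ▸ sub_le_iff_le_add'.2 (hfar.trans (htri.trans (add_le_add_left hnear.le _)))
  refine hi.not_ge ?_
  calc ε / 2 * μ.real U ≤ ε / 2 * μ.real {x | ε / 2 ≤ |F i x - c|} :=
        mul_le_mul_of_nonneg_left (measureReal_mono hsub) (half_pos hε).le
    _ ≤ ∫ x, |F i x - c| ∂μ :=
        mul_meas_ge_le_integral_of_nonneg (ae_of_all _ fun x => abs_nonneg _) hint _

variable {μ : Measure (XSpace n)} [IsProbabilityMeasure μ]

lemma RightUniform.integrable_abs_heckeOperator_sub {N : ℕ} (hj : j < n) (hN : N ≠ 0)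
    (hf : RightUniform SL(n, ℝ) f) (c : ℝ) :
    Integrable (fun x => |_root_.heckeOperator j N f x - c|) μ :=
  ((hf.heckeOperator hj hN).sub (.const c)).abs.integrable μ

variable [SMulInvariantMeasure SL(n, ℝ)ᵐᵒᵖ (XSpace n) μ]

lemma integral_abs_heckeOperator_mul_sub_le (hj0 : 0 < j) (hj : j < n) (hM : M ≠ 0) (hq : q ≠ 0)
    (hc : M.Coprime q) (hf : RightUniform SL(n, ℝ) f) (c : ℝ) :
    ∫ x, |heckeOperator j (M * q) f x - c| ∂μ ≤ ∫ x, |heckeOperator j q f x - c| ∂μ := by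
  have hq' := ((hf.heckeOperator hj hq).sub (.const c)).abs
  rw [← integral_heckeOperator hj0 hj hM hq']
  refine integral_mono (hf.integrable_abs_heckeOperator_sub hj (mul_ne_zero hM hq) c)
    ((hq'.heckeOperator hj hM).integrable μ) fun x => ?_
  beta_reduce
  rw [← heckeOperator_heckeOperator hj.ne_bot hM hq hc]
  exact abs_heckeOperator_sub_const_le hj.le hM _ c x

lemma tendsto_integral_abs_heckeOperator_sub (hj0 : 0 < j) (hj : j < n)
    (hf : RightUniform SL(n, ℝ) f) :
    Tendsto (fun N => ∫ x, |heckeOperator j N f x - ∫ y, f y ∂μ| ∂μ) atTop (𝓝 0) := by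
  refine tendsto_order.2 ⟨fun a ha => .of_forall fun N => ha.trans_le
    (integral_nonneg fun x => abs_nonneg _), fun ε hε => ?_⟩
  have hprimePow := ((tendsto_integral_abs_heckeOperator_sub_atTopPrimePow (μ := μ) hj0 hj
    hf).eventually_lt_const hε).and eventually_isPrimePow
  filter_upwards [eventually_exists_coprime_mul_eq hprimePow]
  rintro _ ⟨M, q, hM, hc, ⟨hlt, hq⟩, rfl⟩
  exact (integral_abs_heckeOperator_mul_sub_le hj0 hj hM hq.ne_zero hc hf _).trans_lt hlt

theorem tendsto_heckeOperator (hj0 : 0 < j) (hj : j < n) (hf : RightUniform SL(n, ℝ) f)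
    (x : XSpace n) : Tendsto (fun N => heckeOperator j N f x) atTop (𝓝 (∫ y, f y ∂μ)) := by
  refine tendsto_of_tendsto_integral_abs_sub_of_equicontinuousAt
    (equicontinuous_heckeOperator hj hf x) ?_ (tendsto_integral_abs_heckeOperator_sub hj0 hj hf)
  filter_upwards [eventually_ne_atTop 0] with N hN
  exact hf.integrable_abs_heckeOperator_sub hj hN _

end Convergence

open Filter in
/-- Let `n ≥ 2`, `1 ≤ j ≤ n−1`, and let `μ` be the right-invariant Borel
probability measure on `X = SL_n(ℤ)\SL_n(ℝ)`. For every continuous compactly supported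
`f : X → ℝ`, the Hecke average `(1/#L_{N,j}(n)) Σ_{L ∈ L_{N,j}(n)} f(x_L)` converges to
`∫_X f dμ` as `N → ∞`, where `x_L` is the coset `SL_n(ℤ)·(N^{−j/n}·B)` for any matrix
`B` whose rows form a ℤ-basis of `L` (with `det B = N^j`); the coset being independent
of the choice of `B`, we quantify over any assignment `xL` compatible with every such
`B`. -/
theorem hecke_average_tendsto_integral (n j : ℕ)
    (hn : 2 ≤ n) (hj1 : 1 ≤ j) (hj : j ≤ n - 1)
    (μ : Measure (XSpace n)) (hprob : IsProbabilityMeasure μ)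
    (hinv : ∀ g, Measure.map (rightTranslate n g) μ = μ)
    (f : XSpace n → ℝ) (hf : Continuous f) (hfc : HasCompactSupport f)
    (xL : ℕ → AddSubgroup (Fin n → ℤ) → XSpace n)
    (hxL : ∀ N : ℕ, ∀ L ∈ latticeSet N n j, ∀ B : Matrix (Fin n) (Fin n) ℤ,
      AddSubgroup.closure (Set.range fun i : Fin n => (B i : Fin n → ℤ)) = L →
      B.det = (N : ℤ) ^ j →
      ∀ g : Matrix.SpecialLinearGroup (Fin n) ℝ,
        (g : Matrix (Fin n) (Fin n) ℝ) =
          ((N : ℝ) ^ (-(j : ℝ) / (n : ℝ))) • (B.map (Int.cast : ℤ → ℝ)) →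
        xL N L = (Quotient.mk'' g : XSpace n)) :
    Tendsto (fun N : ℕ =>
      (∑ᶠ L ∈ latticeSet N n j, f (xL N L)) / (Set.ncard (latticeSet N n j) : ℝ))
      atTop (nhds (∫ x, f x ∂μ)) := by
  have hjn : j < n := by omega
  have := smulInvariantMeasure_of_map_rightTranslate hinv
  refine (tendsto_heckeOperator hj1 hjn (.of_hasCompactSupport hf hfc) (XSpace.mk 1)).congr' ?_
  filter_upwards [eventually_ne_atTop 0] with N hN
  have hpoint : ∀ L ∈ latticeFinset n j N, f (XSpace.mk (latticeSL j N L * 1)) = f (xL N L) := by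
    intro L hL
    rw [mem_latticeFinset hN] at hL
    obtain ⟨B, hB, hg⟩ := isRescaledBasis_latticeSL hjn.ne_bot hN hL
    rw [mul_one, hxL N L hL B hB (det_eq_of_coe_eq_smul_map hjn.ne_bot hN hg) _ hg]
    rfl
  rw [heckeOperator_mk hjn.ne_bot hN, Finset.expect_congr rfl hpoint,
    Finset.expect_eq_sum_div_card, ← coe_latticeFinset hN, finsum_mem_coe_finset,
    Set.ncard_coe_finset]
end
end

section
/- Let N ∈ ℕ be square-free, n ≥ 2 and 1 ≤ j ≤ n−1. Then the number of subgroups L of ℤⁿ with ℤⁿ/L ≅ (ℤ/Nℤ)ʲ equals ∏_{p | N} #{V : V is an 𝔽_p-linear subspace of 𝔽_pⁿ of dimension n−j}, the product running over the prime divisors p of N. -/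
/-!
A subgroup `L ≤ A` with `A ⧸ L ≃+ B` is the kernel of a surjection `A →+ B`. For `N` square-free,
`(ℤ/Nℤ)ʲ` is the product of the `𝔽_pʲ` over `p ∣ N`. By the Chinese remainder theorem, a
homomorphism into a product of groups of pairwise coprime exponents is onto as soon as its
components are, and its kernel determines their kernels; hence the count is multiplicative. For a
single prime `p`, the kernel of a homomorphism `ℤⁿ →+ 𝔽_pʲ` contains `pℤⁿ`, so the counting takes
place in `𝔽_pⁿ`, whose subgroups are its `𝔽_p`-subspaces.
-/

open Function

/-- The subgroups `L` of `A` with `A ⧸ L` isomorphic to `B`. For `A = ℤⁿ` and `B = (ℤ/Nℤ)ʲ` this is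
the set `L_{N,j}(n)`. -/
def subgroupsWithQuotient (A B : Type*) [AddCommGroup A] [AddCommGroup B] : Set (AddSubgroup A) :=
  {L | Nonempty (A ⧸ L ≃+ B)}

section Basic

variable {A B C : Type*} [AddCommGroup A] [AddCommGroup B] [AddCommGroup C]

theorem mem_subgroupsWithQuotient_iff {L : AddSubgroup A} :
    L ∈ subgroupsWithQuotient A B ↔ ∃ f : A →+ B, Surjective f ∧ f.ker = L := by
  constructor
  · rintro ⟨e⟩
    refine ⟨e.toAddMonoidHom.comp (QuotientAddGroup.mk' L),
      e.surjective.comp (QuotientAddGroup.mk'_surjective L), ?_⟩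
    ext x
    simp
  · rintro ⟨f, hf, rfl⟩
    exact ⟨QuotientAddGroup.quotientKerEquivOfSurjective f hf⟩

theorem subgroupsWithQuotient_congr (e : B ≃+ C) :
    subgroupsWithQuotient A B = subgroupsWithQuotient A C :=
  Set.ext fun _ ↦ ⟨fun ⟨f⟩ ↦ ⟨f.trans e⟩, fun ⟨f⟩ ↦ ⟨f.trans e.symm⟩⟩

theorem nsmul_mem_ker (m : ℕ) [Module (ZMod m) B] (f : A →+ B) (x : A) : m • x ∈ f.ker := by
  rw [AddMonoidHom.mem_ker, map_nsmul, ZModModule.char_nsmul_eq_zero]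

theorem nsmul_mem_of_mem_subgroupsWithQuotient (m : ℕ) [Module (ZMod m) B] {L : AddSubgroup A}
    (hL : L ∈ subgroupsWithQuotient A B) (x : A) : m • x ∈ L := by
  obtain ⟨f, -, rfl⟩ := mem_subgroupsWithQuotient_iff.1 hL
  exact nsmul_mem_ker m f x

end Basic

section ChineseRemainder

variable {ι A : Type*} [AddCommGroup A] {m : ι → ℕ}

theorem exists_forall_sub_mem_of_pairwise_coprime [Finite ι]
    (hm : Pairwise (Nat.Coprime on m)) {L : ι → AddSubgroup A}
    (hL : ∀ i x, m i • x ∈ L i) (x : ι → A) : ∃ y, ∀ i, y - x i ∈ L i := by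
  classical
  have := Fintype.ofFinite ι
  have hspan : Pairwise (IsCoprime on fun i ↦ Ideal.span {(m i : ℤ)}) := fun i k hik ↦
    (Ideal.isCoprime_span_singleton_iff _ _).2 (hm hik).isCoprime
  choose c hc using fun k ↦ Ideal.exists_forall_sub_mem_ideal hspan (Pi.single k 1)
  refine ⟨∑ k, c k • x k, fun i ↦ ?_⟩
  have hx : x i = ∑ k, (Pi.single k 1 : ι → ℤ) i • x k := by
    simp [Pi.single_apply]
  rw [hx, ← Finset.sum_sub_distrib]
  refine sum_mem fun k _ ↦ ?_
  obtain ⟨d, hd⟩ := Ideal.mem_span_singleton.1 (hc k i)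
  rw [← sub_smul, hd, mul_smul, natCast_zsmul]
  exact hL i _

theorem le_of_iInf_le_iInf_of_pairwise_coprime [Finite ι]
    (hm : Pairwise (Nat.Coprime on m)) {K L : ι → AddSubgroup A}
    (hK : ∀ i x, m i • x ∈ K i) (hL : ∀ i x, m i • x ∈ L i)
    (h : ⨅ i, K i ≤ ⨅ i, L i) (i : ι) : K i ≤ L i := by
  classical
  intro v hv
  obtain ⟨y, hy⟩ := exists_forall_sub_mem_of_pairwise_coprime hm (L := fun k ↦ K k ⊓ L k)
    (fun k x ↦ ⟨hK k x, hL k x⟩) (Pi.single i v)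
  have hyK : y ∈ ⨅ k, K k := by
    refine AddSubgroup.mem_iInf.2 fun k ↦ ?_
    rw [← sub_add_cancel y (Pi.single (M := fun _ ↦ A) i v k)]
    refine add_mem (hy k).1 ?_
    obtain rfl | hk := eq_or_ne k i
    · rwa [Pi.single_eq_same]
    · rw [Pi.single_eq_of_ne hk]
      exact zero_mem _
  have hyv := (hy i).2
  rw [Pi.single_eq_same] at hyv
  simpa using sub_mem (AddSubgroup.mem_iInf.1 (h hyK) i) hyv

variable {B : ι → Type*} [∀ i, AddCommGroup (B i)]

theorem ker_pi_eq_iInf_ker (f : ∀ i, A →+ B i) : (AddMonoidHom.pi f).ker = ⨅ i, (f i).ker := by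
  ext x
  simp [AddSubgroup.mem_iInf, funext_iff]

variable [∀ i, Module (ZMod (m i)) (B i)]

theorem surjective_pi_of_pairwise_coprime [Finite ι] (hm : Pairwise (Nat.Coprime on m))
    {f : ∀ i, A →+ B i} (hf : ∀ i, Surjective (f i)) : Surjective (AddMonoidHom.pi f) := by
  intro b
  choose x hx using fun i ↦ hf i (b i)
  obtain ⟨y, hy⟩ := exists_forall_sub_mem_of_pairwise_coprime hm
    (fun i ↦ nsmul_mem_ker (m i) (f i)) x
  refine ⟨y, funext fun i ↦ ?_⟩
  rw [AddMonoidHom.pi_apply, ← hx i, ← sub_eq_zero, ← map_sub]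
  exact hy i

theorem bijOn_iInf_subgroupsWithQuotient [Finite ι] (hm : Pairwise (Nat.Coprime on m)) :
    Set.BijOn (fun L : ι → AddSubgroup A ↦ ⨅ i, L i)
      (Set.univ.pi fun i ↦ subgroupsWithQuotient A (B i)) (subgroupsWithQuotient A (∀ i, B i)) := by
  refine ⟨fun L hL ↦ ?_, fun K hK L hL h ↦ ?_, fun L hL ↦ ?_⟩
  · choose f hf hker using fun i ↦ mem_subgroupsWithQuotient_iff.1 (hL i trivial)
    refine mem_subgroupsWithQuotient_iff.2
      ⟨AddMonoidHom.pi f, surjective_pi_of_pairwise_coprime hm hf, ?_⟩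
    simp only [ker_pi_eq_iInf_ker, hker]
  · have hmK i := nsmul_mem_of_mem_subgroupsWithQuotient (m i) (hK i trivial)
    have hmL i := nsmul_mem_of_mem_subgroupsWithQuotient (m i) (hL i trivial)
    exact funext fun i ↦ le_antisymm
      (le_of_iInf_le_iInf_of_pairwise_coprime hm hmK hmL h.le i)
      (le_of_iInf_le_iInf_of_pairwise_coprime hm hmL hmK h.ge i)
  · obtain ⟨f, hf, rfl⟩ := mem_subgroupsWithQuotient_iff.1 hL
    refine ⟨fun i ↦ ((Pi.evalAddMonoidHom B i).comp f).ker, fun i _ ↦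
      mem_subgroupsWithQuotient_iff.2 ⟨_, (surjective_eval i).comp hf, rfl⟩, ?_⟩
    exact (ker_pi_eq_iInf_ker _).symm

theorem ncard_subgroupsWithQuotient_pi [Fintype ι] (hm : Pairwise (Nat.Coprime on m)) :
    (subgroupsWithQuotient A (∀ i, B i)).ncard = ∏ i, (subgroupsWithQuotient A (B i)).ncard := by
  rw [← (bijOn_iInf_subgroupsWithQuotient hm).ncard_eq]
  simp only [← Nat.card_coe_set_eq]
  rw [Nat.card_congr (Equiv.Set.univPi _), Nat.card_pi]

end ChineseRemainder

section Reduction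

variable {A A' B : Type*} [AddCommGroup A] [AddCommGroup A'] [AddCommGroup B]

theorem image_comap_subgroupsWithQuotient {r : A →+ A'} (hr : Surjective r)
    (hker : ∀ L ∈ subgroupsWithQuotient A B, r.ker ≤ L) :
    AddSubgroup.comap r '' subgroupsWithQuotient A' B = subgroupsWithQuotient A B := by
  ext L
  constructor
  · rintro ⟨L', hL', rfl⟩
    obtain ⟨f, hf, rfl⟩ := mem_subgroupsWithQuotient_iff.1 hL'
    exact mem_subgroupsWithQuotient_iff.2 ⟨f.comp r, hf.comp hr, (AddMonoidHom.comap_ker f r).symm⟩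
  · intro hL
    have hle := hker L hL
    obtain ⟨f, hf, rfl⟩ := mem_subgroupsWithQuotient_iff.1 hL
    let g : A' →+ B := r.liftOfSurjective hr ⟨f, hle⟩
    have hg : g.comp r = f := r.liftOfRightInverse_comp _ (rightInverse_surjInv hr) ⟨f, hle⟩
    refine ⟨g.ker, mem_subgroupsWithQuotient_iff.2 ⟨g, ?_, rfl⟩, ?_⟩
    · exact Surjective.of_comp (g := r) (by rwa [← AddMonoidHom.coe_comp, hg])
    · rw [AddMonoidHom.comap_ker, hg]

theorem ncard_subgroupsWithQuotient_pi_int (κ : Type*) (m : ℕ) [Module (ZMod m) B] :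
    (subgroupsWithQuotient (κ → ℤ) B).ncard = (subgroupsWithQuotient (κ → ZMod m) B).ncard := by
  let r : (κ → ℤ) →+ (κ → ZMod m) := (Int.castAddHom (ZMod m)).compLeft κ
  have hr : Surjective r := ZMod.intCast_surjective.comp_left
  have hker : ∀ L ∈ subgroupsWithQuotient (κ → ℤ) B, r.ker ≤ L := by
    intro L hL x hx
    have hdvd k : (m : ℤ) ∣ x k := (ZMod.intCast_zmod_eq_zero_iff_dvd _ _).1 (congrFun hx k)
    choose y hy using hdvd
    have hxy : x = m • y := funext fun k ↦ by simp [hy]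
    exact hxy ▸ nsmul_mem_of_mem_subgroupsWithQuotient m hL y
  rw [← image_comap_subgroupsWithQuotient hr hker,
    Set.ncard_image_of_injective _ (AddSubgroup.comap_injective hr)]

end Reduction

section PrimeField

open Module

variable {p : ℕ} [Fact p.Prime] {E B : Type*} [AddCommGroup E] [AddCommGroup B]
  [Module (ZMod p) E] [Module (ZMod p) B] [FiniteDimensional (ZMod p) E]
  [FiniteDimensional (ZMod p) B]

theorem toAddSubgroup_mem_subgroupsWithQuotient_iff {V : Submodule (ZMod p) E} :
    V.toAddSubgroup ∈ subgroupsWithQuotient E B ↔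
      finrank (ZMod p) V + finrank (ZMod p) B = finrank (ZMod p) E := by
  constructor
  · intro hV
    obtain ⟨f, hf, hker⟩ := mem_subgroupsWithQuotient_iff.1 hV
    have hkerV : (f.toZModLinearMap p).ker = V := Submodule.toAddSubgroup_injective hker
    have hrank := (f.toZModLinearMap p).finrank_range_add_finrank_ker
    rwa [LinearMap.range_eq_top.2 hf, finrank_top, hkerV, add_comm] at hrank
  · intro hV
    have hquot : finrank (ZMod p) (E ⧸ V) = finrank (ZMod p) B := by
      have := V.finrank_quotient_add_finrank
      omega
    exact ⟨(LinearEquiv.ofFinrankEq _ _ hquot).toAddEquiv⟩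

theorem ncard_subgroupsWithQuotient_eq_ncard_submodule
    (hEB : finrank (ZMod p) B ≤ finrank (ZMod p) E) :
    (subgroupsWithQuotient E B).ncard =
      {V : Submodule (ZMod p) E |
        finrank (ZMod p) V = finrank (ZMod p) E - finrank (ZMod p) B}.ncard := by
  rw [← Set.ncard_image_of_injective _ (AddSubgroup.toZModSubmodule p (M := E)).injective]
  congr 1
  ext V
  rw [OrderIso.image_eq_preimage_symm, Set.mem_preimage, AddSubgroup.toZModSubmodule_symm,
    toAddSubgroup_mem_subgroupsWithQuotient_iff, Set.mem_ofPred_eq]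
  omega

end PrimeField

theorem pairwise_coprime_primeFactors (N : ℕ) :
    Pairwise (Nat.Coprime on fun p : N.primeFactors ↦ (p : ℕ)) := fun p q hpq ↦
  (Nat.coprime_primes (Nat.prime_of_mem_primeFactors p.2) (Nat.prime_of_mem_primeFactors q.2)).2
    (Subtype.coe_ne_coe.2 hpq)

/-- The Chinese remainder isomorphism for square-free `N`, applied in each of the coordinates
indexed by `κ`. -/
noncomputable def piZModAddEquivOfSquarefree {N : ℕ} (hN : Squarefree N) (κ : Type*) :
    (κ → ZMod N) ≃+ (∀ p : N.primeFactors, κ → ZMod p) :=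
  have hprod : N = ∏ p : N.primeFactors, (p : ℕ) := by
    rw [Finset.prod_coe_sort N.primeFactors fun p ↦ p, Nat.prod_primeFactors_of_squarefree hN]
  let e : ZMod N ≃+* ∀ p : N.primeFactors, ZMod p :=
    (ZMod.ringEquivCongr hprod).trans (ZMod.prodEquivPi _ (pairwise_coprime_primeFactors N))
  (AddEquiv.piCongrRight fun _ : κ ↦ e.toAddEquiv).trans
    { Equiv.piComm _ with map_add' := fun _ _ ↦ rfl }

/-- For square-free `N`, the number of subgroups `L ≤ ℤⁿ` with
`ℤⁿ/L ≅ (ℤ/Nℤ)ʲ` equals the product over the primes `p ∣ N` of the number of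
`(n−j)`-dimensional subspaces of `𝔽_pⁿ`. -/
theorem card_latticeSet_squarefree (N n j : ℕ) (hN : Squarefree N)
    (hn : 2 ≤ n) (hj1 : 1 ≤ j) (hj : j ≤ n - 1) :
    Set.ncard {L : AddSubgroup (Fin n → ℤ) |
        Nonempty (((Fin n → ℤ) ⧸ L) ≃+ (Fin j → ZMod N))} =
      ∏ p ∈ N.primeFactors,
        Set.ncard {V : Submodule (ZMod p) (Fin n → ZMod p) |
          Module.finrank (ZMod p) V = n - j} := by
  have hprime (p : N.primeFactors) :
      (subgroupsWithQuotient (Fin n → ℤ) (Fin j → ZMod p)).ncard =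
        {V : Submodule (ZMod p) (Fin n → ZMod p) | Module.finrank (ZMod p) V = n - j}.ncard := by
    have : Fact (p : ℕ).Prime := ⟨Nat.prime_of_mem_primeFactors p.2⟩
    have hdim : Module.finrank (ZMod p) (Fin j → ZMod p) ≤
        Module.finrank (ZMod p) (Fin n → ZMod p) := by
      simpa only [Module.finrank_fin_fun] using hj.trans (Nat.sub_le n 1)
    rw [ncard_subgroupsWithQuotient_pi_int (Fin n) p,
      ncard_subgroupsWithQuotient_eq_ncard_submodule hdim]
    simp only [Module.finrank_fin_fun]
  calc (subgroupsWithQuotient (Fin n → ℤ) (Fin j → ZMod N)).ncard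
    _ = (subgroupsWithQuotient (Fin n → ℤ) (∀ p : N.primeFactors, Fin j → ZMod p)).ncard := by
        rw [subgroupsWithQuotient_congr (piZModAddEquivOfSquarefree hN (Fin j))]
    _ = ∏ p : N.primeFactors, (subgroupsWithQuotient (Fin n → ℤ) (Fin j → ZMod p)).ncard :=
        ncard_subgroupsWithQuotient_pi (pairwise_coprime_primeFactors N)
    _ = ∏ p : N.primeFactors, Set.ncard {V : Submodule (ZMod p) (Fin n → ZMod p) |
          Module.finrank (ZMod p) V = n - j} := Finset.prod_congr rfl fun p _ ↦ hprime p
    _ = _ := Finset.prod_coe_sort N.primeFactors fun p ↦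
        Set.ncard {V : Submodule (ZMod p) (Fin n → ZMod p) | Module.finrank (ZMod p) V = n - j}
end
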